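/- arXiv:2401.17720 — 7 statements merged into one kernel-verified Lean document; each statement's English description precedes it below -/
import Mathlib

section
/- Define a(0) = 0 and a(n) = (2n−1)(17n² − 17n + 5) for n ≥ 1, and b(0) = 6 and b(n) = −n⁶ for n ≥ 1. Then the convergents p(n)/q(n) of the continued fraction with partial quotients (a(n), b(n)) converge to ζ(3) as n → ∞. (This is Apéry's famous continued fraction for ζ(3).) -/
open Filter Topology

/-!
Apéry's proof. With the weights `w n k = C(n,k) C(n+k,k)` and the rational approximations
`c n k = ∑_{m ≤ n} 1/m³ + ∑_{m ≤ k} (-1)^(m-1) / (2 m³ w n m)` of `ζ(3)`, the sums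
`∑ₖ (w n k)²` and `∑ₖ (w n k)² c n k` both satisfy
`(n+2)³ u(n+2) - (2n+3)(17n²+51n+39) u(n+1) + (n+1)³ u(n) = 0`, as creative telescoping with
Zagier's certificates shows. Multiplication by `n!³` turns this into the recurrence of the continued
fraction, so `p n / q n` is the average of the `c n k`, `k ≤ n`, with weights `(w n k)²`; these
`c n k` tend to `ζ(3)` uniformly in `k`.
-/

namespace Apery

open Finset

section Recurrence

variable {R : Type*} [CommRing R]

/-- The second-order difference operator annihilating Apéry's two sequences, indexed by the
smallest of the three arguments involved. -/
def recurrenceOperator (u : ℕ → R) (n : ℕ) : R :=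
  (n + 2) ^ 3 * u (n + 2) - (2 * n + 3) * (17 * n ^ 2 + 51 * n + 39) * u (n + 1)
    + (n + 1) ^ 3 * u n

lemma recurrenceOperator_sum (s : Finset ℕ) (F : ℕ → ℕ → R) (n : ℕ) :
    recurrenceOperator (fun m ↦ ∑ k ∈ s, F m k) n = ∑ k ∈ s, recurrenceOperator (F · k) n := by
  simp only [recurrenceOperator, mul_sum, sum_add_distrib, sum_sub_distrib]

lemma sum_range_succ_eq_of_eq_sub {M : Type*} [AddCommGroup M] {f g : ℕ → M}
    (h_zero : f 0 = g 0) (h_succ : ∀ k, f (k + 1) = g (k + 1) - g k) (n : ℕ) :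
    ∑ k ∈ range (n + 1), f k = g n := by
  rw [sum_range_succ', sum_congr rfl fun k _ ↦ h_succ k, sum_range_sub, h_zero, sub_add_cancel]

lemma recurrenceOperator_sum_range_eq_zero {F G : ℕ → ℕ → R} (hF : ∀ n k, n < k → F n k = 0)
    (hG : ∀ n, G n (n + 2) = 0) (h_zero : ∀ n, recurrenceOperator (F · 0) n = G n 0)
    (h_succ : ∀ n k, recurrenceOperator (F · (k + 1)) n = G n (k + 1) - G n k) (n : ℕ) :
    recurrenceOperator (fun m ↦ ∑ k ∈ range (m + 1), F m k) n = 0 := by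
  have extend_range : ∀ m ≤ n + 2, ∑ k ∈ range (m + 1), F m k = ∑ k ∈ range (n + 3), F m k :=
    fun m hm ↦ sum_subset (range_mono (by omega)) fun k _ hk ↦ hF m k (by simpa using hk)
  calc recurrenceOperator (fun m ↦ ∑ k ∈ range (m + 1), F m k) n
      = recurrenceOperator (fun m ↦ ∑ k ∈ range (n + 3), F m k) n := by
        simp only [recurrenceOperator, extend_range n (by omega), extend_range (n + 1) (by omega),
          extend_range (n + 2) le_rfl]
    _ = ∑ k ∈ range (n + 3), recurrenceOperator (F · k) n := recurrenceOperator_sum _ F n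
    _ = G n (n + 2) := sum_range_succ_eq_of_eq_sub (h_zero n) (h_succ n) (n + 2)
    _ = 0 := hG n

lemma eq_factorial_cube_mul_of_recurrenceOperator_eq_zero {u x : ℕ → R}
    (hu : ∀ n, recurrenceOperator u n = 0)
    (hx : ∀ n : ℕ, x (n + 2) =
      (2 * n + 3) * (17 * n ^ 2 + 51 * n + 39) * x (n + 1) - (n + 1) ^ 6 * x n)
    (h_zero : x 0 = u 0) (h_one : x 1 = u 1) (n : ℕ) : x n = n.factorial ^ 3 * u n := by
  induction n using Nat.twoStepInduction with
  | zero => simp [h_zero]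
  | one => simp [h_one]
  | more n ih₀ ih₁ =>
    rw [hx, ih₀, ih₁, Nat.factorial_succ (n + 1), Nat.factorial_succ n]
    have hun := hu n
    unfold recurrenceOperator at hun
    push_cast
    linear_combination (-((n : R) + 1) ^ 3 * (n.factorial : R) ^ 3) * hun

end Recurrence

/-- The weight `C(n,k) C(n+k,k)`, whose square is the summand of the Apéry numbers. -/
def weight (n k : ℕ) : ℕ := n.choose k * (n + k).choose k

@[simp]
lemma weight_zero_right (n : ℕ) : weight n 0 = 1 := by simp [weight]

lemma weight_eq_zero_of_lt {n k : ℕ} (h : n < k) : weight n k = 0 := by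
  simp [weight, Nat.choose_eq_zero_of_lt h]

lemma weight_pos {n k : ℕ} (h : k ≤ n) : 0 < weight n k :=
  Nat.mul_pos (Nat.choose_pos h) (Nat.choose_pos (Nat.le_add_left k n))

lemma lt_weight {n k : ℕ} (hk : 0 < k) (hkn : k ≤ n) : n < weight n k :=
  calc n < (n + 1).choose n := by simp
    _ ≤ (n + k).choose n := Nat.choose_le_choose n (by omega)
    _ = (n + k).choose k := Nat.choose_symm_add
    _ ≤ weight n k := Nat.le_mul_of_pos_left _ (Nat.choose_pos hkn)

section WeightRatios

lemma cast_choose_succ_right_mul {R : Type*} [Ring R] (n k : ℕ) :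
    (n.choose (k + 1) : R) * (k + 1) = n.choose k * (n - k) := by
  rcases le_or_gt k n with h | h
  · rw [← Nat.cast_sub h]
    exact_mod_cast congrArg (Nat.cast (R := R)) (Nat.choose_succ_right_eq n k)
  · simp [Nat.choose_eq_zero_of_lt h, Nat.choose_eq_zero_of_lt (h.trans k.lt_succ_self)]

lemma succ_mul_choose_succ_add (n k : ℕ) :
    (n + 1) * (n + 1 + k).choose k = (n + k + 1) * (n + k).choose k := by
  rw [← Nat.choose_symm_add, ← Nat.choose_symm_add, mul_comm, add_right_comm,
    Nat.add_one_mul_choose_eq]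

lemma weight_succ_succ_mul (n k : ℕ) :
    weight (n + 1) (k + 1) * (k + 1) ^ 2 = weight n k * ((n + k + 1) * (n + k + 2)) :=
  calc weight (n + 1) (k + 1) * (k + 1) ^ 2
      = ((n + 1).choose (k + 1) * (k + 1)) * ((n + 1 + k + 1).choose (k + 1) * (k + 1)) := by
        rw [weight, ← add_assoc]; ring
    _ = ((n + 1) * n.choose k) * ((n + 1 + k + 1) * (n + 1 + k).choose k) := by
        rw [← Nat.add_one_mul_choose_eq, ← Nat.add_one_mul_choose_eq]
    _ = n.choose k * (n + k + 2) * ((n + 1) * (n + 1 + k).choose k) := by ring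
    _ = weight n k * ((n + k + 1) * (n + k + 2)) := by
        rw [succ_mul_choose_succ_add, weight]; ring

variable {K : Type*} [Field K] [CharZero K]

/- The usual relation between `weight n k` and `weight (n + 1) k` degenerates to `0 = 0` at
`k = n + 1`, whereas this diagonal one determines the left-hand side for all `n` and `k`. -/
lemma weight_succ_succ (n k : ℕ) :
    (weight (n + 1) (k + 1) : K) =
      weight n k * ((n + k + 1) * (n + k + 2)) / (k + 1) ^ 2 := by
  rw [eq_div_iff (pow_ne_zero 2 (Nat.cast_add_one_ne_zero k))]
  exact_mod_cast weight_succ_succ_mul n k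

lemma weight_succ_right (n k : ℕ) :
    (weight n (k + 1) : K) = weight n k * ((n - k) * (n + k + 1)) / (k + 1) ^ 2 := by
  have h₁ := cast_choose_succ_right_mul (R := K) n k
  have h₂ : ((n + k + 1).choose (k + 1) : K) * (k + 1) = (n + k + 1) * (n + k).choose k := by
    exact_mod_cast (Nat.add_one_mul_choose_eq (n + k) k).symm
  rw [eq_div_iff (pow_ne_zero 2 (Nat.cast_add_one_ne_zero k)), weight, weight, ← add_assoc]
  push_cast
  linear_combination ((n + k + 1).choose (k + 1) : K) * (k + 1) * h₁
    + (n.choose k : K) * (n - k) * h₂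

lemma weight_eq_weight_succ_left (n k : ℕ) :
    (weight n k : K) = weight (n + 1) k * (n + 1 - k) / (n + 1 + k) := by
  have h_add : (n + 1 + k : K) ≠ 0 := by exact_mod_cast (by omega : n + 1 + k ≠ 0)
  rw [eq_div_iff h_add]
  cases k with
  | zero => simp
  | succ k =>
    rw [weight_succ_succ, weight_succ_right]
    push_cast
    ring

end WeightRatios

section Denominator

/-- The Apéry numbers `∑ₖ C(n,k)² C(n+k,k)²`; up to the factor `n!³` they are the denominators of
the convergents. -/
def denominator (n : ℕ) : ℕ := ∑ k ∈ range (n + 1), weight n k ^ 2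

lemma denominator_zero : denominator 0 = 1 := rfl

lemma denominator_one : denominator 1 = 5 := rfl

lemma denominator_pos (n : ℕ) : 0 < denominator n :=
  sum_pos (fun _ hk ↦ pow_pos (weight_pos (mem_range_succ_iff.mp hk)) 2) nonempty_range_add_one

variable {K : Type*} [Field K]

variable (K) in
/-- Zagier's certificate for the Apéry numbers: its differences in `k` are the images of
`(weight n k)²` under `recurrenceOperator`. -/
def denominatorCertificate (n k : ℕ) : K :=
  4 * (2 * n + 3) * (k * (2 * k + 1) - (2 * n + 3) ^ 2) * weight (n + 1) k ^ 2

lemma recurrenceOperator_weight_sq_zero (n : ℕ) :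
    recurrenceOperator (fun m ↦ (weight m 0 : K) ^ 2) n = denominatorCertificate K n 0 := by
  simp only [recurrenceOperator, denominatorCertificate, weight_zero_right]
  push_cast
  ring

variable [CharZero K]

lemma recurrenceOperator_weight_sq_succ (n k : ℕ) :
    recurrenceOperator (fun m ↦ (weight m (k + 1) : K) ^ 2) n =
      denominatorCertificate K n (k + 1) - denominatorCertificate K n k := by
  have hk : (k + 1 : K) ≠ 0 := Nat.cast_add_one_ne_zero k
  have hnk : (n + 1 + (k + 1) : K) ≠ 0 := by exact_mod_cast (by omega : n + 1 + (k + 1) ≠ 0)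
  simp only [recurrenceOperator, denominatorCertificate, weight_eq_weight_succ_left n (k + 1),
    weight_succ_right (n + 1) k, weight_succ_succ (n + 1) k]
  push_cast
  field_simp
  ring

lemma recurrenceOperator_denominator (n : ℕ) :
    recurrenceOperator (fun m ↦ (denominator m : K)) n = 0 := by
  simpa [denominator] using recurrenceOperator_sum_range_eq_zero
    (fun n k h ↦ by simp [weight_eq_zero_of_lt h])
    (fun n ↦ by simp [denominatorCertificate, weight_eq_zero_of_lt])
    recurrenceOperator_weight_sq_zero recurrenceOperator_weight_sq_succ n

end Denominator

section Numerator

/-- Apéry's rational approximation `∑_{m ≤ n} 1/m³ + ∑_{m ≤ k} (-1)^(m-1) / (2 m³ w n m)` of `ζ(3)`,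
where `w = weight`; both summation indices are shifted by one. It is meaningful for `k ≤ n` only:
the terms with `m > n` have denominator zero and contribute nothing. -/
noncomputable def zetaApprox (n k : ℕ) : ℝ :=
  ∑ m ∈ range n, 1 / ((m : ℝ) + 1) ^ 3 +
    ∑ m ∈ range k, (-1 : ℝ) ^ m / (2 * ((m : ℝ) + 1) ^ 3 * weight n (m + 1))

lemma zetaApprox_succ_right (n k : ℕ) :
    zetaApprox n (k + 1) =
      zetaApprox n k + (-1) ^ k / (2 * ((k : ℝ) + 1) ^ 3 * weight n (k + 1)) := by
  rw [zetaApprox, zetaApprox, sum_range_succ _ k, add_assoc]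

lemma zetaApprox_succ_left {n k : ℕ} (h : k ≤ n) :
    zetaApprox (n + 1) k =
      zetaApprox n k + (-1) ^ k / (((n : ℝ) + 1) ^ 2 * (n + 1 + k) * weight n k) := by
  induction k with
  | zero =>
    simp only [zetaApprox, sum_range_succ _ n, range_zero, sum_empty, weight_zero_right]
    push_cast
    field_simp
    ring
  | succ k ih =>
    have hw : (weight n k : ℝ) ≠ 0 := by exact_mod_cast (weight_pos (by omega : k ≤ n)).ne'
    have hnk : (n : ℝ) - k ≠ 0 := sub_ne_zero.mpr (by exact_mod_cast (by omega : n ≠ k))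
    rw [zetaApprox_succ_right, zetaApprox_succ_right, ih (by omega), weight_succ_succ,
      weight_succ_right, pow_succ]
    push_cast
    field_simp
    ring

/-- The summand of Apéry's second sequence. -/
noncomputable def weightedApprox (n k : ℕ) : ℝ := (weight n k : ℝ) ^ 2 * zetaApprox n k

lemma weightedApprox_zero_right (n : ℕ) : weightedApprox n 0 = zetaApprox n 0 := by
  simp [weightedApprox]

lemma weightedApprox_eq_zero_of_lt {n k : ℕ} (h : n < k) : weightedApprox n k = 0 := by
  simp [weightedApprox, weight_eq_zero_of_lt h]

/- The factor `(weight n k)²` makes this and the next two rules valid without the restriction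
`k ≤ n`, the spurious divisions by zero being multiplied by zero. -/
lemma weightedApprox_succ_right (n k : ℕ) :
    weightedApprox n (k + 1) =
      ((n - k) * (n + k + 1) / (k + 1) ^ 2) ^ 2 * weightedApprox n k
        + (-1) ^ k * weight n k * (n - k) * (n + k + 1) / (2 * (k + 1) ^ 5) := by
  have h_expand : weightedApprox n (k + 1) = (weight n (k + 1) : ℝ) ^ 2 * zetaApprox n k
      + (-1) ^ k * weight n (k + 1) / (2 * ((k : ℝ) + 1) ^ 3) := by
    rw [weightedApprox, zetaApprox_succ_right]
    rcases eq_or_ne (weight n (k + 1) : ℝ) 0 with hw | hw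
    · simp [hw]
    · field_simp
  rw [h_expand, weight_succ_right, weightedApprox]
  field_simp

lemma weightedApprox_eq_weightedApprox_succ_left (n k : ℕ) :
    weightedApprox n k =
      ((n + 1 - k) / (n + 1 + k)) ^ 2 * weightedApprox (n + 1) k
        - (-1) ^ k * weight (n + 1) k * (n + 1 - k) / ((n + 1) ^ 2 * (n + 1 + k) ^ 2) := by
  have h_expand : weightedApprox n k = (weight n k : ℝ) ^ 2 * zetaApprox (n + 1) k
      - (-1) ^ k * weight n k / (((n : ℝ) + 1) ^ 2 * (n + 1 + k)) := by
    rcases le_or_gt k n with h | h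
    · have hw : (weight n k : ℝ) ≠ 0 := by exact_mod_cast (weight_pos h).ne'
      rw [weightedApprox, zetaApprox_succ_left h]
      field_simp
      ring
    · simp [weightedApprox, weight_eq_zero_of_lt h]
  rw [h_expand, weight_eq_weight_succ_left, weightedApprox]
  field_simp

lemma weightedApprox_succ_succ (n k : ℕ) :
    weightedApprox (n + 1) (k + 1) =
      ((n + k + 1) * (n + k + 2) / (k + 1) ^ 2) ^ 2 * weightedApprox n k
        + (-1) ^ k * weight n k * (n + k + 1) * (n + k + 2)
          * (2 * (k + 1) * (n + k + 2) + (n + 1) ^ 2) / (2 * (n + 1) ^ 2 * (k + 1) ^ 5) := by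
  rw [weightedApprox_succ_right, weightedApprox_eq_weightedApprox_succ_left n,
    weight_eq_weight_succ_left n]
  push_cast
  field_simp
  ring

/-- The numerators of Apéry's approximations to `ζ(3)`; up to the factor `n!³` they are the
numerators of the convergents. -/
noncomputable def numerator (n : ℕ) : ℝ := ∑ k ∈ range (n + 1), weightedApprox n k

lemma numerator_zero : numerator 0 = 0 := by simp [numerator, weightedApprox, zetaApprox]

lemma numerator_one : numerator 1 = 6 := by
  norm_num [numerator, weightedApprox, zetaApprox, sum_range_succ, weight]

/-- Zagier's certificate for `numerator`: its differences in `k` are the images of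
`weightedApprox n k` under `recurrenceOperator`. -/
noncomputable def numeratorCertificate (n k : ℕ) : ℝ :=
  4 * (2 * n + 3) * (k * (2 * k + 1) - (2 * n + 3) ^ 2) * weightedApprox (n + 1) k
    - 5 * (2 * n + 3) * (-1) ^ k * k / ((n + 1) * (n + 2)) * weight (n + 1) k

lemma recurrenceOperator_weightedApprox_zero (n : ℕ) :
    recurrenceOperator (weightedApprox · 0) n = numeratorCertificate n 0 := by
  simp only [recurrenceOperator, numeratorCertificate, weightedApprox_zero_right,
    zetaApprox_succ_left (Nat.zero_le _), weight_zero_right]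
  push_cast
  field_simp
  ring

lemma recurrenceOperator_weightedApprox_succ (n k : ℕ) :
    recurrenceOperator (weightedApprox · (k + 1)) n =
      numeratorCertificate n (k + 1) - numeratorCertificate n k := by
  simp only [recurrenceOperator, numeratorCertificate,
    weightedApprox_eq_weightedApprox_succ_left n (k + 1), weightedApprox_succ_right (n + 1) k,
    weightedApprox_succ_succ (n + 1) k, weight_succ_right (n + 1) k, pow_succ (-1 : ℝ)]
  push_cast
  field_simp
  ring

lemma recurrenceOperator_numerator (n : ℕ) : recurrenceOperator numerator n = 0 :=
  recurrenceOperator_sum_range_eq_zero (fun _ _ h ↦ weightedApprox_eq_zero_of_lt h)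
    (fun n ↦ by
      simp [numeratorCertificate, weightedApprox_eq_zero_of_lt, weight_eq_zero_of_lt])
    recurrenceOperator_weightedApprox_zero recurrenceOperator_weightedApprox_succ n

end Numerator

section Convergence

lemma summable_one_div_add_one_cube : Summable fun n : ℕ ↦ 1 / ((n : ℝ) + 1) ^ 3 := by
  simpa using (summable_nat_add_iff 1).2 (Real.summable_one_div_nat_pow.2 (by norm_num : 1 < 3))

lemma abs_zetaApprox_sub_le {n k : ℕ} (h : k ≤ n) :
    |zetaApprox n k - ∑ m ∈ range n, 1 / ((m : ℝ) + 1) ^ 3| ≤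
      (∑' m : ℕ, 1 / ((m : ℝ) + 1) ^ 3) * (1 / ((n : ℝ) + 1)) := by
  rw [zetaApprox, add_sub_cancel_left]
  calc |∑ m ∈ range k, (-1 : ℝ) ^ m / (2 * ((m : ℝ) + 1) ^ 3 * weight n (m + 1))|
      ≤ ∑ m ∈ range k, |(-1 : ℝ) ^ m / (2 * ((m : ℝ) + 1) ^ 3 * weight n (m + 1))| :=
        abs_sum_le_sum_abs _ _
    _ ≤ ∑ m ∈ range k, 1 / ((m : ℝ) + 1) ^ 3 * (1 / ((n : ℝ) + 1)) := by
        refine sum_le_sum fun m hm ↦ ?_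
        have hw : (n : ℝ) + 1 ≤ weight n (m + 1) := by
          exact_mod_cast lt_weight m.succ_pos ((mem_range.mp hm).trans_le h)
        rw [abs_div, abs_neg_one_pow, abs_of_nonneg (by positivity), div_mul_div_comm, one_mul]
        gcongr
        exact le_mul_of_one_le_left (by positivity) one_le_two
    _ = (∑ m ∈ range k, 1 / ((m : ℝ) + 1) ^ 3) * (1 / ((n : ℝ) + 1)) := (sum_mul ..).symm
    _ ≤ (∑' m : ℕ, 1 / ((m : ℝ) + 1) ^ 3) * (1 / ((n : ℝ) + 1)) := by
        gcongr
        exact summable_one_div_add_one_cube.sum_le_tsum _ fun m _ ↦ by positivity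

lemma numerator_div_denominator_eq_centerMass (n : ℕ) :
    numerator n / denominator n =
      (range (n + 1)).centerMass (fun k ↦ (weight n k : ℝ) ^ 2) (zetaApprox n) := by
  simp [centerMass, numerator, weightedApprox, denominator, div_eq_inv_mul]

lemma abs_numerator_div_denominator_sub_le (n : ℕ) :
    |numerator n / denominator n - ∑ m ∈ range n, 1 / ((m : ℝ) + 1) ^ 3| ≤
      (∑' m : ℕ, 1 / ((m : ℝ) + 1) ^ 3) * (1 / ((n : ℝ) + 1)) := by
  rw [numerator_div_denominator_eq_centerMass, ← Real.dist_eq, ← Metric.mem_closedBall]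
  refine (convex_closedBall _ _).centerMass_mem (fun k _ ↦ by positivity) ?_ fun k hk ↦ ?_
  · exact_mod_cast denominator_pos n
  · exact abs_zetaApprox_sub_le (mem_range_succ_iff.mp hk)

lemma tendsto_numerator_div_denominator :
    Tendsto (fun n ↦ numerator n / denominator n) atTop
      (𝓝 (∑' n : ℕ, 1 / ((n : ℝ) + 1) ^ 3)) := by
  have h_bound := (tendsto_one_div_add_atTop_nhds_zero_nat (𝕜 := ℝ)).const_mul
    (∑' n : ℕ, 1 / ((n : ℝ) + 1) ^ 3)
  rw [mul_zero] at h_bound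
  have h_sub := squeeze_zero_norm (fun n ↦ (Real.norm_eq_abs _).trans_le
    (abs_numerator_div_denominator_sub_le n)) h_bound
  simpa using h_sub.add summable_one_div_add_one_cube.hasSum.tendsto_sum_nat

end Convergence

end Apery

theorem stmt_8 
    (a b p q : ℕ → ℝ)
    (ha0 : a 0 = 0)
    (ha : ∀ n : ℕ, 1 ≤ n → a n = (2 * (n : ℝ) - 1) * (17 * (n : ℝ) ^ 2 - 17 * (n : ℝ) + 5))
    (hb0 : b 0 = 6)
    (hb : ∀ n : ℕ, 1 ≤ n → b n = -(n : ℝ) ^ 6)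
    (hp0 : p 0 = a 0) (hq0 : q 0 = 1)
    (hp1 : p 1 = a 0 * a 1 + b 0) (hq1 : q 1 = a 1)
    (hp : ∀ n : ℕ, p (n + 2) = a (n + 2) * p (n + 1) + b (n + 1) * p n)
    (hq : ∀ n : ℕ, q (n + 2) = a (n + 2) * q (n + 1) + b (n + 1) * q n) :
    Tendsto (fun n => p n / q n) atTop (𝓝 (∑' n : ℕ, 1 / ((n : ℝ) + 1) ^ 3)) := by
  have ha_add_two (n : ℕ) : a (n + 2) = (2 * n + 3) * (17 * n ^ 2 + 51 * n + 39) := by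
    rw [ha (n + 2) (by omega)]; push_cast; ring
  have hb_succ (n : ℕ) : b (n + 1) = -(n + 1) ^ 6 := by
    rw [hb (n + 1) n.succ_pos]; push_cast; rfl
  have hp_eq (n : ℕ) : p n = n.factorial ^ 3 * Apery.numerator n := by
    refine Apery.eq_factorial_cube_mul_of_recurrenceOperator_eq_zero
      Apery.recurrenceOperator_numerator (fun n ↦ ?_) ?_ ?_ n
    · rw [hp, ha_add_two, hb_succ]; ring
    · simp [hp0, ha0, Apery.numerator_zero]
    · simp [hp1, ha0, hb0, Apery.numerator_one]
  have hq_eq (n : ℕ) : q n = n.factorial ^ 3 * Apery.denominator n := by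
    refine Apery.eq_factorial_cube_mul_of_recurrenceOperator_eq_zero
      Apery.recurrenceOperator_denominator (fun n ↦ ?_) ?_ ?_ n
    · rw [hq, ha_add_two, hb_succ]; ring
    · simp [hq0, Apery.denominator_zero]
    · rw [hq1, ha 1 le_rfl, Apery.denominator_one]; norm_num
  refine Apery.tendsto_numerator_div_denominator.congr fun n ↦ ?_
  rw [hp_eq, hq_eq, mul_div_mul_left _ _ (by positivity)]
end

section
/- Let z be a real number with z ≥ 0. Define a(0) = 0 and a(n) = n³ + (n−1)³ + 2z(z+1)(2n−1) for n ≥ 1, and b(0) = 1 and b(n) = −n⁶ for n ≥ 1. Then the convergents p(n)/q(n) of the continued fraction with partial quotients (a(n), b(n)) converge to ∑_{n≥1} 1/(n+z)³ as n → ∞. (This formula is due to Ramanujan; the sum equals the Hurwitz zeta value ζ(3, z+1) = −ψ''(z+1)/2.) -/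
open Filter Topology

/-!
Divided by `n!³`, the numerators `v(z, n)` and denominators `u(z, n)` solve one three-term
recurrence whose coefficients are cubic in `n`. A first-order difference operator carries its
solutions for `z` to solutions for `z + 1`, and together with the Casoratian this gives
`v(z, n) / u(z, n) - v(z+1, n) / u(z+1, n) = 1 / (z+1)³ - 1 / ((z+1)³ u(z, n) u(z+1, n))`.
For `z ≥ -1/2` the last term tends to `0`, because `(n + 1) u(z, n)` grows at least logarithmically
and `u(z+1, n)` at least like `n`. Since `v(z, n) / u(z, n) → 0` as `z → ∞`, summing over
`z, z + 1, z + 2, …` gives the series.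
-/

theorem tendsto_tsum_of_tendsto_sub_succ {ι : Type*} {l : Filter ι} {R : ℕ → ι → ℝ} {g : ℕ → ℝ}
    (hg : Summable g) (nonneg : ∀ j i, 0 ≤ R j i) (sub_le : ∀ j i, R j i - R (j + 1) i ≤ g j)
    (tendsto_sub : ∀ j, Tendsto (fun i => R j i - R (j + 1) i) l (𝓝 (g j)))
    (tendsto_zero : ∀ i, Tendsto (fun j => R j i) atTop (𝓝 0)) :
    Tendsto (R 0) l (𝓝 (∑' j, g j)) := by
  have telescope (N : ℕ) (i : ι) :
      ∑ j ∈ Finset.range N, (R j i - R (j + 1) i) = R 0 i - R N i :=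
    Finset.sum_range_sub' (fun j => R j i) N
  have tendsto_sum := hg.hasSum.tendsto_sum_nat
  refine tendsto_order.2 ⟨fun a ha => ?_, fun b hb => .of_forall fun i => lt_of_le_of_lt ?_ hb⟩
  · obtain ⟨N, hN⟩ := (tendsto_sum.eventually_const_lt ha).exists
    have partial_sum := tendsto_finsetSum (Finset.range N) fun j _ => tendsto_sub j
    filter_upwards [partial_sum.eventually_const_lt hN] with i hi
    linarith [telescope N i, nonneg N i]
  · have bound (N : ℕ) : R 0 i - R N i ≤ ∑ j ∈ Finset.range N, g j :=
      telescope N i ▸ Finset.sum_le_sum fun j _ => sub_le j i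
    simpa only [sub_zero] using
      le_of_tendsto_of_tendsto' ((tendsto_zero i).const_sub (R 0 i)) tendsto_sum bound

theorem summable_one_div_nat_add_one_add_cube (z : ℝ) :
    Summable fun n : ℕ => 1 / ((n : ℝ) + 1 + z) ^ 3 := by
  refine .of_norm (((Real.summable_one_div_nat_add_rpow (1 + z) 3).2 (by norm_num)).congr
    fun n => ?_)
  rw [norm_div, norm_one, norm_pow, Real.norm_eq_abs, add_assoc]
  norm_cast

theorem tendsto_atTop_of_add_div_le {x : ℕ → ℝ} {c : ℝ} (hc : 0 < c)
    (h : ∀ n, x n + c / ((n : ℝ) + 1) ≤ x (n + 1)) : Tendsto x atTop atTop := by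
  have harmonic_le (n : ℕ) : x 0 + c * ∑ k ∈ Finset.range n, 1 / ((k : ℝ) + 1) ≤ x n := by
    induction n with
    | zero => simp
    | succ n ih =>
      rw [Finset.sum_range_succ, mul_add, mul_one_div]
      linarith [h n]
  exact tendsto_atTop_mono harmonic_le <| tendsto_atTop_add_const_left _ _ <|
    Real.tendsto_sum_range_one_div_nat_succ_atTop.const_mul_atTop hc

/-- The three-term recurrence satisfied by the numerators and denominators of the continued
fraction after division by `n!³`. -/
def RamanujanRec (z : ℝ) (y : ℕ → ℝ) : Prop :=
  ∀ n : ℕ, ((n : ℝ) + 2) ^ 3 * y (n + 2) =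
    (((n : ℝ) + 2) ^ 3 + ((n : ℝ) + 1) ^ 3 + 2 * z * (z + 1) * (2 * (n : ℝ) + 3)) * y (n + 1)
      - ((n : ℝ) + 1) ^ 3 * y n

/-- The contiguity operator, carrying solutions of `RamanujanRec z` to solutions of
`RamanujanRec (z + 1)`. -/
def ramanujanShift (z : ℝ) (y : ℕ → ℝ) (n : ℕ) : ℝ :=
  ((n : ℝ) + 1) ^ 3 * y (n + 1)
    - ((n : ℝ) - z) * (((n : ℝ) + 1) ^ 2 - ((n : ℝ) + 1) * (z + 1) + (z + 1) ^ 2) * y n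

namespace RamanujanRec

variable {z : ℝ} {x y : ℕ → ℝ}

theorem ext (hx : RamanujanRec z x) (hy : RamanujanRec z y) (h0 : x 0 = y 0) (h1 : x 1 = y 1) :
    x = y := by
  funext n
  induction n using Nat.twoStepInduction with
  | zero => exact h0
  | one => exact h1
  | more n ih ih' =>
    refine mul_left_cancel₀ (show ((n : ℝ) + 2) ^ 3 ≠ 0 by positivity) ?_
    rw [hx n, hy n, ih, ih']

theorem add (hx : RamanujanRec z x) (hy : RamanujanRec z y) :
    RamanujanRec z fun n => x n + y n := fun n => by
  linear_combination hx n + hy n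

theorem const_mul (hy : RamanujanRec z y) (c : ℝ) : RamanujanRec z fun n => c * y n := fun n => by
  linear_combination c * hy n

theorem casoratian (hx : RamanujanRec z x) (hy : RamanujanRec z y) (n : ℕ) :
    ((n : ℝ) + 1) ^ 3 * (y (n + 1) * x n - y n * x (n + 1)) = y 1 * x 0 - y 0 * x 1 := by
  induction n with
  | zero => simp
  | succ n ih =>
    push_cast
    linear_combination ih + x (n + 1) * hy n - y (n + 1) * hx n

theorem shift (hy : RamanujanRec z y) : RamanujanRec (z + 1) (ramanujanShift z y) := fun n => by
  have rec_succ := hy (n + 1)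
  simp only [ramanujanShift]
  push_cast at rec_succ ⊢
  linear_combination ((n : ℝ) + 2) ^ 3 * rec_succ
    - ((n : ℝ) - z) * (((n : ℝ) + 1) ^ 2 - ((n : ℝ) + 1) * (z + 1) + (z + 1) ^ 2) * hy n

theorem shift_succ (hy : RamanujanRec z y) (n : ℕ) :
    ramanujanShift z y (n + 1) =
      (((n : ℝ) + 1) ^ 3 + 2 * (z + 1) * ((n : ℝ) + 1) ^ 2 + 2 * (z + 1) ^ 2 * ((n : ℝ) + 1)
        + (z + 1) ^ 3) * y (n + 1) - ((n : ℝ) + 1) ^ 3 * y n := by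
  simp only [ramanujanShift]
  push_cast
  linear_combination hy n

theorem shift_one (hy : RamanujanRec z y) :
    ramanujanShift z y 1 = (z + 2) * (z ^ 2 + 3 * z + 3) * y 1 - y 0 := by
  refine (hy.shift_succ 0).trans ?_
  rw [Nat.cast_zero, zero_add]
  ring

theorem div_factorial_cube
    (hx : ∀ n : ℕ, x (n + 2) =
      (((n : ℝ) + 2) ^ 3 + ((n : ℝ) + 1) ^ 3 + 2 * z * (z + 1) * (2 * (n : ℝ) + 3)) * x (n + 1)
        - ((n : ℝ) + 1) ^ 6 * x n) :
    RamanujanRec z fun n => x n / (n.factorial : ℝ) ^ 3 := fun n => by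
  simp only [hx, Nat.factorial_succ]
  push_cast
  field_simp
  ring

end RamanujanRec

/-- The solution of `RamanujanRec z` with initial values `y₀, y₁`. -/
noncomputable def ramanujanSol (z y₀ y₁ : ℝ) : ℕ → ℝ
  | 0 => y₀
  | 1 => y₁
  | n + 2 =>
    ((((n : ℝ) + 2) ^ 3 + ((n : ℝ) + 1) ^ 3 + 2 * z * (z + 1) * (2 * (n : ℝ) + 3))
      * ramanujanSol z y₀ y₁ (n + 1) - ((n : ℝ) + 1) ^ 3 * ramanujanSol z y₀ y₁ n)
      / ((n : ℝ) + 2) ^ 3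

theorem ramanujanRec_ramanujanSol (z y₀ y₁ : ℝ) : RamanujanRec z (ramanujanSol z y₀ y₁) :=
  fun n => by
    rw [ramanujanSol]
    exact mul_div_cancel₀ _ (by positivity)

/-- The numerators `v(z, n)` of the convergents, divided by `n!³`. -/
noncomputable def ramanujanNum (z : ℝ) : ℕ → ℝ := ramanujanSol z 0 1

/-- The denominators `u(z, n)` of the convergents, divided by `n!³`. -/
noncomputable def ramanujanDen (z : ℝ) : ℕ → ℝ := ramanujanSol z 1 (1 + 2 * z * (z + 1))

/-- The increment of `(n + 1) u(z, n)`, rescaled so as to be monotone in `n`. -/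
noncomputable def ramanujanDenGrowth (z : ℝ) (n : ℕ) : ℝ :=
  ((n : ℝ) + 1) ^ 2 / ((n : ℝ) + 2)
    * (((n : ℝ) + 2) * ramanujanDen z (n + 1) - ((n : ℝ) + 1) * ramanujanDen z n)

section Convergents

variable (z : ℝ)

theorem ramanujanRec_num : RamanujanRec z (ramanujanNum z) := ramanujanRec_ramanujanSol z 0 1

theorem ramanujanRec_den : RamanujanRec z (ramanujanDen z) := ramanujanRec_ramanujanSol z 1 _

theorem ramanujanNum_zero : ramanujanNum z 0 = 0 := by rw [ramanujanNum, ramanujanSol]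

theorem ramanujanNum_one : ramanujanNum z 1 = 1 := by rw [ramanujanNum, ramanujanSol]

theorem ramanujanDen_zero : ramanujanDen z 0 = 1 := by rw [ramanujanDen, ramanujanSol]

theorem ramanujanDen_one : ramanujanDen z 1 = 1 + 2 * z * (z + 1) := by
  rw [ramanujanDen, ramanujanSol]

theorem ramanujan_casoratian (n : ℕ) :
    ((n : ℝ) + 1) ^ 3 * (ramanujanNum z (n + 1) * ramanujanDen z n
      - ramanujanNum z n * ramanujanDen z (n + 1)) = 1 := by
  rw [(ramanujanRec_den z).casoratian (ramanujanRec_num z), ramanujanNum_zero, ramanujanNum_one,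
    ramanujanDen_zero]
  ring

theorem ramanujanShift_den :
    ramanujanShift z (ramanujanDen z) = fun n => (z + 1) ^ 3 * ramanujanDen (z + 1) n := by
  refine (ramanujanRec_den z).shift.ext ((ramanujanRec_den (z + 1)).const_mul _) ?_ ?_
  · simp only [ramanujanShift, zero_add, ramanujanDen_zero, ramanujanDen_one]
    push_cast
    ring
  · rw [(ramanujanRec_den z).shift_one]
    simp only [ramanujanDen_zero, ramanujanDen_one]
    ring

theorem ramanujanShift_num :
    ramanujanShift z (ramanujanNum z) =
      fun n => (z + 1) ^ 3 * ramanujanNum (z + 1) n + ramanujanDen (z + 1) n := by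
  refine (ramanujanRec_num z).shift.ext
    (((ramanujanRec_num (z + 1)).const_mul _).add (ramanujanRec_den (z + 1))) ?_ ?_
  · simp only [ramanujanShift, zero_add, ramanujanNum_zero, ramanujanNum_one, ramanujanDen_zero]
    push_cast
    ring
  · rw [(ramanujanRec_num z).shift_one]
    simp only [ramanujanNum_zero, ramanujanNum_one, ramanujanDen_one]
    ring

theorem add_one_mul_ramanujanDen_succ (n : ℕ) :
    (((n + 1 : ℕ) : ℝ) + 1) * ramanujanDen z (n + 1) = ((n : ℝ) + 1) * ramanujanDen z n
      + ((n : ℝ) + 2) / ((n : ℝ) + 1) ^ 2 * ramanujanDenGrowth z n := by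
  rw [ramanujanDenGrowth]
  push_cast
  field_simp
  ring

theorem ramanujanDenGrowth_zero : ramanujanDenGrowth z 0 = (2 * z + 1) ^ 2 / 2 := by
  simp only [ramanujanDenGrowth, ramanujanDen_zero, ramanujanDen_one, zero_add]
  push_cast
  ring

theorem ramanujanDenGrowth_succ (n : ℕ) :
    ramanujanDenGrowth z (n + 1) = ramanujanDenGrowth z n
      + ((n : ℝ) + 1 + (2 * z + 1) ^ 2 * ((n : ℝ) + 3) * (2 * (n : ℝ) + 3))
        / (2 * ((n : ℝ) + 2) * ((n : ℝ) + 3)) * ramanujanDen z (n + 1) := by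
  have den_rec := ramanujanRec_den z n
  simp only [ramanujanDenGrowth, Nat.cast_succ, add_assoc, one_add_one_eq_two,
    show (1 : ℝ) + 2 = 3 by norm_num]
  field_simp
  linear_combination 2 * ((n : ℝ) + 3) * den_rec

theorem ramanujanDen_pos_and_growth_nonneg (n : ℕ) :
    0 < ramanujanDen z n ∧ 0 ≤ ramanujanDenGrowth z n := by
  induction n with
  | zero =>
    rw [ramanujanDen_zero, ramanujanDenGrowth_zero]
    exact ⟨one_pos, by positivity⟩
  | succ n ih =>
    obtain ⟨den_pos, growth_nonneg⟩ := ih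
    have den_succ_pos : 0 < ramanujanDen z (n + 1) := by
      refine pos_of_mul_pos_right ?_ (show 0 ≤ ((n + 1 : ℕ) : ℝ) + 1 by positivity)
      rw [add_one_mul_ramanujanDen_succ]
      positivity
    refine ⟨den_succ_pos, ?_⟩
    rw [ramanujanDenGrowth_succ]
    positivity

theorem ramanujanDen_pos (n : ℕ) : 0 < ramanujanDen z n :=
  (ramanujanDen_pos_and_growth_nonneg z n).1

theorem ramanujanDenGrowth_nonneg (n : ℕ) : 0 ≤ ramanujanDenGrowth z n :=
  (ramanujanDen_pos_and_growth_nonneg z n).2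

theorem monotone_ramanujanDenGrowth : Monotone (ramanujanDenGrowth z) := by
  refine monotone_nat_of_le_succ fun n => ?_
  have den_pos := ramanujanDen_pos z (n + 1)
  rw [ramanujanDenGrowth_succ]
  exact le_add_of_nonneg_right (by positivity)

theorem ramanujanDenGrowth_succ_pos (n : ℕ) : 0 < ramanujanDenGrowth z (n + 1) := by
  have den_pos := ramanujanDen_pos z (n + 1)
  have growth_nonneg := ramanujanDenGrowth_nonneg z n
  rw [ramanujanDenGrowth_succ]
  positivity

theorem monotone_add_one_mul_ramanujanDen :
    Monotone fun n : ℕ => ((n : ℝ) + 1) * ramanujanDen z n := by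
  refine monotone_nat_of_le_succ fun n => ?_
  have growth_nonneg := ramanujanDenGrowth_nonneg z n
  rw [add_one_mul_ramanujanDen_succ]
  exact le_add_of_nonneg_right (by positivity)

theorem tendsto_add_one_mul_ramanujanDen_atTop :
    Tendsto (fun n : ℕ => ((n : ℝ) + 1) * ramanujanDen z n) atTop atTop := by
  have growth_one_pos : 0 < ramanujanDenGrowth z 1 := ramanujanDenGrowth_succ_pos z 0
  refine (tendsto_add_atTop_iff_nat 1).1
    (tendsto_atTop_of_add_div_le (half_pos growth_one_pos) fun n => ?_)
  have growth_le : ramanujanDenGrowth z 1 ≤ ramanujanDenGrowth z (n + 1) :=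
    monotone_ramanujanDenGrowth z (Nat.le_add_left 1 n)
  have coeff_le : 1 / (2 * ((n : ℝ) + 1)) ≤ ((n + 1 : ℕ) + 2 : ℝ) / ((n + 1 : ℕ) + 1 : ℝ) ^ 2 := by
    push_cast
    rw [div_le_div_iff₀ (by positivity) (by positivity)]
    nlinarith [n.cast_nonneg (α := ℝ)]
  have increment_le : ramanujanDenGrowth z 1 / 2 / ((n : ℝ) + 1) ≤
      ((n + 1 : ℕ) + 2 : ℝ) / ((n + 1 : ℕ) + 1 : ℝ) ^ 2 * ramanujanDenGrowth z (n + 1) :=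
    calc ramanujanDenGrowth z 1 / 2 / ((n : ℝ) + 1)
        = 1 / (2 * ((n : ℝ) + 1)) * ramanujanDenGrowth z 1 := by field_simp
      _ ≤ _ := mul_le_mul coeff_le growth_le growth_one_pos.le (by positivity)
  exact (add_le_add_right increment_le _).trans_eq
    (add_one_mul_ramanujanDen_succ z (n + 1)).symm

theorem ramanujanNum_div_den_succ (n : ℕ) :
    ramanujanNum z (n + 1) / ramanujanDen z (n + 1) = ramanujanNum z n / ramanujanDen z n
      + 1 / (((n : ℝ) + 1) ^ 3 * ramanujanDen z n * ramanujanDen z (n + 1)) := by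
  have den_ne := (ramanujanDen_pos z n).ne'
  have den_succ_ne := (ramanujanDen_pos z (n + 1)).ne'
  field_simp
  linear_combination ramanujan_casoratian z n

theorem ramanujanNum_div_den_nonneg (n : ℕ) : 0 ≤ ramanujanNum z n / ramanujanDen z n := by
  induction n with
  | zero => rw [ramanujanNum_zero, zero_div]
  | succ n ih =>
    have den_pos := ramanujanDen_pos z n
    have den_succ_pos := ramanujanDen_pos z (n + 1)
    rw [ramanujanNum_div_den_succ]
    positivity

theorem ramanujanDen_one_le_cube_mul (n : ℕ) :
    ramanujanDen z 1 ≤ ((n : ℝ) + 1) ^ 3 * ramanujanDen z n * ramanujanDen z (n + 1) := by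
  have den_pos := ramanujanDen_pos z n
  have den_succ_pos := ramanujanDen_pos z (n + 1)
  have den_ge : 1 ≤ ((n : ℝ) + 1) * ramanujanDen z n := by
    simpa [ramanujanDen_zero] using monotone_add_one_mul_ramanujanDen z n.zero_le
  have den_succ_ge : 2 * ramanujanDen z 1 ≤ ((n : ℝ) + 2) * ramanujanDen z (n + 1) := by
    simpa [add_assoc, one_add_one_eq_two] using
      monotone_add_one_mul_ramanujanDen z (Nat.le_add_left 1 n)
  have add_two_le : (n : ℝ) + 2 ≤ 2 * ((n : ℝ) + 1) ^ 2 := by nlinarith [n.cast_nonneg (α := ℝ)]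
  refine le_of_mul_le_mul_left ?_ two_pos
  calc 2 * ramanujanDen z 1
      ≤ ((n : ℝ) + 1) * ramanujanDen z n * (((n : ℝ) + 2) * ramanujanDen z (n + 1)) :=
        den_succ_ge.trans (le_mul_of_one_le_left (by positivity) den_ge)
    _ ≤ ((n : ℝ) + 1) * ramanujanDen z n
          * (2 * ((n : ℝ) + 1) ^ 2 * ramanujanDen z (n + 1)) := by gcongr
    _ = 2 * (((n : ℝ) + 1) ^ 3 * ramanujanDen z n * ramanujanDen z (n + 1)) := by ring

theorem ramanujanNum_div_den_le (n : ℕ) :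
    ramanujanNum z n / ramanujanDen z n ≤ n / ramanujanDen z 1 := by
  induction n with
  | zero => simp [ramanujanNum_zero]
  | succ n ih =>
    rw [ramanujanNum_div_den_succ, Nat.cast_succ, add_div]
    gcongr
    · exact ramanujanDen_pos z 1
    · exact ramanujanDen_one_le_cube_mul z n

theorem tendsto_ramanujanNum_div_den_parameter (n : ℕ) :
    Tendsto (fun z : ℝ => ramanujanNum z n / ramanujanDen z n) atTop (𝓝 0) := by
  have den_one_atTop : Tendsto (fun z => ramanujanDen z 1) atTop atTop := by
    simp only [ramanujanDen_one]
    exact tendsto_atTop_add_const_left _ _ <|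
      (tendsto_id.const_mul_atTop two_pos).atTop_mul_atTop₀
        (tendsto_atTop_add_const_right _ _ tendsto_id)
  exact squeeze_zero (ramanujanNum_div_den_nonneg · n) (ramanujanNum_div_den_le · n)
    (den_one_atTop.const_div_atTop _)

end Convergents

section Shift

variable {z : ℝ}

theorem ramanujanNum_div_den_sub_add_one (hz : z + 1 ≠ 0) (n : ℕ) :
    ramanujanNum z n / ramanujanDen z n - ramanujanNum (z + 1) n / ramanujanDen (z + 1) n =
      1 / (z + 1) ^ 3 - 1 / ((z + 1) ^ 3 * (ramanujanDen z n * ramanujanDen (z + 1) n)) := by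
  have den_ne := (ramanujanDen_pos z n).ne'
  have shifted_den_ne := (ramanujanDen_pos (z + 1) n).ne'
  have shift_num := congrFun (ramanujanShift_num z) n
  have shift_den := congrFun (ramanujanShift_den z) n
  simp only [ramanujanShift] at shift_num shift_den
  field_simp
  linear_combination ramanujanDen z n * shift_num - ramanujanNum z n * shift_den
    - ramanujan_casoratian z n

theorem ramanujanDenGrowth_mul_le (hz : -1 / 2 ≤ z) (n : ℕ) :
    ramanujanDenGrowth z n * ((((n + 1 : ℕ) : ℝ) + 1) * ramanujanDen z (n + 1)) ≤
      (z + 1) ^ 3 * (ramanujanDen z (n + 1) * ramanujanDen (z + 1) (n + 1)) := by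
  have w_pos : 0 < z + 1 := by linarith
  have two_w_sub_one_nonneg : 0 ≤ 2 * z + 1 := by linarith
  have den_pos := ramanujanDen_pos z (n + 1)
  have shift_eq : (z + 1) ^ 3 * ramanujanDen (z + 1) (n + 1) =
      ((n : ℝ) + 2) * ramanujanDenGrowth z n
        + ((2 * z + 1) * ((n : ℝ) + 1) ^ 2 + 2 * (z + 1) ^ 2 * ((n : ℝ) + 1) + (z + 1) ^ 3)
          * ramanujanDen z (n + 1) := by
    rw [← congrFun (ramanujanShift_den z) (n + 1), (ramanujanRec_den z).shift_succ,
      ramanujanDenGrowth]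
    field_simp
    ring
  have remainder_nonneg : 0 ≤
      ((2 * z + 1) * ((n : ℝ) + 1) ^ 2 + 2 * (z + 1) ^ 2 * ((n : ℝ) + 1) + (z + 1) ^ 3)
        * ramanujanDen z (n + 1) * ramanujanDen z (n + 1) := by positivity
  push_cast
  linear_combination remainder_nonneg - ramanujanDen z (n + 1) * shift_eq

theorem tendsto_ramanujanDen_mul_shift_atTop (hz : -1 / 2 ≤ z) :
    Tendsto (fun n => (z + 1) ^ 3 * (ramanujanDen z n * ramanujanDen (z + 1) n)) atTop atTop := by
  have growth_one_pos : 0 < ramanujanDenGrowth z 1 := ramanujanDenGrowth_succ_pos z 0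
  have scaled_den_atTop :=
    (tendsto_add_atTop_iff_nat 2).2 (tendsto_add_one_mul_ramanujanDen_atTop z)
  refine (tendsto_add_atTop_iff_nat 2).1 <| tendsto_atTop_mono (fun n => ?_) <|
    scaled_den_atTop.const_mul_atTop growth_one_pos
  have den_pos := ramanujanDen_pos z (n + 2)
  calc ramanujanDenGrowth z 1 * (((n + 2 : ℕ) + 1 : ℝ) * ramanujanDen z (n + 2))
      ≤ ramanujanDenGrowth z (n + 1) * (((n + 2 : ℕ) + 1 : ℝ) * ramanujanDen z (n + 2)) := by
        gcongr
        exact monotone_ramanujanDenGrowth z (Nat.le_add_left 1 n)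
    _ ≤ (z + 1) ^ 3 * (ramanujanDen z (n + 2) * ramanujanDen (z + 1) (n + 2)) :=
        ramanujanDenGrowth_mul_le hz (n + 1)

theorem tendsto_ramanujanNum_div_den (hz : -1 / 2 ≤ z) :
    Tendsto (fun n => ramanujanNum z n / ramanujanDen z n) atTop
      (𝓝 (∑' n : ℕ, 1 / (((n : ℝ) + 1) + z) ^ 3)) := by
  have parameter_ge (j : ℕ) : -1 / 2 ≤ (j : ℝ) + z := by linarith [j.cast_nonneg (α := ℝ)]
  have sub_eq (j n : ℕ) := ramanujanNum_div_den_sub_add_one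
    (show (j : ℝ) + z + 1 ≠ 0 by linarith [parameter_ge j]) n
  have limit := tendsto_tsum_of_tendsto_sub_succ (l := atTop)
    (R := fun j n => ramanujanNum (j + z) n / ramanujanDen (j + z) n)
    (summable_one_div_nat_add_one_add_cube z)
    (fun j n => ramanujanNum_div_den_nonneg (j + z) n) (fun j n => ?_) (fun j => ?_) (fun n => ?_)
  · simpa only [Nat.cast_zero, zero_add] using limit
  · have := parameter_ge j
    have w_pos : 0 < (j : ℝ) + z + 1 := by linarith
    have den_pos := ramanujanDen_pos (j + z) n
    have shifted_den_pos := ramanujanDen_pos (j + z + 1) n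
    rw [Nat.cast_succ, add_right_comm, sub_eq]
    exact sub_le_self _ (by positivity)
  · simp only [Nat.cast_succ, add_right_comm (j : ℝ) 1 z, sub_eq]
    simpa only [sub_zero] using
      ((tendsto_ramanujanDen_mul_shift_atTop (parameter_ge j)).const_div_atTop 1).const_sub _
  · exact (tendsto_ramanujanNum_div_den_parameter n).comp
      (tendsto_atTop_add_const_right _ z tendsto_natCast_atTop_atTop)

end Shift

theorem stmt_9_general (z : ℝ) (hz : -1 / 2 ≤ z)
    (a b p q : ℕ → ℝ)
    (ha0 : a 0 = 0)
    (ha : ∀ n : ℕ, 1 ≤ n → a n = (n : ℝ) ^ 3 + ((n : ℝ) - 1) ^ 3 + 2 * z * (z + 1) * (2 * (n : ℝ) - 1))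
    (hb0 : b 0 = 1)
    (hb : ∀ n : ℕ, 1 ≤ n → b n = -(n : ℝ) ^ 6)
    (hp0 : p 0 = a 0) (hq0 : q 0 = 1)
    (hp1 : p 1 = a 0 * a 1 + b 0) (hq1 : q 1 = a 1)
    (hp : ∀ n : ℕ, p (n + 2) = a (n + 2) * p (n + 1) + b (n + 1) * p n)
    (hq : ∀ n : ℕ, q (n + 2) = a (n + 2) * q (n + 1) + b (n + 1) * q n) :
    Tendsto (fun n => p n / q n) atTop (𝓝 (∑' n : ℕ, 1 / (((n : ℝ) + 1) + z) ^ 3)) := by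
  have rec_of {x : ℕ → ℝ}
      (hx : ∀ n : ℕ, x (n + 2) = a (n + 2) * x (n + 1) + b (n + 1) * x n) :
      RamanujanRec z fun n => x n / (n.factorial : ℝ) ^ 3 := .div_factorial_cube fun n => by
    rw [hx, ha (n + 2) (by lia), hb (n + 1) (by lia)]
    push_cast
    ring
  have num_eq : (fun n => p n / (n.factorial : ℝ) ^ 3) = ramanujanNum z :=
    (rec_of hp).ext (ramanujanRec_num z) (by simp [hp0, ha0, ramanujanNum_zero])
      (by simp [hp1, ha0, hb0, ramanujanNum_one])
  have den_eq : (fun n => q n / (n.factorial : ℝ) ^ 3) = ramanujanDen z :=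
    (rec_of hq).ext (ramanujanRec_den z) (by simp [hq0, ramanujanDen_zero])
      (by norm_num [hq1, ha 1 le_rfl, ramanujanDen_one])
  refine (tendsto_ramanujanNum_div_den hz).congr fun n => ?_
  rw [← num_eq, ← den_eq, div_div_div_cancel_right₀ (by positivity)]

theorem stmt_9 (z : ℝ) (hz : 0 ≤ z)
    (a b p q : ℕ → ℝ)
    (ha0 : a 0 = 0)
    (ha : ∀ n : ℕ, 1 ≤ n → a n = (n : ℝ) ^ 3 + ((n : ℝ) - 1) ^ 3 + 2 * z * (z + 1) * (2 * (n : ℝ) - 1))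
    (hb0 : b 0 = 1)
    (hb : ∀ n : ℕ, 1 ≤ n → b n = -(n : ℝ) ^ 6)
    (hp0 : p 0 = a 0) (hq0 : q 0 = 1)
    (hp1 : p 1 = a 0 * a 1 + b 0) (hq1 : q 1 = a 1)
    (hp : ∀ n : ℕ, p (n + 2) = a (n + 2) * p (n + 1) + b (n + 1) * p n)
    (hq : ∀ n : ℕ, q (n + 2) = a (n + 2) * q (n + 1) + b (n + 1) * q n) :
    Tendsto (fun n => p n / q n) atTop (𝓝 (∑' n : ℕ, 1 / (((n : ℝ) + 1) + z) ^ 3)) := by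
  exact stmt_9_general z (by linarith) a b p q ha0 ha hb0 hb hp0 hq0 hp1 hq1 hp hq
end

section
/- Define a(0) = 1/2, a(1) = 3, and a(n) = 5(2n−1) for n ≥ 2, and b(0) = 2 and b(n) = −(9n² − 4) for n ≥ 1. Then the convergents p(n)/q(n) of the continued fraction with partial quotients (a(n), b(n)) converge to 2^{1/3} (the real cube root of 2) as n → ∞. -/
open Filter Topology

/-!
For `0 < α < β` the function `f x = (x - α) (β - x) / x` vanishes at both endpoints, so integrating
by parts against `x ^ (s - 1)` shows that the integrals `∫ x in α..β, f x ^ n * x ^ (s - 1)` satisfy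
a three-term recurrence; after rescaling it is the recurrence of the continued fraction
`1 + 2sδ / ((α + β - sδ) - δ²(1 - s²) / (3(α + β) - δ²(4 - s²) / (5(α + β) - ⋯)))`, `δ = β - α`.
The first two integrals identify this solution with `p n - (β / α) ^ s * q n`, up to a constant.
Since `f ≤ (√β - √α)² < β - α` while, relative to the rescaling, `q n` is at least of the order
`(β - α) ^ n / n`, the error tends to zero geometrically. The cube root of two is `4 ^ (2 / 3) / 2`.
-/

namespace RpowContFract

variable {α β s x : ℝ}

section Kernel

/-- The function `(x - α) (β - x) / x`, whose powers are integrated against `x ^ (s - 1)`. It is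
written in expanded form because that makes the action of `x d/dx` visible. -/
noncomputable def kernel (α β x : ℝ) : ℝ := α + β - x - α * β / x

/-- The image of `kernel α β` under the Euler operator `x d/dx`. -/
noncomputable def eulerKernel (α β x : ℝ) : ℝ := α * β / x - x

lemma kernel_eq_div (hx : x ≠ 0) : kernel α β x = (x - α) * (β - x) / x := by
  rw [kernel]; field_simp; ring

lemma kernel_left (hα : α ≠ 0) : kernel α β α = 0 := by
  simp [kernel_eq_div hα]

lemma kernel_right (hβ : β ≠ 0) : kernel α β β = 0 := by
  simp [kernel_eq_div hβ]

lemma eulerKernel_left (hα : α ≠ 0) : eulerKernel α β α = β - α := by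
  rw [eulerKernel, mul_div_cancel_left₀ _ hα]

lemma eulerKernel_right (hβ : β ≠ 0) : eulerKernel α β β = α - β := by
  rw [eulerKernel, mul_div_cancel_right₀ _ hβ]

lemma eulerKernel_sq (hx : x ≠ 0) : eulerKernel α β x ^ 2 =
    kernel α β x ^ 2 - 2 * (α + β) * kernel α β x + (β - α) ^ 2 := by
  rw [eulerKernel, kernel]; field_simp; ring

lemma hasDerivAt_kernel (hx : x ≠ 0) :
    HasDerivAt (kernel α β) (eulerKernel α β x / x) x := by
  refine (((hasDerivAt_id x).const_sub (α + β)).sub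
    ((hasDerivAt_inv hx).const_mul (α * β))).congr_deriv ?_
  rw [eulerKernel]; field_simp; ring

lemma hasDerivAt_eulerKernel (hx : x ≠ 0) :
    HasDerivAt (eulerKernel α β) ((kernel α β x - (α + β)) / x) x := by
  refine (((hasDerivAt_inv hx).const_mul (α * β)).sub (hasDerivAt_id x)).congr_deriv ?_
  rw [kernel]; field_simp; ring

lemma continuousOn_kernel : ContinuousOn (kernel α β) (Set.Ioi 0) :=
  fun _ hx => (hasDerivAt_kernel (ne_of_gt hx)).continuousAt.continuousWithinAt

lemma continuousOn_eulerKernel : ContinuousOn (eulerKernel α β) (Set.Ioi 0) :=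
  fun _ hx => (hasDerivAt_eulerKernel (ne_of_gt hx)).continuousAt.continuousWithinAt

lemma kernel_nonneg (hα : 0 < α) (hx : x ∈ Set.Icc α β) : 0 ≤ kernel α β x := by
  have hx0 : 0 < x := hα.trans_le hx.1
  rw [kernel_eq_div hx0.ne']
  exact div_nonneg (mul_nonneg (sub_nonneg.2 hx.1) (sub_nonneg.2 hx.2)) hx0.le

lemma kernel_le_sq_sqrt_sub_sqrt (hα : 0 ≤ α) (hβ : 0 ≤ β) (hx : 0 < x) :
    kernel α β x ≤ (√β - √α) ^ 2 := by
  have complete_square : (√β - √α) ^ 2 - kernel α β x = (x - √α * √β) ^ 2 / x := by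
    rw [kernel]
    field_simp
    linear_combination (x - √β ^ 2) * Real.sq_sqrt hα + (x - α) * Real.sq_sqrt hβ
  have : 0 ≤ (x - √α * √β) ^ 2 / x := by positivity
  linarith

end Kernel

section EulerIntegral

variable {G g : ℝ → ℝ}

lemma uIcc_subset_Ioi_zero (hα : 0 < α) (hβ : 0 < β) : Set.uIcc α β ⊆ Set.Ioi 0 :=
  fun _ hx => (lt_min hα hβ).trans_le hx.1

lemma intervalIntegrable_mul_rpow (hα : 0 < α) (hβ : 0 < β) (hg : ContinuousOn g (Set.Ioi 0))
    (s : ℝ) : IntervalIntegrable (fun x => g x * x ^ s) MeasureTheory.volume α β :=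
  ContinuousOn.intervalIntegrable <|
    (hg.mul (continuousOn_id.rpow_const fun _ hx => Or.inl (ne_of_gt hx))).mono
      (uIcc_subset_Ioi_zero hα hβ)

lemma hasDerivAt_mul_rpow (hx : 0 < x) (hG : HasDerivAt G (g x / x) x) :
    HasDerivAt (fun y => G y * y ^ s) ((s * G x + g x) * x ^ (s - 1)) x := by
  refine (hG.mul (Real.hasDerivAt_rpow_const (Or.inl hx.ne'))).congr_deriv ?_
  rw [Real.rpow_sub_one hx.ne']
  field_simp
  ring

lemma integral_euler_mul_rpow (hα : 0 < α) (hβ : 0 < β)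
    (hG : ∀ x, 0 < x → HasDerivAt G (g x / x) x) (hg : ContinuousOn g (Set.Ioi 0)) :
    ∫ x in α..β, (s * G x + g x) * x ^ (s - 1) = G β * β ^ s - G α * α ^ s := by
  have hGc : ContinuousOn G (Set.Ioi 0) :=
    fun x hx => (hG x hx).continuousAt.continuousWithinAt
  have hsum : ContinuousOn (fun x => s * G x + g x) (Set.Ioi 0) := (hGc.const_mul s).add hg
  refine intervalIntegral.integral_eq_sub_of_hasDerivAt (f := fun x => G x * x ^ s)
    (fun x hx => ?_) (intervalIntegrable_mul_rpow hα hβ hsum (s - 1))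
  have hx0 : 0 < x := uIcc_subset_Ioi_zero hα hβ hx
  exact hasDerivAt_mul_rpow hx0 (hG x hx0)

end EulerIntegral

section KernelMoment

/-- The moments of `kernel α β` for the weight `x ^ (s - 1)` on `[α, β]`. -/
noncomputable def kernelMoment (α β s : ℝ) (n : ℕ) : ℝ :=
  ∫ x in α..β, kernel α β x ^ n * x ^ (s - 1)

lemma intervalIntegrable_kernel_pow_mul_rpow (hα : 0 < α) (hβ : 0 < β) (s : ℝ) (n : ℕ) :
    IntervalIntegrable (fun x => kernel α β x ^ n * x ^ s) MeasureTheory.volume α β :=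
  intervalIntegrable_mul_rpow hα hβ (continuousOn_kernel.pow n) s

lemma mul_kernelMoment_zero (hα : 0 < α) (hβ : 0 < β) :
    s * kernelMoment α β s 0 = β ^ s - α ^ s := by
  have key := integral_euler_mul_rpow (s := s) (G := fun _ => 1) (g := fun _ => 0) hα hβ
    (fun x _ => by simpa using hasDerivAt_const x (1 : ℝ)) continuousOn_const
  simpa [kernelMoment] using key

lemma mul_kernelMoment_one (hα : 0 < α) (hβ : 0 < β) :
    s * (1 - s ^ 2) * kernelMoment α β s 1 =
      (α + β - s * (β - α)) * β ^ s - (α + β + s * (β - α)) * α ^ s := by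
  set G : ℝ → ℝ := fun x => α + β + (s * eulerKernel α β x - s ^ 2 * kernel α β x) with hG_def
  set g : ℝ → ℝ := fun x => s * (kernel α β x - (α + β)) - s ^ 2 * eulerKernel α β x with hg_def
  have hG (x : ℝ) (hx : 0 < x) : HasDerivAt G (g x / x) x :=
    ((((hasDerivAt_eulerKernel hx.ne').const_mul s).sub
      ((hasDerivAt_kernel hx.ne').const_mul (s ^ 2))).const_add (α + β)).congr_deriv (by ring)
  have hg : ContinuousOn g (Set.Ioi 0) :=
    ((continuousOn_kernel.sub continuousOn_const).const_mul s).sub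
      (continuousOn_eulerKernel.const_mul _)
  calc s * (1 - s ^ 2) * kernelMoment α β s 1
      = ∫ x in α..β, s * (1 - s ^ 2) * (kernel α β x ^ 1 * x ^ (s - 1)) :=
        (intervalIntegral.integral_const_mul _ _).symm
    _ = ∫ x in α..β, (s * G x + g x) * x ^ (s - 1) :=
        intervalIntegral.integral_congr fun x _ => by simp only [hG_def, hg_def]; ring
    _ = G β * β ^ s - G α * α ^ s := integral_euler_mul_rpow hα hβ hG hg
    _ = (α + β - s * (β - α)) * β ^ s - (α + β + s * (β - α)) * α ^ s := by
        simp only [hG_def, kernel_left hα.ne', kernel_right hβ.ne', eulerKernel_left hα.ne',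
          eulerKernel_right hβ.ne']
        ring

/-- The function whose product with `x ^ s` is integrated by parts to relate three consecutive
moments. -/
noncomputable def momentPrimitive (α β s : ℝ) (n : ℕ) (x : ℝ) : ℝ :=
  kernel α β x ^ (n + 1) * ((n + 2) * eulerKernel α β x - s * kernel α β x)

/-- The coefficient of `x ^ (s - 1)` in the derivative of `momentPrimitive α β s n x * x ^ s`. -/
noncomputable def momentRelation (α β s : ℝ) (n : ℕ) (x : ℝ) : ℝ :=
  ((n + 2) ^ 2 - s ^ 2) * kernel α β x ^ (n + 2)
    - (α + β) * (n + 2) * (2 * n + 3) * kernel α β x ^ (n + 1)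
    + (n + 1) * (n + 2) * (β - α) ^ 2 * kernel α β x ^ n

lemma hasDerivAt_momentPrimitive (n : ℕ) (hx : x ≠ 0) :
    HasDerivAt (momentPrimitive α β s n)
      ((momentRelation α β s n x - s * momentPrimitive α β s n x) / x) x := by
  have hf := hasDerivAt_kernel (α := α) (β := β) hx
  have hg := hasDerivAt_eulerKernel (α := α) (β := β) hx
  refine ((hf.pow (n + 1)).mul
    ((hg.const_mul ((n : ℝ) + 2)).sub (hf.const_mul s))).congr_deriv ?_
  simp only [momentRelation, momentPrimitive, Pi.pow_apply, Pi.sub_apply, Nat.add_sub_cancel]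
  push_cast
  field_simp
  linear_combination (n + 1) * (n + 2) * kernel α β x ^ n * eulerKernel_sq (α := α) (β := β) hx

lemma integral_momentRelation (hα : 0 < α) (hβ : 0 < β) (n : ℕ) :
    ∫ x in α..β, momentRelation α β s n x * x ^ (s - 1) = 0 := by
  have hP : ContinuousOn (momentPrimitive α β s n) (Set.Ioi 0) :=
    (continuousOn_kernel.pow _).mul
      ((continuousOn_eulerKernel.const_mul _).sub (continuousOn_kernel.const_mul _))
  have hR : ContinuousOn (momentRelation α β s n) (Set.Ioi 0) :=
    (((continuousOn_kernel.pow _).const_mul _).sub ((continuousOn_kernel.pow _).const_mul _)).add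
      ((continuousOn_kernel.pow _).const_mul _)
  have key := integral_euler_mul_rpow (s := s) hα hβ
    (fun x hx => hasDerivAt_momentPrimitive n hx.ne') (hR.sub (hP.const_mul s))
  simpa [momentPrimitive, kernel_left hα.ne', kernel_right hβ.ne'] using key

lemma kernelMoment_add_two (hα : 0 < α) (hβ : 0 < β) (n : ℕ) :
    ((n + 2) ^ 2 - s ^ 2) * kernelMoment α β s (n + 2) =
      (α + β) * (n + 2) * (2 * n + 3) * kernelMoment α β s (n + 1)
        - (n + 1) * (n + 2) * (β - α) ^ 2 * kernelMoment α β s n := by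
  have hint := intervalIntegrable_kernel_pow_mul_rpow hα hβ (s - 1)
  have expand : ∫ x in α..β, momentRelation α β s n x * x ^ (s - 1) =
      ((n + 2) ^ 2 - s ^ 2) * kernelMoment α β s (n + 2)
        - (α + β) * (n + 2) * (2 * n + 3) * kernelMoment α β s (n + 1)
        + (n + 1) * (n + 2) * (β - α) ^ 2 * kernelMoment α β s n := by
    simp only [kernelMoment, ← intervalIntegral.integral_const_mul]
    rw [← intervalIntegral.integral_sub ((hint _).const_mul _) ((hint _).const_mul _),
      ← intervalIntegral.integral_add
        (((hint _).const_mul _).sub ((hint _).const_mul _)) ((hint _).const_mul _)]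
    refine intervalIntegral.integral_congr fun x _ => ?_
    simp only [momentRelation]
    ring
  linarith [integral_momentRelation (s := s) hα hβ n]

lemma kernelMoment_nonneg (hα : 0 < α) (hαβ : α ≤ β) (n : ℕ) : 0 ≤ kernelMoment α β s n :=
  intervalIntegral.integral_nonneg hαβ fun _ hx =>
    mul_nonneg (pow_nonneg (kernel_nonneg hα hx) n) (Real.rpow_nonneg (hα.le.trans hx.1) _)

lemma kernelMoment_le (hα : 0 < α) (hαβ : α ≤ β) (n : ℕ) :
    kernelMoment α β s n ≤ ((√β - √α) ^ 2) ^ n * kernelMoment α β s 0 := by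
  have hβ : 0 < β := hα.trans_le hαβ
  have hint := intervalIntegrable_kernel_pow_mul_rpow hα hβ (s - 1)
  rw [kernelMoment, kernelMoment, ← intervalIntegral.integral_const_mul]
  refine intervalIntegral.integral_mono_on hαβ (hint n) ((hint 0).const_mul _) fun x hx => ?_
  have hx0 : 0 < x := hα.trans_le hx.1
  rw [pow_zero, one_mul]
  gcongr
  · exact kernel_nonneg hα hx
  · exact kernel_le_sq_sqrt_sub_sqrt hα.le hβ.le hx0

end KernelMoment

section Recurrence

/-- The sequences satisfying the three-term recurrence of the numerators and denominators of the
continued fraction of `(β / α) ^ s`. -/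
def solutionSpace (α β s : ℝ) : Submodule ℝ (ℕ → ℝ) where
  carrier := {y | ∀ n : ℕ, y (n + 2) =
    (α + β) * (2 * n + 3) * y (n + 1) - (β - α) ^ 2 * ((n + 1) ^ 2 - s ^ 2) * y n}
  zero_mem' n := by simp
  add_mem' hy hz n := by
    simp only [Pi.add_apply, hy n, hz n]; ring
  smul_mem' c y hy n := by
    simp only [Pi.smul_apply, smul_eq_mul, hy n]; ring

lemma solutionSpace_ext {y z : ℕ → ℝ} (hy : y ∈ solutionSpace α β s)
    (hz : z ∈ solutionSpace α β s) (h0 : y 0 = z 0) (h1 : y 1 = z 1) : y = z := by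
  funext n
  induction n using Nat.twoStepInduction with
  | zero => exact h0
  | one => exact h1
  | more n ih0 ih1 => rw [hy n, hz n, ih0, ih1]

/-- The factor by which the `n`-th moment is scaled to turn the recurrence of the moments into that
of the continued fraction. -/
noncomputable def momentScale (s : ℝ) (n : ℕ) : ℝ :=
  ∏ k ∈ Finset.range n, (((k : ℝ) + 1) ^ 2 - s ^ 2) / (k + 1)

lemma momentScale_succ (n : ℕ) :
    momentScale s (n + 1) = momentScale s n * ((((n : ℝ) + 1) ^ 2 - s ^ 2) / (n + 1)) :=
  Finset.prod_range_succ _ n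

lemma momentScale_nonneg (hs : |s| ≤ 1) (n : ℕ) : 0 ≤ momentScale s n := by
  refine Finset.prod_nonneg fun k _ => div_nonneg (sub_nonneg.2 ?_) (by positivity)
  exact sq_le_sq.2 (hs.trans (le_abs.2 (Or.inl (by simp))))

/-- The solution of the recurrence which is proportional to the error `p n - (β / α) ^ s * q n`. -/
noncomputable def minimalSolution (α β s : ℝ) (n : ℕ) : ℝ :=
  momentScale s n * kernelMoment α β s n

lemma minimalSolution_mem_solutionSpace (hα : 0 < α) (hβ : 0 < β) :
    minimalSolution α β s ∈ solutionSpace α β s := by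
  intro n
  simp only [minimalSolution, momentScale_succ]
  have key := kernelMoment_add_two (s := s) hα hβ n
  have h2 : (n : ℝ) + 1 + 1 = n + 2 := by ring
  push_cast
  rw [h2]
  field_simp
  linear_combination momentScale s n * ((n + 1) ^ 2 - s ^ 2) * key

lemma mul_minimalSolution_zero (hα : 0 < α) (hβ : 0 < β) :
    s * minimalSolution α β s 0 = β ^ s - α ^ s := by
  simpa [minimalSolution, momentScale] using mul_kernelMoment_zero hα hβ

lemma mul_minimalSolution_one (hα : 0 < α) (hβ : 0 < β) :
    s * minimalSolution α β s 1 =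
      (α + β - s * (β - α)) * β ^ s - (α + β + s * (β - α)) * α ^ s := by
  simpa [minimalSolution, momentScale, mul_assoc] using mul_kernelMoment_one hα hβ

end Recurrence

section Growth

variable {q : ℕ → ℝ}

lemma pos_and_le_succ_of_mem_solutionSpace (hα : 0 ≤ α) (hαβ : α < β) (hs : |s| < 1)
    (hq : q ∈ solutionSpace α β s) (h0 : 0 < q 0) (h1 : (β - α) * (1 - s) * q 0 ≤ q 1) (n : ℕ) :
    0 < q n ∧ (β - α) * (n + 1 - s) * q n ≤ q (n + 1) := by
  obtain ⟨hs_lower, hs_upper⟩ := abs_lt.1 hs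
  have : 0 < β - α := sub_pos.2 hαβ
  induction n with
  | zero => simpa using ⟨h0, h1⟩
  | succ n ih =>
    obtain ⟨hpos, hle⟩ := ih
    have : (0 : ℝ) ≤ n := n.cast_nonneg
    have hminus : 0 < n + 1 - s := by linarith
    have hplus : 0 ≤ n + 1 + s := by linarith
    have hpos_succ : 0 < q (n + 1) := lt_of_lt_of_le (by positivity) hle
    refine ⟨hpos_succ, ?_⟩
    have hsum : β - α ≤ α + β := by linarith
    push_cast
    calc (β - α) * (n + 1 + 1 - s) * q (n + 1)
        = (β - α) * (2 * n + 3) * q (n + 1) - (β - α) * (n + 1 + s) * q (n + 1) := by ring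
      _ ≤ (α + β) * (2 * n + 3) * q (n + 1)
          - (β - α) * (n + 1 + s) * ((β - α) * (n + 1 - s) * q n) := by gcongr
      _ = q (n + 1 + 1) := by rw [hq n]; ring

lemma momentScale_mul_pow_le (hα : 0 ≤ α) (hαβ : α < β) (hs : |s| < 1)
    (hq : q ∈ solutionSpace α β s) (h0 : 0 < q 0) (h1 : (β - α) * (1 - s) * q 0 ≤ q 1) (n : ℕ) :
    momentScale s n * (β - α) ^ n * q 0 ≤ (n + 1) * q n := by
  obtain ⟨hs_lower, hs_upper⟩ := abs_lt.1 hs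
  have growth := pos_and_le_succ_of_mem_solutionSpace hα hαβ hs hq h0 h1
  induction n with
  | zero => simp [momentScale]
  | succ n ih =>
    have : (0 : ℝ) ≤ n := n.cast_nonneg
    have hδ : 0 < β - α := sub_pos.2 hαβ
    have hminus : 0 < n + 1 - s := by linarith
    have hplus : 0 < n + 1 + s := by linarith
    have hq_pos : 0 < q (n + 1) := (growth (n + 1)).1
    rw [momentScale_succ]
    push_cast
    calc momentScale s n * (((n + 1) ^ 2 - s ^ 2) / (n + 1)) * (β - α) ^ (n + 1) * q 0
        = (n + 1 + s) * ((β - α) * (n + 1 - s) / (n + 1))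
            * (momentScale s n * (β - α) ^ n * q 0) := by ring
      _ ≤ (n + 1 + s) * ((β - α) * (n + 1 - s) / (n + 1)) * ((n + 1) * q n) := by gcongr
      _ = (n + 1 + s) * ((β - α) * (n + 1 - s) * q n) := by field_simp
      _ ≤ (n + 1 + s) * q (n + 1) := by gcongr; exact (growth n).2
      _ ≤ (n + 1 + 1) * q (n + 1) := by gcongr

lemma sq_sqrt_sub_sqrt_lt (hα : 0 < α) (hαβ : α < β) : (√β - √α) ^ 2 < β - α := by
  have hsqrt : √α < √β := Real.sqrt_lt_sqrt hα.le hαβ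
  have hα_pos : 0 < √α := Real.sqrt_pos.2 hα
  nlinarith [Real.sq_sqrt hα.le, Real.sq_sqrt (hα.trans hαβ).le]

lemma minimalSolution_div_le (hα : 0 < α) (hαβ : α < β) (hs : |s| < 1)
    (hq : q ∈ solutionSpace α β s) (h0 : 0 < q 0) (h1 : (β - α) * (1 - s) * q 0 ≤ q 1) (n : ℕ) :
    minimalSolution α β s n / q n ≤
      kernelMoment α β s 0 / q 0 * ((n + 1) * ((√β - √α) ^ 2 / (β - α)) ^ n) := by
  have hδ : 0 < β - α := sub_pos.2 hαβ
  have hq_pos := (pos_and_le_succ_of_mem_solutionSpace hα.le hαβ hs hq h0 h1 n).1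
  have hscale : momentScale s n ≤ (n + 1) * q n / ((β - α) ^ n * q 0) := by
    rw [le_div_iff₀ (by positivity), ← mul_assoc]
    exact momentScale_mul_pow_le hα.le hαβ hs hq h0 h1 n
  have hM : 0 ≤ kernelMoment α β s 0 := kernelMoment_nonneg hα hαβ.le 0
  rw [div_le_iff₀ hq_pos]
  calc minimalSolution α β s n
      ≤ momentScale s n * (((√β - √α) ^ 2) ^ n * kernelMoment α β s 0) :=
        mul_le_mul_of_nonneg_left (kernelMoment_le hα hαβ.le n) (momentScale_nonneg hs.le n)
    _ ≤ (n + 1) * q n / ((β - α) ^ n * q 0) * (((√β - √α) ^ 2) ^ n * kernelMoment α β s 0) := by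
        gcongr
    _ = kernelMoment α β s 0 / q 0 * ((n + 1) * ((√β - √α) ^ 2 / (β - α)) ^ n) * q n := by
        rw [div_pow]; field_simp

lemma tendsto_minimalSolution_div (hα : 0 < α) (hαβ : α < β) (hs : |s| < 1)
    (hq : q ∈ solutionSpace α β s) (h0 : 0 < q 0) (h1 : (β - α) * (1 - s) * q 0 ≤ q 1) :
    Tendsto (fun n => minimalSolution α β s n / q n) atTop (𝓝 0) := by
  set r : ℝ := (√β - √α) ^ 2 / (β - α)
  have hδ : 0 < β - α := sub_pos.2 hαβ
  have hr0 : 0 ≤ r := by positivity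
  have hr1 : r < 1 := (div_lt_one hδ).2 (sq_sqrt_sub_sqrt_lt hα hαβ)
  have hgeom : Tendsto (fun n : ℕ => ((n : ℝ) + 1) * r ^ n) atTop (𝓝 0) := by
    simpa [add_mul] using (tendsto_self_mul_const_pow_of_lt_one hr0 hr1).add
      (tendsto_pow_atTop_nhds_zero_of_lt_one hr0 hr1)
  refine squeeze_zero (fun n => ?_) (minimalSolution_div_le hα hαβ hs hq h0 h1)
    (by simpa using hgeom.const_mul (kernelMoment α β s 0 / q 0))
  exact div_nonneg (mul_nonneg (momentScale_nonneg hs.le n) (kernelMoment_nonneg hα hαβ.le n))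
    (pos_and_le_succ_of_mem_solutionSpace hα.le hαβ hs hq h0 h1 n).1.le

end Growth

lemma sub_mul_eq_minimalSolution {c : ℝ} {p q : ℕ → ℝ} (hα : 0 < α) (hβ : 0 < β)
    (hp : p ∈ solutionSpace α β s) (hq : q ∈ solutionSpace α β s)
    (hp0 : p 0 = c) (hq0 : q 0 = 1)
    (hp1 : p 1 = c * (α + β + s * (β - α))) (hq1 : q 1 = α + β - s * (β - α)) (n : ℕ) :
    p n - c * (β / α) ^ s * q n = -(c * s / α ^ s) * minimalSolution α β s n := by
  have hαs : α ^ s ≠ 0 := (Real.rpow_pos_of_pos hα s).ne'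
  have hE0 := mul_minimalSolution_zero (s := s) hα hβ
  have hE1 := mul_minimalSolution_one (s := s) hα hβ
  rw [Real.div_rpow hβ.le hα.le]
  refine congrFun (solutionSpace_ext (y := p - (c * (β ^ s / α ^ s)) • q)
    (z := (-(c * s / α ^ s)) • minimalSolution α β s)
    (sub_mem hp (Submodule.smul_mem _ _ hq))
    (Submodule.smul_mem _ _ (minimalSolution_mem_solutionSpace hα hβ)) ?_ ?_) n
  · simp only [Pi.sub_apply, Pi.smul_apply, smul_eq_mul, hp0, hq0]
    field_simp
    linear_combination c * hE0
  · simp only [Pi.sub_apply, Pi.smul_apply, smul_eq_mul, hp1, hq1]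
    field_simp
    linear_combination c * hE1

lemma mem_solutionSpace_of_partialQuotients {a b y : ℕ → ℝ}
    (ha : ∀ n : ℕ, 2 ≤ n → a n = (α + β) * (2 * n - 1))
    (hb : ∀ n : ℕ, 1 ≤ n → b n = -((β - α) ^ 2 * (n ^ 2 - s ^ 2)))
    (hy : ∀ n : ℕ, y (n + 2) = a (n + 2) * y (n + 1) + b (n + 1) * y n) :
    y ∈ solutionSpace α β s := by
  intro n
  rw [hy, ha _ (by omega), hb _ (by omega)]
  push_cast
  ring

lemma two_rpow_one_third_eq :
    (2 : ℝ) ^ ((1 : ℝ) / 3) = 1 / 2 * (4 : ℝ) ^ ((2 : ℝ) / 3) := by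
  rw [show (4 : ℝ) = 2 ^ (2 : ℝ) by norm_num, ← Real.rpow_mul zero_le_two,
    show (2 : ℝ) * (2 / 3) = 1 / 3 + 1 by norm_num, Real.rpow_add_one two_ne_zero]
  ring

end RpowContFract

open RpowContFract in
theorem stmt_11_general {α β s c : ℝ} (hα : 0 < α) (hαβ : α < β) (hs : |s| < 1)
    (a b p q : ℕ → ℝ)
    (ha0 : a 0 = c)
    (ha1 : a 1 = α + β - s * (β - α))
    (ha : ∀ n : ℕ, 2 ≤ n → a n = (α + β) * (2 * n - 1))
    (hb0 : b 0 = 2 * c * s * (β - α))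
    (hb : ∀ n : ℕ, 1 ≤ n → b n = -((β - α) ^ 2 * (n ^ 2 - s ^ 2)))
    (hp0 : p 0 = a 0) (hq0 : q 0 = 1)
    (hp1 : p 1 = a 0 * a 1 + b 0) (hq1 : q 1 = a 1)
    (hp : ∀ n : ℕ, p (n + 2) = a (n + 2) * p (n + 1) + b (n + 1) * p n)
    (hq : ∀ n : ℕ, q (n + 2) = a (n + 2) * q (n + 1) + b (n + 1) * q n) :
    Tendsto (fun n => p n / q n) atTop (𝓝 (c * (β / α) ^ s)) := by
  have hβ : 0 < β := hα.trans hαβ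
  have hp_mem := mem_solutionSpace_of_partialQuotients ha hb hp
  have hq_mem := mem_solutionSpace_of_partialQuotients ha hb hq
  have hq0_pos : 0 < q 0 := hq0 ▸ one_pos
  have hq1_le : (β - α) * (1 - s) * q 0 ≤ q 1 := by rw [hq0, hq1, ha1]; linarith
  have herror := sub_mul_eq_minimalSolution hα hβ hp_mem hq_mem (hp0.trans ha0) hq0
    (by rw [hp1, ha0, ha1, hb0]; ring) (hq1.trans ha1)
  have hlim := ((tendsto_minimalSolution_div hα hαβ hs hq_mem hq0_pos hq1_le).const_mul
    (-(c * s / α ^ s))).const_add (c * (β / α) ^ s)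
  rw [mul_zero, add_zero] at hlim
  refine hlim.congr fun n => ?_
  have hqn : q n ≠ 0 :=
    (pos_and_le_succ_of_mem_solutionSpace hα.le hαβ hs hq_mem hq0_pos hq1_le n).1.ne'
  rw [← mul_div_assoc, ← herror]
  field_simp
  ring

theorem stmt_11 
    (a b p q : ℕ → ℝ)
    (ha0 : a 0 = 1 / 2)
    (ha1 : a 1 = 3)
    (ha : ∀ n : ℕ, 2 ≤ n → a n = 5 * (2 * (n : ℝ) - 1))
    (hb0 : b 0 = 2)
    (hb : ∀ n : ℕ, 1 ≤ n → b n = -(9 * (n : ℝ) ^ 2 - 4))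
    (hp0 : p 0 = a 0) (hq0 : q 0 = 1)
    (hp1 : p 1 = a 0 * a 1 + b 0) (hq1 : q 1 = a 1)
    (hp : ∀ n : ℕ, p (n + 2) = a (n + 2) * p (n + 1) + b (n + 1) * p n)
    (hq : ∀ n : ℕ, q (n + 2) = a (n + 2) * q (n + 1) + b (n + 1) * q n) :
    Tendsto (fun n => p n / q n) atTop (𝓝 ((2 : ℝ) ^ ((1 : ℝ) / 3))) := by
  rw [RpowContFract.two_rpow_one_third_eq, ← div_one (4 : ℝ)]
  exact stmt_11_general one_pos (by norm_num) (by norm_num [abs_lt]) a b p q ha0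
    (by rw [ha1]; norm_num) (fun n hn => by rw [ha n hn]; ring) (by rw [hb0]; norm_num)
    (fun n hn => by rw [hb n hn]; ring) hp0 hq0 hp1 hq1 hp hq
end

section
/- Define a(0) = 1/2, a(1) = 5, and a(n) = 9(2n−1) for n ≥ 2, and b(0) = 4 and b(n) = −(9n² − 16) for n ≥ 1. Then the convergents p(n)/q(n) of the continued fraction with partial quotients (a(n), b(n)) converge to 2^{1/3} (the real cube root of 2) as n → ∞. -/
open Filter Topology

/-!
Write `θ = s d/ds` and `g(s) = (s - 1)(z - s)/s`. Integrating `θ(s^ν (θ - ν) h) = s^ν (θ² - ν²) h`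
against `ds/s` over `[1, z]` with `h = g ^ n` gives a three-term recurrence for the moments
`∫ s^(ν - 1) g(s)^n ds`. After multiplication by `∏ (k² - ν²)/k` it becomes the recurrence of the
convergents, and its initial values identify the rescaled moments with `z^ν q(n) - p(n)`.
On `[1, z]` we have `0 ≤ g ≤ (√z - 1)²`, whereas `q(n) ≥ (z - 1)^n n!`, so the relative error
decays like `((√z - 1)/(√z + 1))^n`. The continued fraction of the theorem is the case `z = 2`,
`ν = 4/3`, up to the rescaling of convergents by `3 ^ n` and the factor `1/2` in
`2^(1/3) = 2^(4/3)/2`.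
-/

/-- The three-term recurrence satisfied by the numerators and the denominators of a continued
fraction for `z ^ ν`. -/
def IsRpowRecurrence (z ν : ℝ) (x : ℕ → ℝ) : Prop :=
  ∀ n : ℕ, x (n + 2) =
    (z + 1) * (2 * n + 3) * x (n + 1) - (z - 1) ^ 2 * ((n + 1) ^ 2 - ν ^ 2) * x n

namespace IsRpowRecurrence

variable {z ν : ℝ} {x y : ℕ → ℝ}

lemma const_mul (hx : IsRpowRecurrence z ν x) (c : ℝ) :
    IsRpowRecurrence z ν fun n => c * x n := fun n => by
  linear_combination c * hx n

lemma sub (hx : IsRpowRecurrence z ν x) (hy : IsRpowRecurrence z ν y) :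
    IsRpowRecurrence z ν fun n => x n - y n := fun n => by
  linear_combination hx n - hy n

lemma eq_of_initial_eq (hx : IsRpowRecurrence z ν x) (hy : IsRpowRecurrence z ν y)
    (h0 : x 0 = y 0) (h1 : x 1 = y 1) (n : ℕ) : x n = y n := by
  induction n using Nat.twoStepInduction with
  | zero => exact h0
  | one => exact h1
  | more n ih ih' => rw [hx, hy, ih, ih']

lemma nonneg_and_mul_le_succ (hx : IsRpowRecurrence z ν x) (hz : 1 ≤ z) (h0 : 0 ≤ x 0)
    (h1 : (z - 1) * x 0 ≤ x 1) (n : ℕ) :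
    0 ≤ x n ∧ (z - 1) * (n + 1) * x n ≤ x (n + 1) := by
  have : 0 ≤ z - 1 := sub_nonneg.2 hz
  induction n with
  | zero => exact ⟨h0, by simpa using h1⟩
  | succ n ih =>
    obtain ⟨hn, hstep⟩ := ih
    have hpos : 0 ≤ x (n + 1) := le_trans (by positivity) hstep
    refine ⟨hpos, ?_⟩
    have hprev : (z - 1) ^ 2 * ((n + 1) ^ 2 - ν ^ 2) * x n ≤ (z - 1) * (n + 1) * x (n + 1) :=
      calc (z - 1) ^ 2 * ((n + 1) ^ 2 - ν ^ 2) * x n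
          ≤ (z - 1) ^ 2 * (n + 1) ^ 2 * x n := by
            gcongr
            exact sub_le_self _ (sq_nonneg ν)
        _ = (z - 1) * (n + 1) * ((z - 1) * (n + 1) * x n) := by ring
        _ ≤ (z - 1) * (n + 1) * x (n + 1) := by gcongr
    calc (z - 1) * ((n + 1 : ℕ) + 1) * x (n + 1)
        = (z - 1) * (2 * n + 3) * x (n + 1) - (z - 1) * (n + 1) * x (n + 1) := by push_cast; ring
      _ ≤ (z + 1) * (2 * n + 3) * x (n + 1) - (z - 1) ^ 2 * ((n + 1) ^ 2 - ν ^ 2) * x n := by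
          gcongr
          linarith
      _ = x (n + 1 + 1) := (hx n).symm

lemma pow_mul_factorial_le (hx : IsRpowRecurrence z ν x) (hz : 1 ≤ z) (h0 : 1 ≤ x 0)
    (h1 : (z - 1) * x 0 ≤ x 1) (n : ℕ) : (z - 1) ^ n * n.factorial ≤ x n := by
  have : 0 ≤ z - 1 := sub_nonneg.2 hz
  induction n with
  | zero => simpa using h0
  | succ n ih =>
    calc (z - 1) ^ (n + 1) * (n + 1).factorial
        = (z - 1) * (n + 1) * ((z - 1) ^ n * n.factorial) := by
          push_cast [Nat.factorial_succ]; ring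
      _ ≤ (z - 1) * (n + 1) * x n := by gcongr
      _ ≤ x (n + 1) := (hx.nonneg_and_mul_le_succ hz (zero_le_one.trans h0) h1 n).2

end IsRpowRecurrence

namespace RpowRecurrence

section EulerOperator

variable {a b ν : ℝ} {h h₁ h₂ : ℝ → ℝ}

lemma integral_rpow_sub_one_mul_euler {f f' : ℝ → ℝ} (ha : 0 < a) (hb : 0 < b)
    (hf : ∀ s ∈ Set.uIcc a b, HasDerivAt f (f' s) s) (hf' : ContinuousOn f' (Set.uIcc a b)) :
    ∫ s in a..b, s ^ (ν - 1) * (ν * f s + s * f' s) = b ^ ν * f b - a ^ ν * f a := by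
  have hpos : ∀ s ∈ Set.uIcc a b, 0 < s := fun s hs => (lt_min ha hb).trans_le hs.1
  refine intervalIntegral.integral_eq_sub_of_hasDerivAt (f := fun s => s ^ ν * f s)
    (fun s hs => ?_) (ContinuousOn.intervalIntegrable ?_)
  · have hs0 := hpos s hs
    refine ((Real.hasDerivAt_rpow_const (Or.inl hs0.ne')).mul (hf s hs)).congr_deriv ?_
    rw [Real.rpow_sub_one hs0.ne']
    field_simp
  · have hfc : ContinuousOn f (Set.uIcc a b) := fun s hs =>
      (hf s hs).continuousAt.continuousWithinAt
    exact (continuousOn_id.rpow_const fun s hs => Or.inl (hpos s hs).ne').mul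
      ((hfc.const_smul ν).add (continuousOn_id.mul hf'))

lemma integral_rpow_sub_one_mul_euler_sq_sub_sq (ha : 0 < a) (hb : 0 < b)
    (hh : ∀ s ∈ Set.uIcc a b, HasDerivAt h (h₁ s / s) s)
    (hh₁ : ∀ s ∈ Set.uIcc a b, HasDerivAt h₁ (h₂ s / s) s)
    (hh₂ : ContinuousOn h₂ (Set.uIcc a b)) :
    ∫ s in a..b, s ^ (ν - 1) * (h₂ s - ν ^ 2 * h s) =
      b ^ ν * (h₁ b - ν * h b) - a ^ ν * (h₁ a - ν * h a) := by
  have hne : ∀ s ∈ Set.uIcc a b, s ≠ 0 := fun s hs => ((lt_min ha hb).trans_le hs.1).ne'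
  have hh₁c : ContinuousOn h₁ (Set.uIcc a b) := fun s hs =>
    (hh₁ s hs).continuousAt.continuousWithinAt
  rw [← integral_rpow_sub_one_mul_euler (f := fun s => h₁ s - ν * h s) ha hb
    (fun s hs => (hh₁ s hs).sub ((hh s hs).const_mul ν))
    ((hh₂.div continuousOn_id hne).sub ((hh₁c.div continuousOn_id hne).const_smul ν))]
  refine intervalIntegral.integral_congr fun s hs => ?_
  have := hne s hs
  field_simp
  ring

end EulerOperator

section Kernel

/-- The function `(s - 1)(z - s)/s`, whose powers are integrated against `s ^ (ν - 1)`. It is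
written in expanded form, which makes its derivative immediate. -/
noncomputable def kernel (z s : ℝ) : ℝ := 1 + z - s - z / s

variable {z s : ℝ}

lemma kernel_eq_div (hs : s ≠ 0) : kernel z s = (s - 1) * (z - s) / s := by
  unfold kernel
  field_simp
  ring

lemma kernel_one_right : kernel z 1 = 0 := by
  rw [kernel_eq_div one_ne_zero, sub_self, zero_mul, zero_div]

lemma kernel_self (hz : z ≠ 0) : kernel z z = 0 := by
  rw [kernel_eq_div hz, sub_self, mul_zero, zero_div]

lemma hasDerivAt_kernel (hs : s ≠ 0) : HasDerivAt (kernel z) ((z / s - s) / s) s := by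
  refine (((hasDerivAt_id s).const_sub (1 + z)).sub
    ((hasDerivAt_const s z).div (hasDerivAt_id s) hs)).congr_deriv ?_
  simp only [id]
  field_simp
  ring

lemma hasDerivAt_div_sub_self (hs : s ≠ 0) :
    HasDerivAt (fun s => z / s - s) ((kernel z s - (z + 1)) / s) s := by
  refine (((hasDerivAt_const s z).div (hasDerivAt_id s) hs).sub (hasDerivAt_id s)).congr_deriv ?_
  simp only [id, kernel]
  field_simp
  ring

lemma div_sub_self_sq (hs : s ≠ 0) :
    (z / s - s) ^ 2 = kernel z s ^ 2 - 2 * (z + 1) * kernel z s + (z - 1) ^ 2 := by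
  unfold kernel
  field_simp
  ring

lemma continuousOn_kernel (hz : 0 < z) : ContinuousOn (kernel z) (Set.uIcc 1 z) := fun _ hs =>
  (hasDerivAt_kernel ((lt_min one_pos hz).trans_le hs.1).ne').continuousAt.continuousWithinAt

lemma kernel_nonneg (hs : s ∈ Set.Icc 1 z) : 0 ≤ kernel z s := by
  have hs0 : 0 < s := one_pos.trans_le hs.1
  rw [kernel_eq_div hs0.ne']
  exact div_nonneg (mul_nonneg (sub_nonneg.2 hs.1) (sub_nonneg.2 hs.2)) hs0.le

lemma kernel_le (hz : 0 ≤ z) (hs : 0 < s) : kernel z s ≤ (√z - 1) ^ 2 := by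
  have hgap : (√z - 1) ^ 2 - kernel z s = (s - √z) ^ 2 / s := by
    unfold kernel
    field_simp
    linear_combination (s - 1) * Real.sq_sqrt hz
  exact sub_nonneg.1 (hgap ▸ by positivity)

end Kernel

section Moment

/-- The moments `∫ s^(ν - 1) ((s - 1)(z - s)/s)^n ds` over `[1, z]`, proportional to the errors
`z^ν q(n) - p(n)` of the convergents. -/
noncomputable def moment (z ν : ℝ) (n : ℕ) : ℝ := ∫ s in 1..z, s ^ (ν - 1) * kernel z s ^ n

variable {z : ℝ} (ν : ℝ)

lemma intervalIntegrable_rpow_mul_kernel_pow (hz : 0 < z) (n : ℕ) :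
    IntervalIntegrable (fun s => s ^ (ν - 1) * kernel z s ^ n) MeasureTheory.volume 1 z :=
  ((continuousOn_id.rpow_const fun _ hs => Or.inl ((lt_min one_pos hz).trans_le hs.1).ne').mul
    ((continuousOn_kernel hz).pow n)).intervalIntegrable

lemma mul_moment_zero (hz : 0 < z) : ν * moment z ν 0 = z ^ ν - 1 := by
  have h := integral_rpow_sub_one_mul_euler (ν := ν) one_pos hz
    (fun s _ => hasDerivAt_const s (1 : ℝ)) continuousOn_const
  simpa [moment, mul_comm ν] using h

lemma moment_one (hz : 0 < z) :
    (1 - ν ^ 2) * moment z ν 1 = (z + 1) * moment z ν 0 - (z - 1) * (z ^ ν + 1) := by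
  have hne : ∀ s ∈ Set.uIcc 1 z, s ≠ 0 := fun s hs => ((lt_min one_pos hz).trans_le hs.1).ne'
  have hboundary := integral_rpow_sub_one_mul_euler_sq_sub_sq (ν := ν) one_pos hz
    (fun s hs => hasDerivAt_kernel (z := z) (hne s hs))
    (fun s hs => hasDerivAt_div_sub_self (hne s hs))
    ((continuousOn_kernel hz).sub continuousOn_const)
  have hsplit : ∫ s in 1..z, s ^ (ν - 1) * (kernel z s - (z + 1) - ν ^ 2 * kernel z s) =
      (1 - ν ^ 2) * moment z ν 1 - (z + 1) * moment z ν 0 := by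
    simp only [moment, ← intervalIntegral.integral_const_mul]
    rw [← intervalIntegral.integral_sub
      ((intervalIntegrable_rpow_mul_kernel_pow ν hz 1).const_mul _)
      ((intervalIntegrable_rpow_mul_kernel_pow ν hz 0).const_mul _)]
    congr 1 with s
    ring
  rw [hsplit, kernel_self hz.ne', kernel_one_right, div_self hz.ne', Real.one_rpow] at hboundary
  linear_combination hboundary

lemma hasDerivAt_kernel_pow {s : ℝ} (hs : s ≠ 0) (n : ℕ) :
    HasDerivAt (fun s => kernel z s ^ (n + 1))
      ((n + 1) * kernel z s ^ n * (z / s - s) / s) s := by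
  refine ((hasDerivAt_kernel hs).pow (n + 1)).congr_deriv ?_
  push_cast [Nat.add_sub_cancel]
  ring

lemma hasDerivAt_euler_kernel_pow {s : ℝ} (hs : s ≠ 0) (n : ℕ) :
    HasDerivAt (fun s => ((n + 1 : ℕ) + 1) * kernel z s ^ (n + 1) * (z / s - s))
      (((n + 2) ^ 2 * kernel z s ^ (n + 2) - (z + 1) * (n + 2) * (2 * n + 3) * kernel z s ^ (n + 1)
        + (z - 1) ^ 2 * (n + 1) * (n + 2) * kernel z s ^ n) / s) s := by
  refine (((hasDerivAt_kernel_pow hs n).const_mul _).mul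
    (hasDerivAt_div_sub_self hs)).congr_deriv ?_
  push_cast
  linear_combination (n + 2) * (n + 1) * kernel z s ^ n / s * div_sub_self_sq (z := z) hs

lemma moment_add_two (hz : 0 < z) (n : ℕ) :
    ((n + 2) ^ 2 - ν ^ 2) * moment z ν (n + 2) =
      (z + 1) * (n + 2) * (2 * n + 3) * moment z ν (n + 1)
        - (z - 1) ^ 2 * (n + 1) * (n + 2) * moment z ν n := by
  have hne : ∀ s ∈ Set.uIcc 1 z, s ≠ 0 := fun s hs => ((lt_min one_pos hz).trans_le hs.1).ne'
  have hcont (c : ℝ) (k : ℕ) : ContinuousOn (fun s => c * kernel z s ^ k) (Set.uIcc 1 z) :=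
    ((continuousOn_kernel hz).pow k).const_smul c
  have hboundary := integral_rpow_sub_one_mul_euler_sq_sub_sq (ν := ν) one_pos hz
    (fun s hs => hasDerivAt_kernel_pow (hne s hs) (n + 1))
    (fun s hs => hasDerivAt_euler_kernel_pow (hne s hs) n)
    (((hcont _ (n + 2)).sub (hcont _ (n + 1))).add (hcont _ n))
  have hsplit : ((n + 2) ^ 2 - ν ^ 2) * moment z ν (n + 2)
        - (z + 1) * (n + 2) * (2 * n + 3) * moment z ν (n + 1)
        + (z - 1) ^ 2 * (n + 1) * (n + 2) * moment z ν n =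
      ∫ s in 1..z, s ^ (ν - 1) * ((n + 2) ^ 2 * kernel z s ^ (n + 2)
        - (z + 1) * (n + 2) * (2 * n + 3) * kernel z s ^ (n + 1)
        + (z - 1) ^ 2 * (n + 1) * (n + 2) * kernel z s ^ n - ν ^ 2 * kernel z s ^ (n + 2)) := by
    have hint (k : ℕ) := intervalIntegrable_rpow_mul_kernel_pow ν hz k
    simp only [moment, ← intervalIntegral.integral_const_mul]
    rw [← intervalIntegral.integral_sub ((hint _).const_mul _) ((hint _).const_mul _),
      ← intervalIntegral.integral_add
        (((hint _).const_mul _).sub ((hint _).const_mul _)) ((hint _).const_mul _)]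
    congr 1 with s
    ring
  have hvanish := hsplit.trans hboundary
  simp only [kernel_self hz.ne', kernel_one_right, zero_pow (Nat.succ_ne_zero _), mul_zero,
    zero_mul, sub_self] at hvanish
  linear_combination hvanish

lemma moment_nonneg (hz : 1 ≤ z) (n : ℕ) : 0 ≤ moment z ν n :=
  intervalIntegral.integral_nonneg hz fun _ hs =>
    mul_nonneg (Real.rpow_nonneg (zero_le_one.trans hs.1) _) (pow_nonneg (kernel_nonneg hs) n)

lemma moment_le (hz : 1 ≤ z) (n : ℕ) : moment z ν n ≤ ((√z - 1) ^ 2) ^ n * moment z ν 0 := by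
  have hz0 : 0 < z := one_pos.trans_le hz
  simp only [moment, ← intervalIntegral.integral_const_mul]
  refine intervalIntegral.integral_mono_on hz (intervalIntegrable_rpow_mul_kernel_pow ν hz0 n)
    ((intervalIntegrable_rpow_mul_kernel_pow ν hz0 0).const_mul _) fun s hs => ?_
  have hs0 : 0 < s := one_pos.trans_le hs.1
  rw [pow_zero, mul_one, mul_comm]
  exact mul_le_mul_of_nonneg_right
    (pow_le_pow_left₀ (kernel_nonneg hs) (kernel_le hz0.le hs0) n) (Real.rpow_nonneg hs0.le _)

end Moment

section Convergence

/-- The factor `∏ (k² - ν²)/k`, `1 ≤ k ≤ n`, turning the recurrence of the moments into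
`IsRpowRecurrence`. -/
noncomputable def momentFactor (ν : ℝ) (n : ℕ) : ℝ :=
  ∏ k ∈ Finset.range n, (((k : ℝ) + 1) ^ 2 - ν ^ 2) / (k + 1)

lemma momentFactor_succ (ν : ℝ) (n : ℕ) :
    momentFactor ν (n + 1) = momentFactor ν n * (((n + 1) ^ 2 - ν ^ 2) / (n + 1)) :=
  Finset.prod_range_succ _ n

lemma isRpowRecurrence_momentFactor_mul_moment {z : ℝ} (ν : ℝ) (hz : 0 < z) :
    IsRpowRecurrence z ν fun n => momentFactor ν n * moment z ν n := fun n => by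
  have h1 : (n : ℝ) + 1 ≠ 0 := by positivity
  have h2 : (n : ℝ) + 2 ≠ 0 := by positivity
  have hlast : momentFactor ν (n + 2) =
      momentFactor ν (n + 1) * (((n + 2) ^ 2 - ν ^ 2) / (n + 2)) := by
    convert momentFactor_succ ν (n + 1) using 3 <;> push_cast <;> ring
  have hprev : momentFactor ν (n + 1) * (n + 1) = momentFactor ν n * ((n + 1) ^ 2 - ν ^ 2) := by
    rw [momentFactor_succ]
    field_simp
  calc momentFactor ν (n + 2) * moment z ν (n + 2)
      = momentFactor ν (n + 1) * (((n + 2) ^ 2 - ν ^ 2) * moment z ν (n + 2)) / (n + 2) := by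
        rw [hlast]; ring
    _ = momentFactor ν (n + 1) *
          ((z + 1) * (2 * n + 3) * moment z ν (n + 1) - (z - 1) ^ 2 * (n + 1) * moment z ν n) := by
        rw [moment_add_two ν hz]; field_simp
    _ = _ := by linear_combination -(z - 1) ^ 2 * moment z ν n * hprev

lemma rpow_mul_sub_eq_mul_moment {z ν : ℝ} {p q : ℕ → ℝ} (hz : 0 < z)
    (hp : IsRpowRecurrence z ν p) (hq : IsRpowRecurrence z ν q) (hp0 : p 0 = 1) (hq0 : q 0 = 1)
    (hp1 : p 1 = 1 - ν + (1 + ν) * z) (hq1 : q 1 = 1 + ν + (1 - ν) * z) (n : ℕ) :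
    z ^ ν * q n - p n = ν * (momentFactor ν n * moment z ν n) := by
  refine ((hq.const_mul (z ^ ν)).sub hp).eq_of_initial_eq
    ((isRpowRecurrence_momentFactor_mul_moment ν hz).const_mul ν) ?_ ?_ n
  · simp [momentFactor, hp0, hq0, mul_moment_zero ν hz]
  · simp only [momentFactor, Finset.prod_range_one, Nat.cast_zero, hp1, hq1]
    linear_combination -(z + 1) * mul_moment_zero ν hz - ν * moment_one ν hz

lemma sqrt_sub_one_sq_lt {z : ℝ} (hz : 1 < z) : (√z - 1) ^ 2 < z - 1 := by
  have hsqrt : 1 < √z := Real.lt_sqrt_of_sq_lt (by rwa [one_pow])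
  nlinarith [Real.sq_sqrt (zero_le_one.trans hz.le)]

lemma tendsto_momentFactor_div_factorial_mul_pow {r : ℝ} (ν : ℝ) (hr0 : 0 ≤ r) (hr1 : r < 1) :
    Tendsto (fun n : ℕ => momentFactor ν n / n.factorial * r ^ n) atTop (𝓝 0) := by
  refine (summable_of_ratio_norm_eventually_le hr1 ?_).tendsto_atTop_zero
  filter_upwards [eventually_ge_atTop ⌈|ν|⌉₊] with n hn
  have hν : ν ^ 2 ≤ ((n : ℝ) + 1) ^ 2 :=
    sq_le_sq.2 (((Nat.ceil_le.1 hn).trans (by linarith)).trans (le_abs_self _))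
  have hratio : ‖(((n : ℝ) + 1) ^ 2 - ν ^ 2) / (n + 1) ^ 2‖ ≤ 1 := by
    rw [Real.norm_of_nonneg (div_nonneg (sub_nonneg.2 hν) (sq_nonneg _))]
    exact div_le_one_of_le₀ (sub_le_self _ (sq_nonneg ν)) (sq_nonneg _)
  have hstep : momentFactor ν (n + 1) / (n + 1).factorial * r ^ (n + 1) =
      (((n : ℝ) + 1) ^ 2 - ν ^ 2) / (n + 1) ^ 2 *
        (r * (momentFactor ν n / n.factorial * r ^ n)) := by
    rw [momentFactor_succ, Nat.factorial_succ]
    push_cast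
    field_simp
    ring
  rw [hstep, norm_mul, norm_mul r, Real.norm_of_nonneg hr0]
  exact mul_le_of_le_one_left (by positivity) hratio

theorem tendsto_div_rpow {z ν : ℝ} {p q : ℕ → ℝ} (hz : 1 < z)
    (hν : ν * (z - 1) ≤ 2) (hp : IsRpowRecurrence z ν p) (hq : IsRpowRecurrence z ν q)
    (hp0 : p 0 = 1) (hq0 : q 0 = 1)
    (hp1 : p 1 = 1 - ν + (1 + ν) * z) (hq1 : q 1 = 1 + ν + (1 - ν) * z) :
    Tendsto (fun n => p n / q n) atTop (𝓝 (z ^ ν)) := by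
  have hz' : 0 < z - 1 := sub_pos.2 hz
  set r := (√z - 1) ^ 2 / (z - 1)
  have hlim := (tendsto_momentFactor_div_factorial_mul_pow ν (r := r) (by positivity)
    ((div_lt_one hz').2 (sqrt_sub_one_sq_lt hz))).norm.const_mul (|ν| * moment z ν 0)
  rw [norm_zero, mul_zero] at hlim
  refine tendsto_iff_norm_sub_tendsto_zero.2
    (squeeze_zero (fun _ => norm_nonneg _) (fun n => ?_) hlim)
  have hqn : (z - 1) ^ n * n.factorial ≤ q n :=
    hq.pow_mul_factorial_le hz.le hq0.ge (by rw [hq0, hq1]; linarith) n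
  have hq_pos : 0 < q n := lt_of_lt_of_le (by positivity) hqn
  have hmoment := moment_nonneg ν hz.le
  calc ‖p n / q n - z ^ ν‖
      = ‖z ^ ν * q n - p n‖ / q n := by
        rw [div_sub' hq_pos.ne', norm_div, Real.norm_of_nonneg hq_pos.le, norm_sub_rev, mul_comm]
    _ = |ν| * |momentFactor ν n| * moment z ν n / q n := by
        rw [rpow_mul_sub_eq_mul_moment (one_pos.trans hz) hp hq hp0 hq0 hp1 hq1, Real.norm_eq_abs,
          abs_mul, abs_mul, abs_of_nonneg (hmoment n), mul_assoc]
    _ ≤ |ν| * |momentFactor ν n| * (((√z - 1) ^ 2) ^ n * moment z ν 0) /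
          ((z - 1) ^ n * n.factorial) := by
        have := hmoment 0
        gcongr
        exact moment_le ν hz.le n
    _ = |ν| * moment z ν 0 * ‖momentFactor ν n / n.factorial * r ^ n‖ := by
        rw [norm_mul, norm_div, Real.norm_natCast, Real.norm_eq_abs,
          Real.norm_of_nonneg (by positivity), div_pow]
        field_simp

end Convergence

end RpowRecurrence

theorem stmt_12 
    (a b p q : ℕ → ℝ)
    (ha0 : a 0 = 1 / 2)
    (ha1 : a 1 = 5)
    (ha : ∀ n : ℕ, 2 ≤ n → a n = 9 * (2 * (n : ℝ) - 1))
    (hb0 : b 0 = 4)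
    (hb : ∀ n : ℕ, 1 ≤ n → b n = -(9 * (n : ℝ) ^ 2 - 16))
    (hp0 : p 0 = a 0) (hq0 : q 0 = 1)
    (hp1 : p 1 = a 0 * a 1 + b 0) (hq1 : q 1 = a 1)
    (hp : ∀ n : ℕ, p (n + 2) = a (n + 2) * p (n + 1) + b (n + 1) * p n)
    (hq : ∀ n : ℕ, q (n + 2) = a (n + 2) * q (n + 1) + b (n + 1) * q n) :
    Tendsto (fun n => p n / q n) atTop (𝓝 ((2 : ℝ) ^ ((1 : ℝ) / 3))) := by
  have hrec : ∀ x : ℕ → ℝ, (∀ n, x (n + 2) = a (n + 2) * x (n + 1) + b (n + 1) * x n) →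
      IsRpowRecurrence 2 (4 / 3) fun n => x n / 3 ^ n := fun x hx n => by
    simp only [hx, ha (n + 2) (by omega), hb (n + 1) (by omega), pow_succ]
    push_cast
    field_simp
    ring
  have hlim : Tendsto (fun n => 2 * (p n / 3 ^ n) / (q n / 3 ^ n)) atTop (𝓝 (2 ^ (4 / 3 : ℝ))) :=
    RpowRecurrence.tendsto_div_rpow one_lt_two (by norm_num) ((hrec p hp).const_mul 2) (hrec q hq)
      (by norm_num [hp0, ha0]) (by norm_num [hq0])
      (by norm_num [hp1, ha0, ha1, hb0]) (by norm_num [hq1, ha1])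
  have hroot : (2 : ℝ) ^ ((1 : ℝ) / 3) = 2 ^ (4 / 3 : ℝ) / 2 := by
    rw [← Real.rpow_sub_one two_ne_zero]
    norm_num
  rw [hroot]
  exact (hlim.div_const 2).congr fun n => by field_simp
end

section
/- Let G₃ = ∑_{n≥1} χ₋₃(n)/n², where χ₋₃(n) = 1 if n ≡ 1 (mod 3), χ₋₃(n) = −1 if n ≡ 2 (mod 3), and χ₋₃(n) = 0 if n ≡ 0 (mod 3); that is, G₃ = 1 − 1/2² + 1/4² − 1/5² + ⋯. Define a(0) = 3/4 and a(n) = (2n−1)(9n² − 9n + 22) for n ≥ 1, and b(0) = 2/3 and b(n) = −9n⁴(9n² − 1) for n ≥ 1. Then the convergents p(n)/q(n) of the continued fraction with partial quotients (a(n), b(n)) converge to G₃ as n → ∞. -/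
open Filter Topology

/-!
For real `x ≥ 1` let `F n x` be the convergents of
`(2/3) / (a₁ + b₁ / (a₂ + b₂ / ⋯))`, where `aₙ = (2n - 1)(9n² - 9n + 4 + 18x²)` and
`bₙ = -9n⁴(9n² - 1)`, and let `t x = 1 / (3x + 1)² - 1 / (3x + 2)²`. A contiguity operator turns
solutions of the recurrence at `x` into solutions at `x + 1`; comparing Casoratians, it gives
`t x + F n (x + 1) - F n x = t x * W n / (q n x * q n (x + 1))`, where `q n x` is the denominator
of `F n x` and `W n` the normalized Casoratian, which does not depend on `x`. Since
`0 ≤ W n ≤ (9ⁿ n!³)²` and `q n x ≥ 9ⁿ n!³ (n + 1)`, the ratio `W n / (q n x * q n (x + 1))` lies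
between `0` and `1 / (n + 1)²`. Summing over `x, x + 1, x + 2, …`, and using that `F n` vanishes at
infinity, yields `0 ≤ ∑ t (x + j) - F n x ≤ (∑ t (x + j)) / (n + 1)²`. The case `x = 1` is the
series for `G₃` without its first block `t 0 = 3/4`.
-/

noncomputable section

section Continuant

variable {R : Type*} [CommRing R] {a b u v : ℕ → R}

/-- The three-term recurrence satisfied by the numerators and the denominators of the convergents
of `a 0 + b 0 / (a 1 + b 1 / (a 2 + ⋯))`. -/
def IsContinuant (a b u : ℕ → R) : Prop :=
  ∀ n, u (n + 2) = a (n + 2) * u (n + 1) + b (n + 1) * u n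

/-- The solution of the recurrence `IsContinuant a b` with initial values `u₀` and `u₁`. -/
def continuant (a b : ℕ → R) (u₀ u₁ : R) : ℕ → R
  | 0 => u₀
  | 1 => u₁
  | n + 2 => a (n + 2) * continuant a b u₀ u₁ (n + 1) + b (n + 1) * continuant a b u₀ u₁ n

theorem isContinuant_continuant (a b : ℕ → R) (u₀ u₁ : R) :
    IsContinuant a b (continuant a b u₀ u₁) :=
  fun n => by rw [continuant]

namespace IsContinuant

theorem const_mul (hu : IsContinuant a b u) (c : R) : IsContinuant a b fun n => c * u n :=
  fun n => by simp only [hu n]; ring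

theorem add (hu : IsContinuant a b u) (hv : IsContinuant a b v) :
    IsContinuant a b fun n => u n + v n :=
  fun n => by simp only [hu n, hv n]; ring

theorem ext (hu : IsContinuant a b u) (hv : IsContinuant a b v) (h₀ : u 0 = v 0)
    (h₁ : u 1 = v 1) (n : ℕ) : u n = v n := by
  induction n using Nat.twoStepInduction with
  | zero => exact h₀
  | one => exact h₁
  | more n ih ih' => rw [hu n, hv n, ih, ih']

theorem casoratian_eq (hu : IsContinuant a b u) (hv : IsContinuant a b v) (n : ℕ) :
    u (n + 1) * v n - u n * v (n + 1) =
      (∏ i ∈ Finset.range n, -b (i + 1)) * (u 1 * v 0 - u 0 * v 1) := by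
  induction n with
  | zero => simp
  | succ n ih =>
    rw [Finset.prod_range_succ, hu n, hv n]
    linear_combination -b (n + 1) * ih

end IsContinuant

end Continuant

section Recurrence

/-- The `n`-th partial denominator, `1 ≤ n`, of the continued fraction with parameter `x`. -/
def partDen (x : ℝ) (n : ℕ) : ℝ :=
  (2 * (n : ℝ) - 1) * (9 * (n : ℝ) ^ 2 - 9 * (n : ℝ) + 4 + 18 * x ^ 2)

/-- The `n`-th partial numerator, `1 ≤ n`, of the continued fraction; it does not depend on the
parameter. -/
def partNum (n : ℕ) : ℝ :=
  -(9 * (n : ℝ) ^ 4 * (9 * (n : ℝ) ^ 2 - 1))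

/-- The numerators of the convergents of the continued fraction with parameter `x`, integral part
`0` and zeroth partial numerator `2 / 3`. -/
def cfNum (x : ℝ) : ℕ → ℝ :=
  continuant (partDen x) partNum 0 (2 / 3)

/-- The denominators of the convergents of the continued fraction with parameter `x`. -/
def cfDen (x : ℝ) : ℕ → ℝ :=
  continuant (partDen x) partNum 1 (partDen x 1)

theorem isContinuant_cfNum (x : ℝ) : IsContinuant (partDen x) partNum (cfNum x) :=
  isContinuant_continuant _ _ _ _

theorem isContinuant_cfDen (x : ℝ) : IsContinuant (partDen x) partNum (cfDen x) :=
  isContinuant_continuant _ _ _ _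

@[simp] theorem cfNum_zero (x : ℝ) : cfNum x 0 = 0 := rfl

@[simp] theorem cfNum_one (x : ℝ) : cfNum x 1 = 2 / 3 := rfl

@[simp] theorem cfDen_zero (x : ℝ) : cfDen x 0 = 1 := rfl

theorem cfDen_one (x : ℝ) : cfDen x 1 = 4 + 18 * x ^ 2 := by
  simp only [cfDen, continuant, partDen]
  norm_num

/-- The Casoratian of `cfNum x` and `cfDen x`, normalized to be `1` at `n = 0`. -/
def cfCasoratian (n : ℕ) : ℝ :=
  ∏ i ∈ Finset.range n, -partNum (i + 1)

theorem cfNum_succ_mul_cfDen_sub (x : ℝ) (n : ℕ) :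
    cfNum x (n + 1) * cfDen x n - cfNum x n * cfDen x (n + 1) = 2 / 3 * cfCasoratian n := by
  rw [(isContinuant_cfNum x).casoratian_eq (isContinuant_cfDen x)]
  simp only [cfNum_one, cfDen_zero, cfNum_zero, cfCasoratian]
  ring

theorem neg_partNum_nonneg (n : ℕ) : 0 ≤ -partNum (n + 1) := by
  have : 0 ≤ 9 * ((n : ℝ) + 1) ^ 2 - 1 := by nlinarith [n.cast_nonneg (α := ℝ)]
  simp only [partNum, neg_neg, Nat.cast_add_one]
  positivity

theorem cfCasoratian_nonneg (n : ℕ) : 0 ≤ cfCasoratian n :=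
  Finset.prod_nonneg fun i _ => neg_partNum_nonneg i

theorem cfCasoratian_le (n : ℕ) : cfCasoratian n ≤ (9 ^ n * (n.factorial : ℝ) ^ 3) ^ 2 := by
  induction n with
  | zero => simp [cfCasoratian]
  | succ n ih =>
    have neg_partNum_le : -partNum (n + 1) ≤ (9 * ((n : ℝ) + 1) ^ 3) ^ 2 := by
      simp only [partNum, Nat.cast_add_one]
      nlinarith [pow_nonneg (add_nonneg n.cast_nonneg zero_le_one : (0 : ℝ) ≤ n + 1) 4]
    calc cfCasoratian (n + 1) = cfCasoratian n * -partNum (n + 1) := Finset.prod_range_succ _ _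
      _ ≤ (9 ^ n * (n.factorial : ℝ) ^ 3) ^ 2 * (9 * ((n : ℝ) + 1) ^ 3) ^ 2 :=
        mul_le_mul ih neg_partNum_le (neg_partNum_nonneg n) (by positivity)
      _ = (9 ^ (n + 1) * ((n + 1).factorial : ℝ) ^ 3) ^ 2 := by
        rw [Nat.factorial_succ]; push_cast; ring

end Recurrence

section Growth

variable {x : ℝ}

/-- The excess of `u (n + 1)` over its value if `u` grew exactly like `9ⁿ n!³ (n + 1)`, whose
successive quotients are `9(n + 1)²(n + 2)`. -/
def growthExcess (u : ℕ → ℝ) (n : ℕ) : ℝ :=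
  u (n + 1) - 9 * ((n : ℝ) + 1) ^ 2 * ((n : ℝ) + 2) * u n

theorem IsContinuant.add_two_mul_growthExcess_succ {u : ℕ → ℝ}
    (hu : IsContinuant (partDen x) partNum u) (n : ℕ) :
    ((n : ℝ) + 2) * growthExcess u (n + 1) =
      (18 * (2 * (n : ℝ) + 3) * ((n : ℝ) + 2) * (x ^ 2 - 1) + 12 * (n : ℝ) + 16) * u (n + 1) +
        ((n : ℝ) + 1) ^ 2 * (9 * ((n : ℝ) + 1) ^ 2 - 1) * growthExcess u n := by
  simp only [growthExcess, hu n, partDen, partNum]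
  push_cast
  ring

theorem cfDen_pos_and_growthExcess_nonneg (hx : 1 ≤ x) (n : ℕ) :
    0 < cfDen x n ∧ 0 ≤ growthExcess (cfDen x) n := by
  have hx_sq : 0 ≤ x ^ 2 - 1 := by nlinarith
  induction n with
  | zero =>
    rw [growthExcess, cfDen_zero, zero_add, cfDen_one]
    norm_num
    linarith
  | succ n ih =>
    obtain ⟨pos, excess_nonneg⟩ := ih
    have pos_succ : 0 < cfDen x (n + 1) :=
      lt_of_lt_of_le (by positivity) (sub_nonneg.1 excess_nonneg)
    have coeff_nonneg : 0 ≤ 9 * ((n : ℝ) + 1) ^ 2 - 1 := by nlinarith [n.cast_nonneg (α := ℝ)]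
    refine ⟨pos_succ, nonneg_of_mul_nonneg_right (a := (n : ℝ) + 2) ?_ (by positivity)⟩
    rw [(isContinuant_cfDen x).add_two_mul_growthExcess_succ]
    positivity

theorem cfDen_pos (hx : 1 ≤ x) (n : ℕ) : 0 < cfDen x n :=
  (cfDen_pos_and_growthExcess_nonneg hx n).1

theorem mul_cfDen_le_cfDen_succ (hx : 1 ≤ x) (n : ℕ) :
    9 * ((n : ℝ) + 1) ^ 2 * ((n : ℝ) + 2) * cfDen x n ≤ cfDen x (n + 1) :=
  sub_nonneg.1 (cfDen_pos_and_growthExcess_nonneg hx n).2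

theorem factorial_mul_le_cfDen (hx : 1 ≤ x) (n : ℕ) :
    9 ^ n * (n.factorial : ℝ) ^ 3 * ((n : ℝ) + 1) ≤ cfDen x n := by
  induction n with
  | zero => simp
  | succ n ih =>
    calc 9 ^ (n + 1) * ((n + 1).factorial : ℝ) ^ 3 * (((n + 1 : ℕ) : ℝ) + 1)
        = 9 * ((n : ℝ) + 1) ^ 2 * ((n : ℝ) + 2) *
            (9 ^ n * (n.factorial : ℝ) ^ 3 * ((n : ℝ) + 1)) := by
          rw [Nat.factorial_succ]; push_cast; ring
      _ ≤ 9 * ((n : ℝ) + 1) ^ 2 * ((n : ℝ) + 2) * cfDen x n := by gcongr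
      _ ≤ cfDen x (n + 1) := mul_cfDen_le_cfDen_succ hx n

theorem monotone_cfDen (hx : 1 ≤ x) : Monotone (cfDen x) := by
  refine monotone_nat_of_le_succ fun n => le_trans ?_ (mul_cfDen_le_cfDen_succ hx n)
  have one_le : 1 ≤ 9 * ((n : ℝ) + 1) ^ 2 * ((n : ℝ) + 2) := by
    nlinarith [n.cast_nonneg (α := ℝ), pow_nonneg (n.cast_nonneg (α := ℝ)) 3]
  exact le_mul_of_one_le_left (cfDen_pos hx n).le one_le

theorem one_le_cfDen (hx : 1 ≤ x) (n : ℕ) : 1 ≤ cfDen x n :=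
  monotone_cfDen hx n.zero_le

theorem le_cfDen_succ (hx : 1 ≤ x) (n : ℕ) : x ≤ cfDen x (n + 1) :=
  calc x ≤ cfDen x 1 := by rw [cfDen_one]; nlinarith
    _ ≤ cfDen x (n + 1) := monotone_cfDen hx (by omega)

theorem cfCasoratian_div_nonneg {y : ℝ} (hx : 1 ≤ x) (hy : 1 ≤ y) (n : ℕ) :
    0 ≤ cfCasoratian n / (cfDen x n * cfDen y n) :=
  div_nonneg (cfCasoratian_nonneg n) (mul_pos (cfDen_pos hx n) (cfDen_pos hy n)).le

theorem cfCasoratian_div_le {y : ℝ} (hx : 1 ≤ x) (hy : 1 ≤ y) (n : ℕ) :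
    cfCasoratian n / (cfDen x n * cfDen y n) ≤ 1 / ((n : ℝ) + 1) ^ 2 := by
  have hxy : 0 < cfDen x n * cfDen y n := mul_pos (cfDen_pos hx n) (cfDen_pos hy n)
  rw [div_le_div_iff₀ hxy (by positivity), one_mul]
  calc cfCasoratian n * ((n : ℝ) + 1) ^ 2
      ≤ (9 ^ n * (n.factorial : ℝ) ^ 3) ^ 2 * ((n : ℝ) + 1) ^ 2 := by
        gcongr; exact cfCasoratian_le n
    _ = 9 ^ n * (n.factorial : ℝ) ^ 3 * ((n : ℝ) + 1) *
          (9 ^ n * (n.factorial : ℝ) ^ 3 * ((n : ℝ) + 1)) := by ring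
    _ ≤ cfDen x n * cfDen y n :=
        mul_le_mul (factorial_mul_le_cfDen hx n) (factorial_mul_le_cfDen hy n) (by positivity)
          (cfDen_pos hx n).le

theorem cfNum_div_cfDen_eq_sum (hx : 1 ≤ x) (n : ℕ) :
    cfNum x n / cfDen x n =
      ∑ i ∈ Finset.range n, 2 / 3 * cfCasoratian i / (cfDen x (i + 1) * cfDen x i) := by
  have step (i : ℕ) : cfNum x (i + 1) / cfDen x (i + 1) - cfNum x i / cfDen x i =
      2 / 3 * cfCasoratian i / (cfDen x (i + 1) * cfDen x i) := by
    rw [div_sub_div _ _ (cfDen_pos hx _).ne' (cfDen_pos hx _).ne', ← cfNum_succ_mul_cfDen_sub x i]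
    ring
  rw [← Finset.sum_congr rfl fun i _ => step i,
    Finset.sum_range_sub (fun i => cfNum x i / cfDen x i), cfNum_zero, zero_div, sub_zero]

theorem tendsto_cfNum_div_cfDen_atTop (n : ℕ) :
    Tendsto (fun x => cfNum x n / cfDen x n) atTop (𝓝 0) := by
  have term_tendsto (i : ℕ) :
      Tendsto (fun x => 2 / 3 * cfCasoratian i / (cfDen x (i + 1) * cfDen x i)) atTop (𝓝 0) := by
    refine Tendsto.const_div_atTop (tendsto_atTop_mono' _ ?_ tendsto_id) _
    filter_upwards [eventually_ge_atTop 1] with x hx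
    calc x ≤ cfDen x (i + 1) := le_cfDen_succ hx i
      _ ≤ cfDen x (i + 1) * cfDen x i :=
        le_mul_of_one_le_right (cfDen_pos hx _).le (one_le_cfDen hx i)
  have sum_tendsto := tendsto_finsetSum (Finset.range n) fun i _ => term_tendsto i
  rw [Finset.sum_const_zero] at sum_tendsto
  refine sum_tendsto.congr' ?_
  filter_upwards [eventually_ge_atTop 1] with x hx
  exact (cfNum_div_cfDen_eq_sum hx n).symm

end Growth

section Contiguity

variable {x : ℝ}

/-- The contiguity operator: it maps solutions of the recurrence with parameter `x` to solutions
of the recurrence with parameter `x + 1`. -/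
def shiftParam (x : ℝ) (u : ℕ → ℝ) (n : ℕ) : ℝ :=
  (((3 * x + 1) * (3 * x + 2)) ^ 2 +
      ((3 * x + 1) * (3 * x + 2) - 9 * (2 * x + 1) * ((n : ℝ) + 1)) ^ 2) * u n +
    9 * (2 * x + 1) * (u (n + 1) - 9 * ((n : ℝ) + 1) ^ 3 * u n)

theorem isContinuant_shiftParam {u : ℕ → ℝ} (hu : IsContinuant (partDen x) partNum u) :
    IsContinuant (partDen (x + 1)) partNum (shiftParam x u) := by
  intro n
  simp only [shiftParam, hu (n + 1), hu n, partDen, partNum]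
  push_cast
  ring

/-- The sum of `χ₋₃(m) / m²` over the block `m = 3x + 1, 3x + 2, 3x + 3`, extended to real `x`. -/
def chiBlock (x : ℝ) : ℝ :=
  1 / (3 * x + 1) ^ 2 - 1 / (3 * x + 2) ^ 2

theorem chiBlock_eq (hx : 0 ≤ x) :
    chiBlock x = 3 * (2 * x + 1) / ((3 * x + 1) * (3 * x + 2)) ^ 2 := by
  rw [chiBlock, div_sub_div _ _ (by positivity) (by positivity)]
  ring

theorem shiftParam_cfDen (x : ℝ) (n : ℕ) :
    shiftParam x (cfDen x) n = 2 * ((3 * x + 1) * (3 * x + 2)) ^ 2 * cfDen (x + 1) n := by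
  refine (isContinuant_shiftParam (isContinuant_cfDen x)).ext
    ((isContinuant_cfDen (x + 1)).const_mul _) ?_ ?_ n
  · simp only [shiftParam, zero_add, cfDen_zero, cfDen_one]
    push_cast
    ring
  · simp only [shiftParam, isContinuant_cfDen x 0, zero_add, cfDen_zero, cfDen_one, partDen,
      partNum]
    push_cast
    ring

theorem shiftParam_cfNum (hx : 0 ≤ x) (n : ℕ) :
    shiftParam x (cfNum x) n = 2 * ((3 * x + 1) * (3 * x + 2)) ^ 2 *
      (cfNum (x + 1) n + chiBlock x * cfDen (x + 1) n) := by
  have hblock : ((3 * x + 1) * (3 * x + 2)) ^ 2 * chiBlock x = 3 * (2 * x + 1) := by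
    rw [chiBlock_eq hx]
    exact mul_div_cancel₀ _ (by positivity)
  refine (isContinuant_shiftParam (isContinuant_cfNum x)).ext
    (((isContinuant_cfNum (x + 1)).add
      ((isContinuant_cfDen (x + 1)).const_mul _)).const_mul _) ?_ ?_ n
  · simp only [shiftParam, zero_add, cfNum_zero, cfNum_one, cfDen_zero]
    push_cast
    linear_combination -2 * hblock
  · simp only [shiftParam, isContinuant_cfNum x 0, zero_add, cfNum_zero, cfNum_one, cfDen_one,
      partDen, partNum]
    push_cast
    linear_combination -2 * (4 + 18 * (x + 1) ^ 2) * hblock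

theorem chiBlock_add_cfNum_div_cfDen_sub (hx : 1 ≤ x) (n : ℕ) :
    chiBlock x + cfNum (x + 1) n / cfDen (x + 1) n - cfNum x n / cfDen x n =
      chiBlock x * (cfCasoratian n / (cfDen x n * cfDen (x + 1) n)) := by
  have hden := cfDen_pos hx n
  have hden' := cfDen_pos (x := x + 1) (by linarith) n
  have casoratian_shiftParam : shiftParam x (cfNum x) n * cfDen x n -
      cfNum x n * shiftParam x (cfDen x) n = 6 * (2 * x + 1) * cfCasoratian n := by
    simp only [shiftParam]
    linear_combination 9 * (2 * x + 1) * cfNum_succ_mul_cfDen_sub x n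
  rw [shiftParam_cfNum (by linarith), shiftParam_cfDen, chiBlock_eq (by linarith)]
    at casoratian_shiftParam
  rw [chiBlock_eq (by linarith)]
  field_simp at casoratian_shiftParam ⊢
  linear_combination casoratian_shiftParam / 2

end Contiguity

section Convergence

variable {x : ℝ}

theorem summable_one_div_nat_succ_sq : Summable fun n : ℕ => 1 / ((n + 1 : ℕ) : ℝ) ^ 2 :=
  (summable_nat_add_iff 1).2 (Real.summable_one_div_nat_pow.2 one_lt_two)

theorem chiBlock_nonneg (hx : 0 ≤ x) : 0 ≤ chiBlock x := by
  rw [chiBlock_eq hx]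
  positivity

theorem summable_chiBlock (hx : 0 ≤ x) : Summable fun j : ℕ => chiBlock (x + j) := by
  refine summable_one_div_nat_succ_sq.of_nonneg_of_le
    (fun j => chiBlock_nonneg (by positivity)) fun j => ?_
  calc chiBlock (x + j) ≤ 1 / (3 * (x + j) + 1) ^ 2 := sub_le_self _ (by positivity)
    _ ≤ 1 / ((j + 1 : ℕ) : ℝ) ^ 2 := by
      gcongr
      push_cast
      linarith [j.cast_nonneg (α := ℝ)]

theorem hasSum_chiBlock_mul_cfCasoratian_div (hx : 1 ≤ x) (n : ℕ) :
    HasSum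
      (fun j : ℕ => chiBlock (x + j) *
        (cfCasoratian n / (cfDen (x + j) n * cfDen (x + j + 1) n)))
      (∑' j : ℕ, chiBlock (x + j) - cfNum x n / cfDen x n) := by
  have one_le (j : ℕ) : 1 ≤ x + j := le_add_of_le_of_nonneg hx j.cast_nonneg
  let F (j : ℕ) : ℝ := cfNum (x + j) n / cfDen (x + j) n
  have term_eq (j : ℕ) : chiBlock (x + j) *
      (cfCasoratian n / (cfDen (x + j) n * cfDen (x + j + 1) n)) =
        chiBlock (x + j) + (F (j + 1) - F j) := by
    rw [← chiBlock_add_cfNum_div_cfDen_sub (one_le j), add_sub_assoc]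
    simp only [F, Nat.cast_add_one, add_assoc]
  have tendsto_F : Tendsto F atTop (𝓝 0) :=
    (tendsto_cfNum_div_cfDen_atTop n).comp
      (tendsto_atTop_add_const_left _ x tendsto_natCast_atTop_atTop)
  have F_zero : F 0 = cfNum x n / cfDen x n := by simp only [F, Nat.cast_zero, add_zero]
  rw [hasSum_iff_tendsto_nat_of_nonneg]
  · simp only [term_eq, Finset.sum_add_distrib, Finset.sum_range_sub, F_zero]
    simpa only [zero_sub, ← sub_eq_add_neg] using
      (summable_chiBlock (by linarith)).hasSum.tendsto_sum_nat.add (tendsto_F.sub_const _)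
  · exact fun j => mul_nonneg (chiBlock_nonneg (by linarith [one_le j]))
      (cfCasoratian_div_nonneg (one_le j) (by linarith [one_le j]) n)

theorem tsum_chiBlock_sub_cfNum_div_cfDen_mem_Icc (hx : 1 ≤ x) (n : ℕ) :
    ∑' j : ℕ, chiBlock (x + j) - cfNum x n / cfDen x n ∈
      Set.Icc 0 ((∑' j : ℕ, chiBlock (x + j)) * (1 / ((n : ℝ) + 1) ^ 2)) := by
  have one_le (j : ℕ) : 1 ≤ x + j := le_add_of_le_of_nonneg hx j.cast_nonneg
  have hasSum_error := hasSum_chiBlock_mul_cfCasoratian_div hx n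
  have hasSum_bound := (summable_chiBlock (by linarith : 0 ≤ x)).hasSum.mul_right
    (1 / ((n : ℝ) + 1) ^ 2)
  have term_nonneg (j : ℕ) : 0 ≤ chiBlock (x + j) := chiBlock_nonneg (by linarith [one_le j])
  refine ⟨hasSum_error.nonneg fun j => ?_, hasSum_le (fun j => ?_) hasSum_error hasSum_bound⟩
  · exact mul_nonneg (term_nonneg j)
      (cfCasoratian_div_nonneg (one_le j) (by linarith [one_le j]) n)
  · exact mul_le_mul_of_nonneg_left
      (cfCasoratian_div_le (one_le j) (by linarith [one_le j]) n) (term_nonneg j)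

theorem tendsto_cfNum_div_cfDen (hx : 1 ≤ x) :
    Tendsto (fun n => cfNum x n / cfDen x n) atTop (𝓝 (∑' j : ℕ, chiBlock (x + j))) := by
  have bound_tendsto : Tendsto
      (fun n : ℕ => (∑' j : ℕ, chiBlock (x + j)) * (1 / ((n : ℝ) + 1) ^ 2)) atTop (𝓝 0) := by
    simpa [div_pow] using (tendsto_one_div_add_atTop_nhds_zero_nat (𝕜 := ℝ)).pow 2 |>.const_mul
      (∑' j : ℕ, chiBlock (x + j))
  have error_tendsto := squeeze_zero
    (fun n => (tsum_chiBlock_sub_cfNum_div_cfDen_mem_Icc hx n).1)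
    (fun n => (tsum_chiBlock_sub_cfNum_div_cfDen_mem_Icc hx n).2) bound_tendsto
  simpa only [sub_sub_cancel, sub_zero] using error_tendsto.const_sub (∑' j : ℕ, chiBlock (x + j))

end Convergence

section Series

/-- The `n`-th term, `n ≥ 0`, of the series for `G₃`, that is `χ₋₃(n + 1) / (n + 1)²`. -/
def chiTerm (n : ℕ) : ℝ :=
  (if (n + 1) % 3 = 1 then (1 : ℝ) else if (n + 1) % 3 = 2 then -1 else 0) / ((n : ℝ) + 1) ^ 2

theorem summable_chiTerm : Summable chiTerm := by
  refine summable_one_div_nat_succ_sq.of_norm_bounded fun n => ?_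
  rw [chiTerm, norm_div, norm_pow, ← Nat.cast_add_one, Real.norm_natCast]
  gcongr
  split_ifs <;> simp

theorem tsum_chiTerm_eq_tsum_chiBlock : ∑' n, chiTerm n = ∑' j : ℕ, chiBlock j := by
  have residue_zero (m : ℕ) : chiTerm (0 + 3 * m) = 1 / (3 * (m : ℝ) + 1) ^ 2 := by
    rw [chiTerm, if_pos (by omega)]
    push_cast
    ring
  have residue_one (m : ℕ) : chiTerm (1 + 3 * m) = -(1 / (3 * (m : ℝ) + 2) ^ 2) := by
    rw [chiTerm, if_neg (by omega), if_pos (by omega)]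
    push_cast
    ring
  have residue_two (m : ℕ) : chiTerm (2 + 3 * m) = 0 := by
    rw [chiTerm, if_neg (by omega), if_neg (by omega), zero_div]
  have summable_residue (r : ℕ) : Summable fun m => chiTerm (r + 3 * m) :=
    summable_chiTerm.comp_injective fun m m' h => by simpa using h
  calc ∑' n, chiTerm n
      = ∑' m, chiTerm (0 + 3 * m) + ∑' m, chiTerm (1 + 3 * m) + ∑' m, chiTerm (2 + 3 * m) := by
        rw [Nat.sumByResidueClasses summable_chiTerm 3]
        exact Fin.sum_univ_three _
    _ = ∑' j : ℕ, chiBlock j := by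
        rw [← (summable_residue 0).tsum_add (summable_residue 1)]
        simp only [residue_zero, residue_one, residue_two, tsum_zero, add_zero, ← sub_eq_add_neg,
          chiBlock]

theorem tsum_chiTerm : ∑' n, chiTerm n = 3 / 4 + ∑' j : ℕ, chiBlock (1 + j) := by
  have summable_chiBlock_natCast : Summable fun j : ℕ => chiBlock j := by
    simpa only [zero_add] using summable_chiBlock le_rfl
  rw [tsum_chiTerm_eq_tsum_chiBlock, summable_chiBlock_natCast.tsum_eq_zero_add]
  congr 1
  · norm_num [chiBlock]
  · simp only [Nat.cast_add_one, add_comm]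

end Series

end

theorem stmt_13_general {x : ℝ} (hx : 1 ≤ x)
    (a b p q : ℕ → ℝ)
    (ha : ∀ n : ℕ, 1 ≤ n →
      a n = (2 * (n : ℝ) - 1) * (9 * (n : ℝ) ^ 2 - 9 * (n : ℝ) + 4 + 18 * x ^ 2))
    (hb0 : b 0 = 2 / 3)
    (hb : ∀ n : ℕ, 1 ≤ n → b n = -(9 * (n : ℝ) ^ 4 * (9 * (n : ℝ) ^ 2 - 1)))
    (hp0 : p 0 = a 0) (hq0 : q 0 = 1)
    (hp1 : p 1 = a 0 * a 1 + b 0) (hq1 : q 1 = a 1)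
    (hp : ∀ n : ℕ, p (n + 2) = a (n + 2) * p (n + 1) + b (n + 1) * p n)
    (hq : ∀ n : ℕ, q (n + 2) = a (n + 2) * q (n + 1) + b (n + 1) * q n) :
    Tendsto (fun n => p n / q n) atTop (𝓝 (a 0 + ∑' j : ℕ, chiBlock (x + j))) := by
  have isContinuant_of_rec {u : ℕ → ℝ} (hu : IsContinuant a b u) :
      IsContinuant (partDen x) partNum u := fun n => by
    rw [hu n, ha (n + 2) (by omega), hb (n + 1) (by omega), partDen, partNum]
  have ha1 : a 1 = partDen x 1 := ha 1 le_rfl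
  have den_eq : ∀ n, q n = cfDen x n :=
    (isContinuant_of_rec hq).ext (isContinuant_cfDen x) hq0 (hq1.trans ha1)
  have num_eq : ∀ n, p n = a 0 * cfDen x n + cfNum x n := by
    refine (isContinuant_of_rec hp).ext
      (((isContinuant_cfDen x).const_mul (a 0)).add (isContinuant_cfNum x)) ?_ ?_
    · rw [hp0, cfDen_zero, cfNum_zero, mul_one, add_zero]
    · rw [hp1, ha1, hb0]; rfl
  refine ((tendsto_cfNum_div_cfDen hx).const_add (a 0)).congr fun n => ?_
  rw [num_eq, den_eq, add_div, mul_div_cancel_right₀ _ (cfDen_pos hx n).ne']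

theorem stmt_13 
    (a b p q : ℕ → ℝ)
    (ha0 : a 0 = 3 / 4)
    (ha : ∀ n : ℕ, 1 ≤ n → a n = (2 * (n : ℝ) - 1) * (9 * (n : ℝ) ^ 2 - 9 * (n : ℝ) + 22))
    (hb0 : b 0 = 2 / 3)
    (hb : ∀ n : ℕ, 1 ≤ n → b n = -(9 * (n : ℝ) ^ 4 * (9 * (n : ℝ) ^ 2 - 1)))
    (hp0 : p 0 = a 0) (hq0 : q 0 = 1)
    (hp1 : p 1 = a 0 * a 1 + b 0) (hq1 : q 1 = a 1)
    (hp : ∀ n : ℕ, p (n + 2) = a (n + 2) * p (n + 1) + b (n + 1) * p n)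
    (hq : ∀ n : ℕ, q (n + 2) = a (n + 2) * q (n + 1) + b (n + 1) * q n) :
    Tendsto (fun n => p n / q n) atTop (𝓝 (∑' n : ℕ, (if (n + 1) % 3 = 1 then (1 : ℝ) else if (n + 1) % 3 = 2 then -1 else 0) / ((n : ℝ) + 1) ^ 2)) := by
  have general := stmt_13_general le_rfl a b p q (fun n hn => by rw [ha n hn]; ring) hb0 hb hp0 hq0
    hp1 hq1 hp hq
  rwa [ha0, ← tsum_chiTerm] at general
end

section
/- Define a(0) = 0 and a(n) = 3(2n−1)(3n² − 3n + 1)(15n² − 15n + 4) for n ≥ 1, and b(0) = 13 and b(n) = 3n⁸(9n² − 1) for n ≥ 1. Then the convergents p(n)/q(n) of the continued fraction with partial quotients (a(n), b(n)) converge to ζ(4) = π⁴/90 as n → ∞. (This continued fraction was discovered by G. Rhin and the author in 1980.) -/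
open Filter Topology

/-!
Let `R n t` be the very-well-poised rational function `wellPoised n t`, and let `I n = -∑ (R n)' k`,
summed over the integers `k ≥ 1`. Creative telescoping provides a rational function `S` such that
the combination of `R n`, `R (n + 1)`, `R (n + 2)` prescribed by the recurrence of the continued
fraction equals `S (t + 1) - S t`. Differentiating in `t` and summing over `k` leaves only `-S' 1`,
which vanishes because `S` has a double zero at `1`. Hence `n! ^ 5 * I n` satisfies the recurrence
of `p` and `q`. Since `I 0 = 6 ζ(4)` and `I 1 = 72 ζ(4) - 78`, comparing initial values gives
`q n * ζ(4) - p n = n! ^ 5 * I n / 6`. Finally `I n = O(n)`, because `R n` has double zeros at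
`1, …, n`, while beyond them `|R n t| ≤ 2 / t ^ 3` and its logarithmic derivative is `O(n)`; on the
other hand the recurrence forces `q n ≥ n! ^ 5 * 2 ^ n`.
-/

noncomputable section

open Polynomial

lemma deriv_sq_mul_eq_zero {𝕜 : Type*} [NontriviallyNormedField 𝕜] {f g : 𝕜 → 𝕜} {x : 𝕜}
    (hf : DifferentiableAt 𝕜 f x) (hg : DifferentiableAt 𝕜 g x) (hx : f x = 0) :
    deriv (fun y ↦ f y ^ 2 * g y) x = 0 := by
  rw [deriv_fun_mul (hf.fun_pow 2) hg, deriv_fun_pow hf]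
  simp [hx]

lemma tendsto_deriv_eval_div_eval_atTop {P Q : ℝ[X]} (h : P.degree ≤ Q.degree) :
    Tendsto (deriv fun t ↦ P.eval t / Q.eval t) atTop (𝓝 0) := by
  rcases eq_or_ne Q 0 with rfl | hQ
  · simp
  have hdeg : (derivative P * Q - P * derivative Q).degree < (Q ^ 2).degree := by
    rw [sq, degree_mul]
    have hQ' := degree_derivative_lt hQ
    have hQbot : Q.degree ≠ ⊥ := degree_ne_bot.2 hQ
    refine (degree_sub_le _ _).trans_lt (max_lt ?_ ?_)
    · rcases eq_or_ne P 0 with rfl | hP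
      · simp [bot_lt_iff_ne_bot, hQ]
      · rw [degree_mul]
        exact WithBot.add_lt_add_right hQbot ((degree_derivative_lt hP).trans_le h)
    · rw [degree_mul]
      exact (add_le_add_left h _).trans_lt (WithBot.add_lt_add_left hQbot hQ')
  refine (div_tendsto_atTop_zero_of_degree_lt _ _ hdeg).congr' ?_
  have hroot : ∀ᶠ t in atTop, Q.eval t ≠ 0 := eventually_atTop_not_isRoot Q hQ
  filter_upwards [hroot] with t ht
  simp [deriv_fun_div P.differentiableAt Q.differentiableAt ht]

lemma eq_neg_deriv_one_of_hasSum_telescoping {S f : ℝ → ℝ} {f' : ℕ → ℝ} {s : ℝ}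
    (hlim : Tendsto (deriv S) atTop (𝓝 0)) (hS : ∀ t, 0 < t → DifferentiableAt ℝ S t)
    (hf : ∀ t, 0 < t → f t = S (t + 1) - S t)
    (hf' : ∀ k : ℕ, HasDerivAt f (f' k) (k + 1)) (hsum : HasSum f' s) :
    s = -deriv S 1 := by
  have hterm (k : ℕ) : f' k = deriv S ((k + 1 : ℕ) + 1) - deriv S (k + 1) := by
    have hk : (0 : ℝ) < k + 1 := by positivity
    have hshift : HasDerivAt (fun t ↦ S (t + 1)) (deriv S (k + 1 + 1)) ((k : ℝ) + 1) :=
      (hS _ (by positivity)).hasDerivAt.comp_add_const _ _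
    have hdiff := (hshift.fun_sub (hS _ hk).hasDerivAt).congr_of_eventuallyEq
      ((eventually_gt_nhds hk).mono hf)
    simpa using (hf' k).unique hdiff
  have hpartial (n : ℕ) : ∑ k ∈ Finset.range n, f' k = deriv S (n + 1) - deriv S 1 := by
    simpa [hterm] using Finset.sum_range_sub (fun k : ℕ ↦ deriv S (k + 1)) n
  have hatTop : Tendsto (fun n : ℕ ↦ (n : ℝ) + 1) atTop atTop :=
    tendsto_atTop_add_const_right _ _ tendsto_natCast_atTop_atTop
  refine tendsto_nhds_unique hsum.tendsto_sum_nat ?_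
  simpa [hpartial] using (hlim.comp hatTop).sub_const (deriv S 1)

lemma tendsto_div_of_sub_mul_div_tendsto_zero {p q d : ℕ → ℝ} {L : ℝ} (hd : ∀ n, 0 < d n)
    (hdq : ∀ n, d n ≤ q n) (h : Tendsto (fun n ↦ (p n - q n * L) / d n) atTop (𝓝 0)) :
    Tendsto (fun n ↦ p n / q n) atTop (𝓝 L) := by
  refine tendsto_iff_norm_sub_tendsto_zero.2 <| squeeze_zero (fun _ ↦ norm_nonneg _) (fun n ↦ ?_)
    (tendsto_zero_iff_norm_tendsto_zero.1 h)
  have hqn : 0 < q n := (hd n).trans_le (hdq n)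
  calc ‖p n / q n - L‖ = ‖p n - q n * L‖ / q n := by
        rw [div_sub' hqn.ne', norm_div, Real.norm_of_nonneg hqn.le]
    _ ≤ ‖p n - q n * L‖ / d n := by
        gcongr
        · exact hd n
        · exact hdq n
    _ = ‖(p n - q n * L) / d n‖ := by rw [norm_div, Real.norm_of_nonneg (hd n).le]

lemma summable_one_div_nat_succ_pow_three : Summable fun k : ℕ ↦ 1 / ((k : ℝ) + 1) ^ 3 := by
  simpa using (summable_nat_add_iff 1).2 (Real.summable_one_div_nat_pow.2 (by norm_num : 1 < 3))

/-- The sequence `u` satisfies `u (n + 1) = a (n + 1) * u n + b n * u (n - 1)` for `n ≥ 1`, the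
recurrence of the numerators and denominators of the continued fraction
`a 0 + b 0 / (a 1 + b 1 / (a 2 + ⋯))`; it is shifted by one to avoid natural subtraction. -/
def ThreeTermRecurrence {R : Type*} [Mul R] [Add R] (a b u : ℕ → R) : Prop :=
  ∀ n, u (n + 2) = a (n + 2) * u (n + 1) + b (n + 1) * u n

namespace ThreeTermRecurrence

section CommRing

variable {R : Type*} [CommRing R] {a b u v : ℕ → R}

lemma sub (hu : ThreeTermRecurrence a b u) (hv : ThreeTermRecurrence a b v) :
    ThreeTermRecurrence a b (fun n ↦ u n - v n) := fun n ↦ by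
  linear_combination hu n - hv n

lemma mul_const (hu : ThreeTermRecurrence a b u) (c : R) :
    ThreeTermRecurrence a b (fun n ↦ u n * c) := fun n ↦ by
  linear_combination c * hu n

end CommRing

lemma eq_of_initial_eq {R : Type*} [Mul R] [Add R] {a b u v : ℕ → R}
    (hu : ThreeTermRecurrence a b u) (hv : ThreeTermRecurrence a b v)
    (h0 : u 0 = v 0) (h1 : u 1 = v 1) (n : ℕ) : u n = v n := by
  induction n using Nat.twoStepInduction with
  | zero => exact h0
  | one => exact h1
  | more n ihn ihn1 => rw [hu n, hv n, ihn, ihn1]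

lemma le_of_subsolution {R : Type*} [Semiring R] [PartialOrder R] [IsOrderedRing R]
    {a b u v : ℕ → R} (hu : ThreeTermRecurrence a b u)
    (ha : ∀ n, 0 ≤ a (n + 2)) (hb : ∀ n, 0 ≤ b (n + 1))
    (hv : ∀ n, v (n + 2) ≤ a (n + 2) * v (n + 1) + b (n + 1) * v n)
    (h0 : v 0 ≤ u 0) (h1 : v 1 ≤ u 1) (n : ℕ) : v n ≤ u n := by
  induction n using Nat.twoStepInduction with
  | zero => exact h0
  | one => exact h1
  | more n ihn ihn1 =>
    rw [hu n]
    exact (hv n).trans (add_le_add (mul_le_mul_of_nonneg_left ihn1 (ha n))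
      (mul_le_mul_of_nonneg_left ihn (hb n)))

end ThreeTermRecurrence

lemma ascPochhammer_succ_eval_left {R : Type*} [CommSemiring R] (n : ℕ) (t : R) :
    (ascPochhammer R (n + 1)).eval t = t * (ascPochhammer R n).eval (t + 1) := by
  simp [ascPochhammer_succ_left, eval_comp]

lemma descPochhammer_succ_eval_left {R : Type*} [CommRing R] (n : ℕ) (t : R) :
    (descPochhammer R (n + 1)).eval t = t * (descPochhammer R n).eval (t - 1) := by
  simp [descPochhammer_succ_left, eval_comp]

lemma ascPochhammer_eval_eq_prod_range {R : Type*} [CommSemiring R] (n : ℕ) (t : R) :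
    (ascPochhammer R n).eval t = ∏ j ∈ Finset.range n, (t + j) := by
  induction n with
  | zero => simp
  | succ n ih => rw [ascPochhammer_succ_eval, Finset.prod_range_succ, ih]

lemma descPochhammer_mul_ascPochhammer_le (n : ℕ) {t : ℝ} (ht : n ≤ t) :
    (descPochhammer ℝ n).eval (t - 1) * (ascPochhammer ℝ n).eval (t + (n + 1)) ≤
      (ascPochhammer ℝ n).eval t * (ascPochhammer ℝ n).eval (t + 1) := by
  have hreflect : (ascPochhammer ℝ n).eval (t + 1) = (descPochhammer ℝ n).eval (t + n) := by
    rw [descPochhammer_eval_eq_ascPochhammer, add_sub_cancel_right]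
  simp only [hreflect, ascPochhammer_eval_eq_prod_range, descPochhammer_eval_eq_prod_range,
    ← Finset.prod_mul_distrib]
  refine Finset.prod_le_prod (fun j hj ↦ ?_) fun j hj ↦ ?_
  all_goals have hjn : (j : ℝ) + 1 ≤ n := mod_cast Finset.mem_range.1 hj
  · exact mul_nonneg (by linarith) (by linarith)
  · nlinarith [j.cast_nonneg (α := ℝ)]

lemma abs_logDeriv_ascPochhammer_eval_le (n : ℕ) {t : ℝ} (ht : 0 < t) :
    |logDeriv (ascPochhammer ℝ n).eval t| ≤ n / t := by
  induction n with
  | zero => simp [logDeriv_apply]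
  | succ n ih =>
    have hsucc : (ascPochhammer ℝ (n + 1)).eval =
        fun s ↦ (ascPochhammer ℝ n).eval s * (s + n) :=
      funext fun s ↦ ascPochhammer_succ_eval n s
    rw [hsucc, logDeriv_mul t (ascPochhammer_pos n t ht).ne' (by positivity) (by fun_prop)
      (by fun_prop)]
    have hlin : |logDeriv (fun s : ℝ ↦ s + n) t| ≤ 1 / t := by
      rw [logDeriv_apply, deriv_add_const, deriv_id'', abs_of_nonneg (by positivity)]
      gcongr
      simp
    calc _ ≤ n / t + 1 / t := (abs_add_le _ _).trans (add_le_add ih hlin)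
      _ = _ := by push_cast; ring

/-- The partial denominator `a n` of the continued fraction for `n ≥ 1`, at `x = n`. -/
def partialDenom (x : ℝ) : ℝ :=
  3 * (2 * x - 1) * (3 * x ^ 2 - 3 * x + 1) * (15 * x ^ 2 - 15 * x + 4)

/-- The partial numerator `b n` of the continued fraction for `n ≥ 1`, divided by `n ^ 5`, at
`x = n`. The power `n ^ 5` is absorbed by the factor `n! ^ 5` multiplying `zetaFourForm n`. -/
def reducedPartialNum (x : ℝ) : ℝ := 3 * x ^ 3 * (9 * x ^ 2 - 1)

/-- The very-well-poised rational function
`(-1) ^ n (2 * t + n) ((t - 1)⋯(t - n) (t + n + 1)⋯(t + 2 * n)) ^ 2 / (t (t + 1)⋯(t + n)) ^ 4`.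
The product `(t + n + 1)⋯(t + 2 * n)` is encoded as a quotient of two rising factorials. -/
def wellPoised (n : ℕ) (t : ℝ) : ℝ :=
  (-1) ^ n * (2 * t + n) * (descPochhammer ℝ n).eval (t - 1) ^ 2 *
    (ascPochhammer ℝ (2 * n + 1)).eval t ^ 2 / (ascPochhammer ℝ (n + 1)).eval t ^ 6

/-- The polynomial factor of the telescoping certificate for `wellPoised`, where `x` is the index of
the middle term of the recurrence. Powers of `t + 2 * x` keep the coefficients small. -/
def certificatePoly (x : ℝ) : ℝ[X] :=
  C (-3 * x ^ 7 * (3 * x + 1) * (x ^ 2 + 7))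
  + C (6 * x ^ 6 * (3 * x + 1) * (3 * x ^ 2 + 7 * x + 8)) * (X + C (2 * x))
  + C (-198 * x ^ 8 - 354 * x ^ 7 + 144 * x ^ 6 + 171 * x ^ 5 - 6 * x ^ 4 - 18 * x ^ 3
      - 25 * x ^ 2 - 20 * x - 4) * (X + C (2 * x)) ^ 2
  + C (324 * x ^ 7 - 372 * x ^ 6 - 1458 * x ^ 5 - 762 * x ^ 4 - 24 * x ^ 3 + 2 * x ^ 2
      - 26 * x - 4) * (X + C (2 * x)) ^ 3
  + C (105 * x ^ 6 + 2358 * x ^ 5 + 2931 * x ^ 4 + 1173 * x ^ 3 + 118 * x ^ 2 + 2 * x + 7) *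
      (X + C (2 * x)) ^ 4
  + C (-1062 * x ^ 5 - 3534 * x ^ 4 - 2934 * x ^ 3 - 832 * x ^ 2 - 20 * x + 14) *
      (X + C (2 * x)) ^ 5
  + C (1380 * x ^ 4 + 2532 * x ^ 3 + 1549 * x ^ 2 + 353 * x + 16) * (X + C (2 * x)) ^ 6
  + C (-732 * x ^ 3 - 934 * x ^ 2 - 404 * x - 58) * (X + C (2 * x)) ^ 7
  + C (122 * x ^ 2 + 115 * x + 29) * (X + C (2 * x)) ^ 8

/-- The rational function in `t` whose forward difference is the combination of `wellPoised m`,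
`wellPoised (m + 1)` and `wellPoised (m + 2)` with the coefficients of the recurrence. -/
def certificate (m : ℕ) (t : ℝ) : ℝ :=
  (-1) ^ m * (certificatePoly (m + 1)).eval t * (descPochhammer ℝ (m + 1)).eval (t - 1) ^ 2 *
    (ascPochhammer ℝ (2 * m + 1)).eval t ^ 2 / (ascPochhammer ℝ (m + 2)).eval t ^ 6

lemma abs_wellPoised_le {n : ℕ} {t : ℝ} (ht : 0 < t) (hn : n ≤ t) :
    |wellPoised n t| ≤ 2 / t ^ 3 := by
  set D := (descPochhammer ℝ n).eval (t - 1) with hD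
  set E := (ascPochhammer ℝ n).eval (t + (n + 1)) with hE
  set B := (ascPochhammer ℝ (n + 1)).eval t with hB
  set F := (ascPochhammer ℝ n).eval t * (ascPochhammer ℝ n).eval (t + 1) with hF
  have hD0 : 0 ≤ D := descPochhammer_nonneg (by linarith)
  have hE0 : 0 < E := ascPochhammer_pos n _ (by positivity)
  have hB0 : 0 < B := ascPochhammer_pos (n + 1) t ht
  have hF0 : 0 < F := mul_pos (ascPochhammer_pos n t ht) (ascPochhammer_pos n _ (by positivity))
  have hDE : D * E ≤ F := descPochhammer_mul_ascPochhammer_le n hn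
  have hBE : (ascPochhammer ℝ (2 * n + 1)).eval t = B * E := by
    rw [show 2 * n + 1 = n + 1 + n by ring, ← ascPochhammer_mul]
    simp [eval_comp, hB, hE]
  have hBF : B ^ 2 = t * (t + n) * F := by
    rw [sq]
    nth_rw 1 [hB, ascPochhammer_succ_eval]
    rw [hB, ascPochhammer_succ_eval_left, hF]
    ring
  have hval : |wellPoised n t| = (2 * t + n) * (D * E) ^ 2 / (t * (t + n) * F) ^ 2 := by
    rw [wellPoised, hBE, ← hBF, ← hD, ← hB, abs_div, abs_mul, abs_mul, abs_mul, abs_pow, abs_neg,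
      abs_one, one_pow, one_mul, abs_of_pos (by positivity : 0 < 2 * t + n),
      abs_of_nonneg (by positivity), abs_of_nonneg (by positivity),
      abs_of_nonneg (by positivity)]
    field_simp
  calc |wellPoised n t| = (2 * t + n) * (D * E) ^ 2 / (t * (t + n) * F) ^ 2 := hval
    _ ≤ (2 * t + n) * F ^ 2 / (t * (t + n) * F) ^ 2 := by gcongr
    _ ≤ (2 * (t + n)) * F ^ 2 / (t * (t + n) * F) ^ 2 := by gcongr; linarith
    _ = 2 / t ^ 2 / (t + n) := by field_simp
    _ ≤ 2 / t ^ 2 / t := by gcongr; simp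
    _ = 2 / t ^ 3 := by field_simp

lemma logDeriv_wellPoised {n : ℕ} {t : ℝ} (ht : n < t) :
    logDeriv (wellPoised n) t = 2 / (2 * t + n) + 2 * logDeriv (ascPochhammer ℝ n).eval (t - n)
      + 2 * logDeriv (ascPochhammer ℝ (2 * n + 1)).eval t
      - 6 * logDeriv (ascPochhammer ℝ (n + 1)).eval t := by
  have ht0 : 0 < t := n.cast_nonneg.trans_lt ht
  have hL0 : (-1) ^ n * (2 * t + n) ≠ 0 := mul_ne_zero (by simp) (by positivity)
  have hD0 := (ascPochhammer_pos n (t - n) (by linarith)).ne'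
  have hN0 := (ascPochhammer_pos (2 * n + 1) t ht0).ne'
  have hB0 := (ascPochhammer_pos (n + 1) t ht0).ne'
  have hL : logDeriv (fun s : ℝ ↦ (-1) ^ n * (2 * s + n)) t = 2 / (2 * t + n) := by
    rw [logDeriv_const_mul _ _ (by simp), logDeriv_apply, deriv_add_const, deriv_const_mul_id']
  have hD : logDeriv (fun s : ℝ ↦ (ascPochhammer ℝ n).eval (s - n)) t =
      logDeriv (ascPochhammer ℝ n).eval (t - n) := by
    rw [logDeriv_apply, logDeriv_apply, deriv_comp_sub_const (ascPochhammer ℝ n).eval]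
  have hR : wellPoised n = fun s : ℝ ↦ (-1) ^ n * (2 * s + n) *
      (ascPochhammer ℝ n).eval (s - n) ^ 2 * (ascPochhammer ℝ (2 * n + 1)).eval s ^ 2 /
        (ascPochhammer ℝ (n + 1)).eval s ^ 6 := by
    funext s
    rw [wellPoised, descPochhammer_eval_eq_ascPochhammer, sub_right_comm, sub_add_cancel]
  rw [hR, logDeriv_div, logDeriv_mul, logDeriv_mul, logDeriv_fun_pow, logDeriv_fun_pow,
    logDeriv_fun_pow, hL, hD]
  · push_cast; rfl
  all_goals first | fun_prop | exact hL0 | positivity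

lemma abs_logDeriv_wellPoised_le {n : ℕ} {t : ℝ} (ht : n + 1 ≤ t) :
    |logDeriv (wellPoised n) t| ≤ 12 * n + 9 := by
  have hn : (0 : ℝ) ≤ n := n.cast_nonneg
  have ht0 : 0 < t := by linarith only [hn, ht]
  have hpoch (m : ℕ) {s : ℝ} (hs : 1 ≤ s) : |logDeriv (ascPochhammer ℝ m).eval s| ≤ m :=
    (abs_logDeriv_ascPochhammer_eval_le m (by linarith)).trans (div_le_self m.cast_nonneg hs)
  have hlin : |2 / (2 * t + n)| ≤ 1 := by
    rw [abs_of_nonneg (by positivity), div_le_one (by linarith)]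
    linarith
  have hD := hpoch n (s := t - n) (by linarith)
  have hN := hpoch (2 * n + 1) (s := t) (by linarith)
  have hB := hpoch (n + 1) (s := t) (by linarith)
  rw [logDeriv_wellPoised (by linarith)]
  push_cast at hN hB
  rw [abs_le] at hlin hD hN hB ⊢
  constructor <;> linarith

lemma wellPoised_ne_zero {n : ℕ} {t : ℝ} (ht : n < t) : wellPoised n t ≠ 0 := by
  have ht0 : 0 < t := n.cast_nonneg.trans_lt ht
  have hD : 0 < (descPochhammer ℝ n).eval (t - 1) := descPochhammer_pos (by linarith)
  have hN := ascPochhammer_pos (2 * n + 1) t ht0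
  have hB := ascPochhammer_pos (n + 1) t ht0
  have hsign : (-1 : ℝ) ^ n ≠ 0 := by simp
  exact div_ne_zero (mul_ne_zero (mul_ne_zero (mul_ne_zero hsign (by positivity))
    (pow_ne_zero 2 hD.ne')) (pow_ne_zero 2 hN.ne')) (pow_ne_zero 6 hB.ne')

lemma differentiableAt_wellPoised (n : ℕ) {t : ℝ} (ht : 0 < t) :
    DifferentiableAt ℝ (wellPoised n) t := by
  have hB := pow_ne_zero 6 (ascPochhammer_pos (n + 1) t ht).ne'
  unfold wellPoised
  fun_prop (disch := assumption)

lemma hasDerivAt_wellPoised (n k : ℕ) :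
    HasDerivAt (wellPoised n) (deriv (wellPoised n) (k + 1)) (k + 1) :=
  (differentiableAt_wellPoised n (by positivity)).hasDerivAt

lemma deriv_wellPoised_eq_zero {n k : ℕ} (hk : k < n) : deriv (wellPoised n) (k + 1) = 0 := by
  have hB := pow_ne_zero 6 (ascPochhammer_pos (n + 1) ((k : ℝ) + 1) (by positivity)).ne'
  have hR : wellPoised n = fun t ↦ (descPochhammer ℝ n).eval (t - 1) ^ 2 *
      ((-1) ^ n * (2 * t + n) * (ascPochhammer ℝ (2 * n + 1)).eval t ^ 2 /
        (ascPochhammer ℝ (n + 1)).eval t ^ 6) := by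
    funext t
    rw [wellPoised]
    ring
  rw [hR]
  refine deriv_sq_mul_eq_zero (by fun_prop) (by fun_prop (disch := assumption)) ?_
  rw [add_sub_cancel_right]
  exact descPochhammer_eval_coe_nat_of_lt hk

lemma abs_deriv_wellPoised_le (n k : ℕ) :
    |deriv (wellPoised n) (k + 1)| ≤ (24 * n + 18) * (1 / (k + 1) ^ 3) := by
  rcases lt_or_ge k n with hk | hk
  · rw [deriv_wellPoised_eq_zero hk, abs_zero]
    positivity
  · have hnk : (n : ℝ) + 1 ≤ k + 1 := by gcongr
    have hk0 : (0 : ℝ) < k + 1 := by positivity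
    have hR0 : wellPoised n (k + 1) ≠ 0 := wellPoised_ne_zero (by linarith)
    calc |deriv (wellPoised n) (k + 1)|
        = |logDeriv (wellPoised n) (k + 1)| * |wellPoised n (k + 1)| := by
          rw [← abs_mul, logDeriv_apply, div_mul_cancel₀ _ hR0]
      _ ≤ (12 * n + 9) * (2 / (k + 1) ^ 3) := by
          gcongr
          · exact abs_logDeriv_wellPoised_le hnk
          · exact abs_wellPoised_le hk0 (by linarith)
      _ = (24 * n + 18) * (1 / (k + 1) ^ 3) := by ring

/-- A multiple of the `n`-th remainder of the continued fraction, equal to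
`6 * (q n * ζ(4) - p n) / n! ^ 5`. -/
def zetaFourForm (n : ℕ) : ℝ := -∑' k : ℕ, deriv (wellPoised n) (k + 1)

lemma hasSum_deriv_wellPoised (n : ℕ) :
    HasSum (fun k : ℕ ↦ deriv (wellPoised n) (k + 1)) (-zetaFourForm n) := by
  rw [zetaFourForm, neg_neg]
  exact (Summable.of_norm_bounded (summable_one_div_nat_succ_pow_three.mul_left _)
    (abs_deriv_wellPoised_le n)).hasSum

lemma abs_zetaFourForm_le (n : ℕ) :
    |zetaFourForm n| ≤ (24 * n + 18) * ∑' k : ℕ, 1 / ((k : ℝ) + 1) ^ 3 := by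
  rw [zetaFourForm, abs_neg, ← Real.norm_eq_abs]
  exact tsum_of_norm_bounded (summable_one_div_nat_succ_pow_three.hasSum.mul_left _)
    (abs_deriv_wellPoised_le n)

lemma tendsto_zetaFourForm_div_two_pow :
    Tendsto (fun n ↦ zetaFourForm n / 2 ^ n) atTop (𝓝 0) := by
  set c := ∑' k : ℕ, 1 / ((k : ℝ) + 1) ^ 3
  have hlin := tendsto_self_mul_const_pow_of_lt_one (r := (1 / 2 : ℝ)) (by norm_num) (by norm_num)
  have hconst := tendsto_pow_atTop_nhds_zero_of_lt_one (r := (1 / 2 : ℝ)) (by norm_num)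
    (by norm_num)
  have hbound : Tendsto (fun n : ℕ ↦ 24 * c * (n * (1 / 2 : ℝ) ^ n) + 18 * c * (1 / 2) ^ n) atTop
      (𝓝 0) := by
    simpa using (hlin.const_mul (24 * c)).add (hconst.const_mul (18 * c))
  refine squeeze_zero_norm (fun n ↦ ?_) hbound
  calc ‖zetaFourForm n / 2 ^ n‖ = |zetaFourForm n| / 2 ^ n := by simp [Real.norm_eq_abs]
    _ ≤ (24 * n + 18) * c / 2 ^ n := by gcongr; exact abs_zetaFourForm_le n
    _ = 24 * c * (n * (1 / 2) ^ n) + 18 * c * (1 / 2) ^ n := by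
      rw [one_div_pow]
      ring

lemma natDegree_certificatePoly_le (x : ℝ) : (certificatePoly x).natDegree ≤ 8 := by
  unfold certificatePoly
  compute_degree

lemma certificatePoly_identity (x t : ℝ) :
    (x + 2) ^ 5 * ((2 * t + (x + 2)) * ((t - (x + 1)) * (t - (x + 2))) ^ 2 *
        ((t + (2 * x + 1)) * (t + (2 * x + 2)) * (t + (2 * x + 3)) * (t + (2 * x + 4))) ^ 2)
      + partialDenom (x + 2) * ((2 * t + (x + 1)) * (t - (x + 1)) ^ 2 *
          ((t + (2 * x + 1)) * (t + (2 * x + 2))) ^ 2 * (t + (x + 2)) ^ 6)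
      - reducedPartialNum (x + 1) * ((2 * t + x) * ((t + (x + 1)) * (t + (x + 2))) ^ 6)
      = (certificatePoly (x + 1)).eval (t + 1) * (t + (2 * x + 1)) ^ 2 * t ^ 6
        - (certificatePoly (x + 1)).eval t * (t - (x + 1)) ^ 2 * (t + (x + 2)) ^ 6 := by
  simp only [certificatePoly, partialDenom, reducedPartialNum, eval_add, eval_mul, eval_pow,
    eval_X, eval_C]
  ring

/-- The common factor of all the terms of the telescoping relation for `wellPoised`. -/
def telescopingFactor (m : ℕ) (t : ℝ) : ℝ :=
  (-1) ^ m * (descPochhammer ℝ m).eval (t - 1) ^ 2 * (ascPochhammer ℝ (2 * m + 1)).eval t ^ 2 /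
    (ascPochhammer ℝ (m + 3)).eval t ^ 6

lemma wellPoised_eq_factor_mul (m : ℕ) {t : ℝ} (ht : 0 < t) :
    wellPoised m t =
      telescopingFactor m t * ((2 * t + m) * ((t + (m + 1)) * (t + (m + 2))) ^ 6) := by
  have hB : (ascPochhammer ℝ (m + 1)).eval t ≠ 0 := (ascPochhammer_pos (m + 1) t ht).ne'
  have h1 : t + (m + 1) ≠ 0 := by positivity
  have h2 : t + (m + 2) ≠ 0 := by positivity
  rw [wellPoised, telescopingFactor, ascPochhammer_succ_eval (m + 2),
    ascPochhammer_succ_eval (m + 1)]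
  push_cast
  field_simp

lemma wellPoised_succ_eq_factor_mul (m : ℕ) {t : ℝ} (ht : 0 < t) :
    wellPoised (m + 1) t = -telescopingFactor m t * ((2 * t + (m + 1)) * (t - (m + 1)) ^ 2 *
      ((t + (2 * m + 1)) * (t + (2 * m + 2))) ^ 2 * (t + (m + 2)) ^ 6) := by
  have hB : (ascPochhammer ℝ (m + 2)).eval t ≠ 0 := (ascPochhammer_pos (m + 2) t ht).ne'
  have h2 : t + (m + 2) ≠ 0 := by positivity
  rw [wellPoised, telescopingFactor, ascPochhammer_succ_eval (m + 2), descPochhammer_succ_eval,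
    show 2 * (m + 1) + 1 = 2 * m + 1 + 1 + 1 by ring, ascPochhammer_succ_eval (2 * m + 1 + 1),
    ascPochhammer_succ_eval (2 * m + 1)]
  push_cast
  field_simp
  ring

lemma wellPoised_add_two_eq_factor_mul (m : ℕ) (t : ℝ) :
    wellPoised (m + 2) t = telescopingFactor m t *
      ((2 * t + (m + 2)) * ((t - (m + 1)) * (t - (m + 2))) ^ 2 *
        ((t + (2 * m + 1)) * (t + (2 * m + 2)) * (t + (2 * m + 3)) * (t + (2 * m + 4))) ^ 2) := by
  rw [wellPoised, telescopingFactor, descPochhammer_succ_eval, descPochhammer_succ_eval,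
    show 2 * (m + 2) + 1 = 2 * m + 1 + 1 + 1 + 1 + 1 by ring,
    ascPochhammer_succ_eval (2 * m + 1 + 1 + 1 + 1), ascPochhammer_succ_eval (2 * m + 1 + 1 + 1),
    ascPochhammer_succ_eval (2 * m + 1 + 1), ascPochhammer_succ_eval (2 * m + 1)]
  push_cast
  ring

lemma certificate_eq_factor_mul (m : ℕ) {t : ℝ} (ht : 0 < t) :
    certificate m t = telescopingFactor m t *
      ((certificatePoly (m + 1)).eval t * (t - (m + 1)) ^ 2 * (t + (m + 2)) ^ 6) := by
  have hB : (ascPochhammer ℝ (m + 2)).eval t ≠ 0 := (ascPochhammer_pos (m + 2) t ht).ne'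
  have h2 : t + (m + 2) ≠ 0 := by positivity
  rw [certificate, telescopingFactor, ascPochhammer_succ_eval (m + 2), descPochhammer_succ_eval]
  push_cast
  field_simp
  ring

lemma certificate_add_one_eq_factor_mul (m : ℕ) {t : ℝ} (ht : 0 < t) :
    certificate m (t + 1) = telescopingFactor m t *
      ((certificatePoly (m + 1)).eval (t + 1) * (t + (2 * m + 1)) ^ 2 * t ^ 6) := by
  have hB : (ascPochhammer ℝ (m + 2)).eval (t + 1) ≠ 0 :=
    (ascPochhammer_pos (m + 2) _ (by positivity)).ne'
  have hN : (ascPochhammer ℝ (2 * m + 1)).eval (t + 1) =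
      (ascPochhammer ℝ (2 * m + 1)).eval t * (t + (2 * m + 1)) / t := by
    rw [eq_div_iff ht.ne', mul_comm, ← ascPochhammer_succ_eval_left, ascPochhammer_succ_eval]
    push_cast
    rfl
  rw [certificate, telescopingFactor, add_sub_cancel_right, ascPochhammer_succ_eval_left (m + 2),
    descPochhammer_succ_eval_left, hN]
  field_simp

lemma wellPoised_telescoping (m : ℕ) {t : ℝ} (ht : 0 < t) :
    ((m : ℝ) + 2) ^ 5 * wellPoised (m + 2) t - partialDenom (m + 2) * wellPoised (m + 1) t
      - reducedPartialNum (m + 1) * wellPoised m t = certificate m (t + 1) - certificate m t := by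
  rw [wellPoised_eq_factor_mul m ht, wellPoised_succ_eq_factor_mul m ht,
    wellPoised_add_two_eq_factor_mul, certificate_eq_factor_mul m ht,
    certificate_add_one_eq_factor_mul m ht]
  linear_combination telescopingFactor m t * certificatePoly_identity m t

lemma tendsto_deriv_certificate (m : ℕ) : Tendsto (deriv (certificate m)) atTop (𝓝 0) := by
  let P : ℝ[X] := C ((-1) ^ m) * certificatePoly (m + 1) *
    ((descPochhammer ℝ (m + 1)).comp (X - C 1)) ^ 2 * ascPochhammer ℝ (2 * m + 1) ^ 2
  let Q : ℝ[X] := ascPochhammer ℝ (m + 2) ^ 6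
  have hcert : certificate m = fun t ↦ P.eval t / Q.eval t := by
    funext t
    simp [certificate, P, Q, eval_comp]
  have hQ : Q.natDegree = (m + 2) * 6 := by simp [Q, natDegree_pow, mul_comm]
  have hP : P.natDegree ≤ (m + 2) * 6 := by
    have hσ := natDegree_certificatePoly_le ((m : ℝ) + 1)
    have hD : ((descPochhammer ℝ (m + 1)).comp (X - C 1)).natDegree = m + 1 := by
      rw [natDegree_comp, descPochhammer_natDegree, natDegree_X_sub_C, mul_one]
    have hN := ascPochhammer_natDegree (S := ℝ) (2 * m + 1)
    calc P.natDegree ≤ 0 + 8 + 2 * (m + 1) + 2 * (2 * m + 1) := by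
          refine natDegree_mul_le_of_le (natDegree_mul_le_of_le (natDegree_mul_le_of_le ?_ hσ)
            (natDegree_pow_le_of_le 2 hD.le)) (natDegree_pow_le_of_le 2 hN.le)
          exact (natDegree_C _).le
      _ = (m + 2) * 6 := by ring
  have hQ0 : Q ≠ 0 := pow_ne_zero 6 (monic_ascPochhammer ℝ _).ne_zero
  rw [hcert]
  refine tendsto_deriv_eval_div_eval_atTop ?_
  rw [degree_eq_natDegree hQ0, hQ]
  exact degree_le_of_natDegree_le hP

lemma differentiableAt_certificate (m : ℕ) {t : ℝ} (ht : 0 < t) :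
    DifferentiableAt ℝ (certificate m) t := by
  have hB := pow_ne_zero 6 (ascPochhammer_pos (m + 2) t ht).ne'
  unfold certificate
  fun_prop (disch := assumption)

lemma deriv_certificate_one (m : ℕ) : deriv (certificate m) 1 = 0 := by
  have hB := pow_ne_zero 6 (ascPochhammer_pos (m + 2) (1 : ℝ) one_pos).ne'
  have hcert : certificate m = fun t ↦ (descPochhammer ℝ (m + 1)).eval (t - 1) ^ 2 *
      ((-1) ^ m * (certificatePoly (m + 1)).eval t * (ascPochhammer ℝ (2 * m + 1)).eval t ^ 2 /
        (ascPochhammer ℝ (m + 2)).eval t ^ 6) := by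
    funext t
    rw [certificate]
    ring
  rw [hcert]
  refine deriv_sq_mul_eq_zero (by fun_prop) (by fun_prop (disch := assumption)) ?_
  rw [sub_self, descPochhammer_succ_eval_left, zero_mul]

lemma zetaFourForm_recurrence (m : ℕ) :
    ((m : ℝ) + 2) ^ 5 * zetaFourForm (m + 2) =
      partialDenom (m + 2) * zetaFourForm (m + 1) + reducedPartialNum (m + 1) * zetaFourForm m := by
  have hsum := eq_neg_deriv_one_of_hasSum_telescoping (tendsto_deriv_certificate m)
    (fun t ↦ differentiableAt_certificate m) (fun t ↦ wellPoised_telescoping m)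
    (fun k ↦ (((hasDerivAt_wellPoised (m + 2) k).const_mul (((m : ℝ) + 2) ^ 5)).sub
      ((hasDerivAt_wellPoised (m + 1) k).const_mul (partialDenom (m + 2)))).sub
        ((hasDerivAt_wellPoised m k).const_mul (reducedPartialNum (m + 1))))
    ((((hasSum_deriv_wellPoised (m + 2)).mul_left _).sub
      ((hasSum_deriv_wellPoised (m + 1)).mul_left _)).sub
        ((hasSum_deriv_wellPoised m).mul_left _))
  rw [deriv_certificate_one] at hsum
  linear_combination -hsum

lemma wellPoised_zero (t : ℝ) : wellPoised 0 t = 2 / t ^ 3 := by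
  have hval : wellPoised 0 t = 2 * t * t ^ 2 / t ^ 6 := by simp [wellPoised]
  rw [hval]
  rcases eq_or_ne t 0 with rfl | ht
  · simp
  · field_simp

lemma wellPoised_one {t : ℝ} (ht : 0 < t) :
    wellPoised 1 t = -((2 * t + 1) * ((t - 1) * (t + 2)) ^ 2) / (t * (t + 1)) ^ 4 := by
  have hN : (ascPochhammer ℝ 3).eval t = t * (t + 1) * (t + 2) := by
    simp [ascPochhammer_eval_eq_prod_range, Finset.prod_range_succ]
  have hB : (ascPochhammer ℝ 2).eval t = t * (t + 1) := by
    simp [ascPochhammer_eval_eq_prod_range, Finset.prod_range_succ]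
  simp only [wellPoised, descPochhammer_one, eval_X, hN, hB, Nat.reduceMul, Nat.reduceAdd,
    Nat.cast_one]
  field_simp

lemma zetaFourForm_zero : zetaFourForm 0 = 6 * (Real.pi ^ 4 / 90) := by
  have hderiv (k : ℕ) : deriv (wellPoised 0) (k + 1) = -6 * (1 / ((k + 1 : ℕ) : ℝ) ^ 4) := by
    have hk : (k : ℝ) + 1 ≠ 0 := by positivity
    rw [funext wellPoised_zero, deriv_fun_div (by fun_prop) (by fun_prop) (by positivity)]
    simp only [deriv_const', zero_mul, differentiableAt_fun_id, deriv_fun_pow, deriv_id'',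
      Nat.cast_add, Nat.cast_one]
    field_simp
    ring
  have hzeta : HasSum (fun k : ℕ ↦ 1 / ((k + 1 : ℕ) : ℝ) ^ 4) (Real.pi ^ 4 / 90) := by
    simpa using (hasSum_nat_add_iff' 1).2 hasSum_zeta_four
  have hform := hasSum_deriv_wellPoised 0
  simp only [hderiv] at hform
  linear_combination -hform.unique (hzeta.mul_left (-6))

lemma zetaFourForm_one : zetaFourForm 1 = 12 * zetaFourForm 0 - 78 := by
  have hdeg : (13 * X ^ 2 + 12 * X + 4 : ℝ[X]).degree ≤ (X ^ 4 : ℝ[X]).degree := by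
    rw [degree_X_pow]
    compute_degree!
  have hderiv : deriv (fun t : ℝ ↦ (13 * X ^ 2 + 12 * X + 4 : ℝ[X]).eval t / (X ^ 4 : ℝ[X]).eval t)
      1 = -78 := by
    rw [deriv_fun_div (Polynomial.differentiableAt _) (Polynomial.differentiableAt _) (by simp)]
    simp only [Polynomial.deriv]
    norm_num
  have hsum := eq_neg_deriv_one_of_hasSum_telescoping (tendsto_deriv_eval_div_eval_atTop hdeg)
    (f := fun t ↦ wellPoised 1 t - 12 * wellPoised 0 t)
    (fun t ht ↦ by fun_prop (disch := simp [ht.ne'])) (fun t ht ↦ ?_)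
    (fun k ↦ (hasDerivAt_wellPoised 1 k).fun_sub ((hasDerivAt_wellPoised 0 k).const_mul 12))
    ((hasSum_deriv_wellPoised 1).sub ((hasSum_deriv_wellPoised 0).mul_left 12))
  · rw [hderiv] at hsum
    linear_combination -hsum
  · rw [wellPoised_one ht, wellPoised_zero]
    simp only [eval_add, eval_mul, eval_pow, eval_X, eval_ofNat]
    field_simp
    ring

lemma threeTermRecurrence_factorial_pow_mul_zetaFourForm :
    ThreeTermRecurrence (fun n ↦ partialDenom n) (fun n ↦ (n : ℝ) ^ 5 * reducedPartialNum n)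
      (fun n ↦ (n.factorial : ℝ) ^ 5 * zetaFourForm n) := fun n ↦ by
  have hrec := zetaFourForm_recurrence n
  simp only [Nat.factorial_succ]
  push_cast
  rw [add_assoc (n : ℝ) 1 1, one_add_one_eq_two]
  linear_combination (((n : ℝ) + 1) * n.factorial) ^ 5 * hrec

lemma factorial_pow_five_mul_two_pow_le {q : ℕ → ℝ}
    (hq : ThreeTermRecurrence (fun n ↦ partialDenom n)
      (fun n ↦ (n : ℝ) ^ 5 * reducedPartialNum n) q)
    (hq0 : 1 ≤ q 0) (hq1 : 2 ≤ q 1) (n : ℕ) : (n.factorial : ℝ) ^ 5 * 2 ^ n ≤ q n := by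
  have hdenom (m : ℕ) : 2 * ((m : ℝ) + 2) ^ 5 ≤ partialDenom (m + 2) := by
    rw [← sub_nonneg, partialDenom]
    ring_nf
    positivity
  have hnum (m : ℕ) : 0 ≤ ((m : ℝ) + 1) ^ 5 * reducedPartialNum (m + 1) := by
    rw [reducedPartialNum]
    ring_nf
    positivity
  refine hq.le_of_subsolution (v := fun n ↦ (n.factorial : ℝ) ^ 5 * 2 ^ n) (fun m ↦ ?_)
    (fun m ↦ ?_) (fun m ↦ ?_) (by simpa) (by simpa) n
  · push_cast
    exact le_trans (by positivity) (hdenom m)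
  · exact_mod_cast hnum m
  · calc ((m + 2).factorial : ℝ) ^ 5 * 2 ^ (m + 2)
        = 2 * ((m : ℝ) + 2) ^ 5 * ((m + 1).factorial ^ 5 * 2 ^ (m + 1)) := by
          rw [Nat.factorial_succ (m + 1)]
          push_cast
          ring
      _ ≤ partialDenom (m + 2) * ((m + 1).factorial ^ 5 * 2 ^ (m + 1)) := by
          gcongr
          exact hdenom m
      _ ≤ _ := by
          push_cast
          exact le_add_of_nonneg_right (mul_nonneg (hnum m) (by positivity))

end

theorem stmt_15 
    (a b p q : ℕ → ℝ)
    (ha0 : a 0 = 0)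
    (ha : ∀ n : ℕ, 1 ≤ n → a n = 3 * (2 * (n : ℝ) - 1) * (3 * (n : ℝ) ^ 2 - 3 * (n : ℝ) + 1) * (15 * (n : ℝ) ^ 2 - 15 * (n : ℝ) + 4))
    (hb0 : b 0 = 13)
    (hb : ∀ n : ℕ, 1 ≤ n → b n = 3 * (n : ℝ) ^ 8 * (9 * (n : ℝ) ^ 2 - 1))
    (hp0 : p 0 = a 0) (hq0 : q 0 = 1)
    (hp1 : p 1 = a 0 * a 1 + b 0) (hq1 : q 1 = a 1)
    (hp : ∀ n : ℕ, p (n + 2) = a (n + 2) * p (n + 1) + b (n + 1) * p n)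
    (hq : ∀ n : ℕ, q (n + 2) = a (n + 2) * q (n + 1) + b (n + 1) * q n) :
    Tendsto (fun n => p n / q n) atTop (𝓝 (Real.pi ^ 4 / 90)) := by
  have ha1 : a 1 = 12 := by norm_num [ha 1 le_rfl]
  have hrec {u : ℕ → ℝ} (hu : ThreeTermRecurrence a b u) :
      ThreeTermRecurrence (fun n ↦ partialDenom n)
        (fun n ↦ (n : ℝ) ^ 5 * reducedPartialNum n) u := fun n ↦ by
    rw [hu n, ha (n + 2) (by lia), hb (n + 1) (by lia)]
    simp only [partialDenom, reducedPartialNum]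
    ring
  have hform (n : ℕ) :
      p n - q n * (Real.pi ^ 4 / 90) = n.factorial ^ 5 * zetaFourForm n * (-1 / 6) :=
    ((hrec hp).sub ((hrec hq).mul_const _)).eq_of_initial_eq
      (threeTermRecurrence_factorial_pow_mul_zetaFourForm.mul_const _)
      (by rw [hp0, ha0, hq0, zetaFourForm_zero, Nat.factorial_zero]; ring)
      (by rw [hp1, ha0, hb0, hq1, ha1, zetaFourForm_one, zetaFourForm_zero, Nat.factorial_one]
          ring) n
  have hgrowth := factorial_pow_five_mul_two_pow_le (hrec hq) hq0.ge (by norm_num [hq1, ha1])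
  refine tendsto_div_of_sub_mul_div_tendsto_zero (fun n ↦ by positivity) hgrowth ?_
  have hquot (n : ℕ) : (p n - q n * (Real.pi ^ 4 / 90)) / (n.factorial ^ 5 * 2 ^ n) =
      zetaFourForm n / 2 ^ n * (-1 / 6) := by
    rw [hform]
    field_simp
  simpa [hquot] using tendsto_zetaFourForm_div_two_pow.mul_const (-1 / 6)
end

section
/- Define a(0) = 0 and a(n) = 65n⁴ − 130n³ + 105n² − 40n + 6 for n ≥ 1, and b(0) = 7 and b(n) = −4(16n² − 1)n⁶ for n ≥ 1. Then the convergents p(n)/q(n) of the continued fraction with partial quotients (a(n), b(n)) converge to ζ(3) as n → ∞. (This is a new continued fraction for ζ(3) obtained by Apéry acceleration with a multiplier.) -/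
open Filter Topology

/-!
Let `c(u, v) = (u + v)(u² + uv + v²)`, so that `c(u, v) c(u, -v) = u⁶ - v⁶`. Apéry's array is a
function `x(n, i)` which, on every unit square `[n, N] × [i, m]` with `N = n + 1`, `m = i + 1`,
satisfies a linear relation between any three of its four corners (any two of these relations imply
the others, by the factorisation of `u⁶ - v⁶`). Such arrays form a plane, spanned by a "denominator"
array `B` with edge values `1` and a "numerator" array `A` with edge values `∑_{k ≤ n} 1/k³`.

Creative telescoping shows that `∑ i, (n choose i)² x(n, i)` satisfies, up to the factor `n!⁴`, the
recurrence of the continued fraction, so `p(n)/q(n)` is a weighted mean of the ratios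
`A(n, i)/B(n, i)` for `i ≤ n`. A Casoratian computation gives
`A(n+1, i)/B(n+1, i) - A(n, i)/B(n, i) = 1/((n+1)³ B(n, i) B(n+1, i))`; by the symmetry of the array
all the ratios averaged in row `n` therefore lie within `1/(n+1)` above `∑_{k ≤ n} 1/k³`.
-/

theorem eq_of_recurrence {R : Type*} [Add R] [Mul R] {a b u v : ℕ → R}
    (hu : ∀ n, u (n + 2) = a n * u (n + 1) + b n * u n)
    (hv : ∀ n, v (n + 2) = a n * v (n + 1) + b n * v n) (h₀ : u 0 = v 0) (h₁ : u 1 = v 1) :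
    u = v := by
  funext n
  induction n using Nat.twoStepInduction with
  | zero => exact h₀
  | one => exact h₁
  | more n ih₀ ih₁ => rw [hu, hv, ih₀, ih₁]

theorem cast_add_one_mul_choose {R : Type*} [CommRing R] (n i : ℕ) :
    ((n : R) + 1) * n.choose i = (n + 1 - i) * (n + 1).choose i := by
  obtain h | h := Nat.lt_or_ge (n + 1) i
  · simp [Nat.choose_eq_zero_of_lt h, Nat.choose_eq_zero_of_lt (n.lt_succ_self.trans h)]
  · have key := congrArg (Nat.cast (R := R)) (Nat.choose_mul_succ_eq n i)
    push_cast [Nat.cast_sub h] at key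
    linear_combination key

section Algebra

variable {K : Type*} [Field K]

/-- The coefficient `(u + v)(u² + uv + v²)` of the linear relations between the corners of a unit
square in Apéry's array. -/
def aperyCoeff (u v : K) : K := (u + v) * (u ^ 2 + u * v + v ^ 2)

/-- The partial sum `1/1³ + ⋯ + 1/n³` of `ζ(3)`. -/
def cubicHarmonic (K : Type*) [Field K] (n : ℕ) : K := ∑ k ∈ Finset.range n, 1 / ((k : K) + 1) ^ 3

/-- Apéry's array for `ζ(3)`, with values `s + w (1/1³ + ⋯ + 1/n³)` on both edges. The parameters
`(s, w) = (1, 0)` give the denominators and `(0, 1)` the numerators of Apéry's approximations. -/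
def aperyArray (s w : K) : ℕ → ℕ → K
  | n, 0 => s + w * cubicHarmonic K n
  | 0, i + 1 => s + w * cubicHarmonic K (i + 1)
  | n + 1, i + 1 =>
    (aperyCoeff ((n : K) + 1) ((i : K) + 1) * aperyArray s w (n + 1) i
      - ((n : K) + 1) ^ 3 * aperyArray s w n i) / ((i : K) + 1) ^ 3

/-- The sum of row `n` of Apéry's array with squared binomial weights. -/
def aperyRowSum (s w : K) (n : ℕ) : K :=
  ∑ i ∈ Finset.range (n + 1), (n.choose i : K) ^ 2 * aperyArray s w n i

/-- The difference operator, evaluated at `n`, that annihilates `aperyRowSum`. Replacing `f n` by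
`n!⁴ f n` turns it into the recurrence of the continued fraction. -/
def aperyOperator (n : ℕ) (f : ℕ → K) : K :=
  (n + 2) ^ 4 * f (n + 2)
    - (65 * (n + 1) ^ 4 + 130 * (n + 1) ^ 3 + 105 * (n + 1) ^ 2 + 40 * (n + 1) + 6) * f (n + 1)
    + 4 * (16 * (n + 1) ^ 2 - 1) * (n + 1) ^ 2 * f n

/-- The coefficient of `aperyArray s w (n + 1) m` in `aperyCertificate`, where `N = n + 1` and
`M = m`. -/
def certificateCoeffSucc (N M : K) : K :=
  -63 * N ^ 4 - 125 * N ^ 3 - 99 * N ^ 2 - 36 * N - 5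
    + (-17 * N ^ 3 + 12 * N + 4) * M + (45 * N ^ 2 + 39 * N + 9) * M ^ 2

/-- The coefficient of `aperyArray s w n m` in `aperyCertificate`, where `N = n + 1` and
`M = m`. -/
def certificateCoeff (N M : K) : K :=
  63 * N ^ 4 - N ^ 3 - 4 * N ^ 2 + (-109 * N ^ 3 + 10 * N ^ 2 + 8 * N) * M
    + (68 * N ^ 2 + N - 4) * M ^ 2 + (-16 * N - 4) * M ^ 3

/-- The creative telescoping certificate: the closed form of the sum over `i ≤ m` of `aperyOperator`
applied to the `i`-th summand of `aperyRowSum`. Its polynomial coefficients come from solving the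
telescoping identity `aperyCertificate_succ_sub` for undetermined coefficients. -/
def aperyCertificate (s w : K) (n m : ℕ) : K :=
  ((n + 1).choose m : K) ^ 2 *
    (certificateCoeffSucc ((n : K) + 1) m * aperyArray s w (n + 1) m
      + certificateCoeff ((n : K) + 1) m * aperyArray s w n m)

theorem aperyCoeff_mul_aperyCoeff_neg (u v : K) :
    aperyCoeff u v * aperyCoeff u (-v) = u ^ 6 - v ^ 6 := by
  simp only [aperyCoeff]
  ring

theorem aperyArray_zero_right (s w : K) (n : ℕ) :
    aperyArray s w n 0 = s + w * cubicHarmonic K n := by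
  rw [aperyArray]

theorem aperyArray_zero_left (s w : K) (i : ℕ) :
    aperyArray s w 0 i = s + w * cubicHarmonic K i := by
  cases i <;> rw [aperyArray]

theorem sum_range_choose_sq_mul_aperyArray (s w : K) {n m : ℕ} (h : n < m) :
    ∑ i ∈ Finset.range m, (n.choose i : K) ^ 2 * aperyArray s w n i = aperyRowSum s w n := by
  refine (Finset.sum_subset (Finset.range_subset_range.2 h) fun i _ hi ↦ ?_).symm
  rw [Nat.choose_eq_zero_of_lt (by simpa using hi), Nat.cast_zero, zero_pow two_ne_zero, zero_mul]

theorem aperyRowSum_zero (s w : K) : aperyRowSum s w 0 = s := by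
  simp [aperyRowSum, aperyArray_zero_left, cubicHarmonic]

variable [CharZero K]

theorem add_one_cubed_mul_cubicHarmonic_succ (n : ℕ) :
    ((n : K) + 1) ^ 3 * cubicHarmonic K (n + 1) = ((n : K) + 1) ^ 3 * cubicHarmonic K n + 1 := by
  have hn : (n : K) + 1 ≠ 0 := n.cast_add_one_ne_zero
  rw [cubicHarmonic, Finset.sum_range_succ, ← cubicHarmonic]
  field_simp

section Square

/-!
For the square with corners `a = x(n, i)`, `b = x(n+1, i)`, `c = x(n, i+1)`, `d = x(n+1, i+1)`, the
suffix of a lemma names the three corners which it relates.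
-/

variable (s w : K) (n i : ℕ)

theorem aperyArray_square_abd :
    ((i : K) + 1) ^ 3 * aperyArray s w (n + 1) (i + 1) + ((n : K) + 1) ^ 3 * aperyArray s w n i =
      aperyCoeff ((n : K) + 1) ((i : K) + 1) * aperyArray s w (n + 1) i := by
  have hi : (i : K) + 1 ≠ 0 := i.cast_add_one_ne_zero
  rw [aperyArray]
  field_simp
  ring

theorem aperyArray_square_abc_zero_right :
    ((n : K) + 1) ^ 3 * aperyArray s w (n + 1) 0 - aperyArray s w n 1 =
      aperyCoeff ((n : K) + 1) (-1) * aperyArray s w n 0 := by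
  have edge_succ := add_one_cubed_mul_cubicHarmonic_succ (K := K) n
  cases n with
  | zero =>
    simp only [aperyArray_zero_right, aperyArray_zero_left, aperyCoeff]
    push_cast
    ring
  | succ n =>
    have edge := add_one_cubed_mul_cubicHarmonic_succ (K := K) n
    have abd := aperyArray_square_abd s w n 0
    simp only [aperyArray_zero_right, aperyCoeff] at abd ⊢
    push_cast at edge_succ abd ⊢
    linear_combination w * edge_succ - w * edge - abd

theorem aperyArray_square_acd_of_abc
    (abc : ((n : K) + 1) ^ 3 * aperyArray s w (n + 1) i
        - ((i : K) + 1) ^ 3 * aperyArray s w n (i + 1) =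
      aperyCoeff ((n : K) + 1) (-((i : K) + 1)) * aperyArray s w n i) :
    ((n : K) + 1) ^ 3 * aperyArray s w (n + 1) (i + 1) + ((i : K) + 1) ^ 3 * aperyArray s w n i =
      aperyCoeff ((n : K) + 1) ((i : K) + 1) * aperyArray s w n (i + 1) := by
  have abd := aperyArray_square_abd s w n i
  have hi : ((i : K) + 1) ^ 3 ≠ 0 := pow_ne_zero 3 i.cast_add_one_ne_zero
  apply mul_left_cancel₀ hi
  linear_combination ((n : K) + 1) ^ 3 * abd + aperyCoeff ((n : K) + 1) (i + 1) * abc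
    + aperyArray s w n i * aperyCoeff_mul_aperyCoeff_neg ((n : K) + 1) (i + 1)

theorem aperyArray_square_bcd_of_abc
    (abc : ((n : K) + 1) ^ 3 * aperyArray s w (n + 1) i
        - ((i : K) + 1) ^ 3 * aperyArray s w n (i + 1) =
      aperyCoeff ((n : K) + 1) (-((i : K) + 1)) * aperyArray s w n i) :
    ((n : K) + 1) ^ 3 * aperyArray s w n (i + 1) - ((i : K) + 1) ^ 3 * aperyArray s w (n + 1) i =
      aperyCoeff ((n : K) + 1) (-((i : K) + 1)) * aperyArray s w (n + 1) (i + 1) := by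
  have abd := aperyArray_square_abd s w n i
  have hi : ((i : K) + 1) ^ 3 ≠ 0 := pow_ne_zero 3 i.cast_add_one_ne_zero
  apply mul_left_cancel₀ hi
  linear_combination -((n : K) + 1) ^ 3 * abc - aperyCoeff ((n : K) + 1) (-(i + 1)) * abd
    - aperyArray s w (n + 1) i * aperyCoeff_mul_aperyCoeff_neg ((n : K) + 1) (i + 1)

theorem aperyArray_square_abc :
    ((n : K) + 1) ^ 3 * aperyArray s w (n + 1) i - ((i : K) + 1) ^ 3 * aperyArray s w n (i + 1) =
      aperyCoeff ((n : K) + 1) (-((i : K) + 1)) * aperyArray s w n i := by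
  induction i generalizing n with
  | zero => simpa using aperyArray_square_abc_zero_right s w n
  | succ i ih =>
    have acd := aperyArray_square_acd_of_abc s w n i (ih n)
    cases n with
    | zero =>
      have edge := add_one_cubed_mul_cubicHarmonic_succ (K := K) i
      have edge_succ := add_one_cubed_mul_cubicHarmonic_succ (K := K) (i + 1)
      simp only [aperyArray_zero_left, aperyCoeff] at acd ⊢
      push_cast at acd edge_succ ⊢
      linear_combination acd + w * edge - w * edge_succ
    | succ n =>
      have bcd := aperyArray_square_bcd_of_abc s w n i (ih n)
      have abd := aperyArray_square_abd s w n (i + 1)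
      simp only [aperyCoeff] at *
      push_cast at *
      linear_combination acd - abd + bcd

theorem aperyArray_square_acd :
    ((n : K) + 1) ^ 3 * aperyArray s w (n + 1) (i + 1) + ((i : K) + 1) ^ 3 * aperyArray s w n i =
      aperyCoeff ((n : K) + 1) ((i : K) + 1) * aperyArray s w n (i + 1) :=
  aperyArray_square_acd_of_abc s w n i (aperyArray_square_abc s w n i)

theorem aperyArray_square_bcd :
    ((n : K) + 1) ^ 3 * aperyArray s w n (i + 1) - ((i : K) + 1) ^ 3 * aperyArray s w (n + 1) i =
      aperyCoeff ((n : K) + 1) (-((i : K) + 1)) * aperyArray s w (n + 1) (i + 1) :=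
  aperyArray_square_bcd_of_abc s w n i (aperyArray_square_abc s w n i)

end Square

section Array

variable (s w : K) (n i : ℕ)

theorem aperyArray_comm : aperyArray s w n i = aperyArray s w i n := by
  induction i generalizing n with
  | zero => rw [aperyArray_zero_right, aperyArray_zero_left]
  | succ i ih =>
    cases n with
    | zero => rw [aperyArray_zero_right, aperyArray_zero_left]
    | succ n =>
      have hi : ((i : K) + 1) ^ 3 ≠ 0 := pow_ne_zero 3 i.cast_add_one_ne_zero
      have abd := aperyArray_square_abd s w n i
      have acd := aperyArray_square_acd s w i n
      rw [ih n, ih (n + 1)] at abd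
      apply mul_left_cancel₀ hi
      simp only [aperyCoeff] at abd acd
      linear_combination abd - acd

theorem aperyArray_one_left :
    aperyArray s w 1 i = (2 * i ^ 2 + 2 * i + 1) * aperyArray s w 0 i + w := by
  have abc := aperyArray_square_abc s w 0 i
  have edge := add_one_cubed_mul_cubicHarmonic_succ (K := K) i
  simp only [aperyArray_zero_left, aperyCoeff] at abc ⊢
  push_cast at abc
  linear_combination abc + w * edge

theorem aperyArray_recurrence :
    ((n : K) + 2) ^ 3 * aperyArray s w (n + 2) i =
      ((n + 2) ^ 3 + (n + 1) ^ 3 + 2 * (2 * n + 3) * i * (i + 1)) * aperyArray s w (n + 1) i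
        - ((n : K) + 1) ^ 3 * aperyArray s w n i := by
  have abc := aperyArray_square_abc s w (n + 1) i
  have abd := aperyArray_square_abd s w n i
  simp only [aperyCoeff] at abc abd
  push_cast at abc
  linear_combination abc + abd

theorem aperyArray_casoratian (s' w' : K) :
    ((n : K) + 1) ^ 3 * (aperyArray s w (n + 1) i * aperyArray s' w' n i
      - aperyArray s w n i * aperyArray s' w' (n + 1) i) = w * s' - w' * s := by
  induction n with
  | zero =>
    simp only [zero_add, aperyArray_one_left, aperyArray_zero_left]
    push_cast
    ring
  | succ n ih =>
    have h := aperyArray_recurrence s w n i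
    have h' := aperyArray_recurrence s' w' n i
    push_cast
    linear_combination ih + aperyArray s' w' (n + 1) i * h - aperyArray s w (n + 1) i * h'

end Array

section RowSum

variable (s w : K)

-- The common factor `γ` turns the telescoping identity into one between polynomials.
theorem exists_choose_eq_mul (n m : ℕ) : ∃ γ : K,
    ((n + 1).choose m : K) = (m + 1) * (n + 1) * γ ∧
    ((n + 2).choose (m + 1) : K) = (n + 2) * (n + 1) * γ ∧
    ((n + 1).choose (m + 1) : K) = (n + 1 - m) * (n + 1) * γ ∧
    (n.choose (m + 1) : K) = (n - m) * (n + 1 - m) * γ := by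
  have hn₁ : (n : K) + 1 ≠ 0 := n.cast_add_one_ne_zero
  have hn₂ : (n : K) + 2 ≠ 0 := mod_cast (n + 1).succ_ne_zero
  have absorb : ((n : K) + 2) * (n + 1).choose m = (m + 1) * (n + 2).choose (m + 1) := by
    have := congrArg (Nat.cast (R := K)) (Nat.add_one_mul_choose_eq (n + 1) m)
    push_cast at this
    linear_combination this
  have lower := cast_add_one_mul_choose (R := K) n (m + 1)
  have upper := cast_add_one_mul_choose (R := K) (n + 1) (m + 1)
  push_cast at lower upper
  refine ⟨(n + 2).choose (m + 1) / ((n + 2) * (n + 1)), ?_, ?_, ?_, ?_⟩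
  · field_simp
    linear_combination absorb
  · field_simp
  · field_simp
    linear_combination upper
  · field_simp
    linear_combination (n + 2) * lower + (n - m) * upper

theorem aperyCertificate_succ_sub (n m : ℕ) :
    aperyCertificate s w n (m + 1) - aperyCertificate s w n m =
      aperyOperator n fun k ↦ (k.choose (m + 1) : K) ^ 2 * aperyArray s w k (m + 1) := by
  have hm : (m : K) + 1 ≠ 0 := m.cast_add_one_ne_zero
  obtain ⟨γ, h₁, h₂, h₃, h₄⟩ := exists_choose_eq_mul (K := K) n m
  have acd := aperyArray_square_acd s w n m
  have bcd := aperyArray_square_bcd s w n m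
  have recurrence := aperyArray_recurrence s w n (m + 1)
  apply mul_left_cancel₀ hm
  rw [aperyCertificate, aperyCertificate, aperyOperator, h₁, h₂, h₃, h₄]
  push_cast at recurrence ⊢
  linear_combination
    (norm := (simp only [certificateCoeffSucc, certificateCoeff, aperyCoeff]; ring))
    (n + 1) ^ 2 * γ ^ 2 * certificateCoeffSucc ((n : K) + 1) m * bcd
      - (n + 1) ^ 2 * γ ^ 2 * certificateCoeff ((n : K) + 1) m * acd
      - (m + 1) * (n + 2) ^ 3 * (n + 1) ^ 2 * γ ^ 2 * recurrence

theorem sum_range_aperyOperator (n m : ℕ) :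
    ∑ i ∈ Finset.range (m + 1),
      aperyOperator n (fun k ↦ (k.choose i : K) ^ 2 * aperyArray s w k i) =
        aperyCertificate s w n m := by
  induction m with
  | zero =>
    have recurrence := aperyArray_recurrence s w n 0
    simp only [aperyCertificate, certificateCoeffSucc, certificateCoeff, aperyOperator, zero_add,
      Finset.sum_range_one, Nat.choose_zero_right]
    push_cast at recurrence ⊢
    linear_combination (n + 2) * recurrence
  | succ m ih =>
    rw [Finset.sum_range_succ, ih, ← aperyCertificate_succ_sub, add_sub_cancel]

theorem aperyOperator_aperyRowSum (n : ℕ) : aperyOperator n (aperyRowSum s w) = 0 := by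
  have certificate_eq_zero : aperyCertificate s w n (n + 2) = 0 := by
    simp [aperyCertificate]
  rw [← certificate_eq_zero, ← sum_range_aperyOperator]
  simp only [aperyOperator, Finset.sum_add_distrib, Finset.sum_sub_distrib, ← Finset.mul_sum]
  rw [sum_range_choose_sq_mul_aperyArray s w (n := n) (by lia),
    sum_range_choose_sq_mul_aperyArray s w (n := n + 1) (by lia),
    sum_range_choose_sq_mul_aperyArray s w (n := n + 2) (by lia)]

theorem aperyRowSum_one : aperyRowSum s w 1 = 6 * s + 7 * w := by
  simp only [aperyRowSum, Finset.sum_range_succ, Finset.sum_range_zero, aperyArray_one_left,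
    aperyArray_zero_left, cubicHarmonic]
  norm_num
  ring

end RowSum

theorem eq_factorial_pow_mul_aperyRowSum {s w : K} {a b u : ℕ → K}
    (ha : ∀ n : ℕ, 1 ≤ n →
      a n = 65 * (n : K) ^ 4 - 130 * (n : K) ^ 3 + 105 * (n : K) ^ 2 - 40 * (n : K) + 6)
    (hb : ∀ n : ℕ, 1 ≤ n → b n = -(4 * (16 * (n : K) ^ 2 - 1) * (n : K) ^ 6))
    (hu : ∀ n, u (n + 2) = a (n + 2) * u (n + 1) + b (n + 1) * u n)
    (h₀ : u 0 = s) (h₁ : u 1 = 6 * s + 7 * w) :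
    u = fun n ↦ (n.factorial : K) ^ 4 * aperyRowSum s w n := by
  refine eq_of_recurrence (a := fun n ↦ a (n + 2)) (b := fun n ↦ b (n + 1)) hu (fun n ↦ ?_) ?_ ?_
  · have h := aperyOperator_aperyRowSum s w n
    rw [aperyOperator] at h
    rw [ha _ (by lia), hb _ (by lia), Nat.factorial_succ (n + 1), Nat.factorial_succ n]
    push_cast
    linear_combination ((n : K) + 1) ^ 4 * (n.factorial : K) ^ 4 * h
  · simp [h₀, aperyRowSum_zero]
  · simp [h₁, aperyRowSum_one]

end Algebra

section Order

variable {K : Type*} [Field K] [LinearOrder K] [IsStrictOrderedRing K]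

theorem cubicHarmonic_nonneg (n : ℕ) : 0 ≤ cubicHarmonic K n :=
  Finset.sum_nonneg fun _ _ ↦ by positivity

section Monotone

variable {s w : K}

theorem le_aperyArray_and_le_succ (hs : 0 ≤ s) (hw : 0 ≤ w) (n i : ℕ) :
    s ≤ aperyArray s w n i ∧ aperyArray s w n i ≤ aperyArray s w (n + 1) i := by
  induction n with
  | zero =>
    have le_edge : s ≤ aperyArray s w 0 i := by
      rw [aperyArray_zero_left]
      exact le_add_of_nonneg_right (mul_nonneg hw (cubicHarmonic_nonneg i))
    refine ⟨le_edge, ?_⟩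
    have edge_nonneg := hs.trans le_edge
    have : 0 ≤ (2 * (i : K) ^ 2 + 2 * i) * aperyArray s w 0 i := by positivity
    rw [zero_add, aperyArray_one_left]
    linarith
  | succ n ih =>
    obtain ⟨le_array, le_succ⟩ := ih
    have le_array_succ := le_array.trans le_succ
    refine ⟨le_array_succ, le_of_mul_le_mul_left ?_ (by positivity : (0 : K) < ((n : K) + 2) ^ 3)⟩
    have array_nonneg := hs.trans le_array_succ
    have h₁ := mul_le_mul_of_nonneg_left le_succ (by positivity : (0 : K) ≤ ((n : K) + 1) ^ 3)
    have h₂ : 0 ≤ 2 * (2 * (n : K) + 3) * i * (i + 1) * aperyArray s w (n + 1) i := by positivity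
    linarith [aperyArray_recurrence s w n i]

theorem le_aperyArray (hs : 0 ≤ s) (hw : 0 ≤ w) (n i : ℕ) : s ≤ aperyArray s w n i :=
  (le_aperyArray_and_le_succ hs hw n i).1

theorem monotone_aperyArray (hs : 0 ≤ s) (hw : 0 ≤ w) (i : ℕ) :
    Monotone fun n ↦ aperyArray s w n i :=
  monotone_nat_of_le_succ fun n ↦ (le_aperyArray_and_le_succ hs hw n i).2

theorem aperyArray_pos (hs : 0 < s) (hw : 0 ≤ w) (n i : ℕ) : 0 < aperyArray s w n i :=
  hs.trans_le (le_aperyArray hs.le hw n i)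

theorem aperyRowSum_pos (hs : 0 < s) (hw : 0 ≤ w) (n : ℕ) : 0 < aperyRowSum s w n := by
  refine Finset.sum_pos (fun i hi ↦ ?_) Finset.nonempty_range_add_one
  have choose_pos : 0 < n.choose i := Nat.choose_pos (Finset.mem_range_succ_iff.1 hi)
  have array_pos := aperyArray_pos hs hw n i
  positivity

end Monotone

theorem aperyArray_div_succ_sub (n i : ℕ) :
    aperyArray (0 : K) 1 (n + 1) i / aperyArray 1 0 (n + 1) i
        - aperyArray 0 1 n i / aperyArray 1 0 n i =
      1 / ((n + 1) ^ 3 * aperyArray 1 0 n i * aperyArray 1 0 (n + 1) i) := by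
  have hn : (n : K) + 1 ≠ 0 := n.cast_add_one_ne_zero
  have hB := (aperyArray_pos (one_pos : (0 : K) < 1) le_rfl n i).ne'
  have hB' := (aperyArray_pos (one_pos : (0 : K) < 1) le_rfl (n + 1) i).ne'
  field_simp
  linear_combination aperyArray_casoratian (0 : K) 1 n i 1 0

theorem cubicHarmonic_le_aperyArray_div (n i : ℕ) :
    cubicHarmonic K i ≤ aperyArray (0 : K) 1 n i / aperyArray 1 0 n i := by
  induction n with
  | zero => simp [aperyArray_zero_left]
  | succ n ih =>
    have hB := aperyArray_pos (one_pos : (0 : K) < 1) le_rfl n i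
    have hB' := aperyArray_pos (one_pos : (0 : K) < 1) le_rfl (n + 1) i
    refine ih.trans (sub_nonneg.1 ?_)
    rw [aperyArray_div_succ_sub]
    positivity

theorem aperyArray_div_le (n i : ℕ) :
    aperyArray (0 : K) 1 n i / aperyArray 1 0 n i ≤
      cubicHarmonic K i + n / (2 * i ^ 2 + 2 * i + 1) := by
  induction n with
  | zero => simp [aperyArray_zero_left]
  | succ n ih =>
    have increment_le : 1 / (((n : K) + 1) ^ 3 * aperyArray 1 0 n i * aperyArray 1 0 (n + 1) i) ≤
        1 / (2 * i ^ 2 + 2 * i + 1) := by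
      have hn : 1 ≤ ((n : K) + 1) ^ 3 := one_le_pow₀ (by simp)
      gcongr
      calc
        (2 * i ^ 2 + 2 * i + 1 : K) = aperyArray 1 0 1 i := by
          simp [aperyArray_one_left, aperyArray_zero_left]
        _ ≤ aperyArray 1 0 (n + 1) i :=
          monotone_aperyArray zero_le_one le_rfl i (Nat.le_add_left 1 n)
        _ ≤ (n + 1) ^ 3 * aperyArray 1 0 n i * aperyArray 1 0 (n + 1) i :=
          le_mul_of_one_le_left (aperyArray_pos one_pos le_rfl _ _).le
            (one_le_mul_of_one_le_of_one_le hn (le_aperyArray zero_le_one le_rfl n i))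
    rw [← aperyArray_div_succ_sub] at increment_le
    push_cast
    rw [add_div]
    linarith

theorem aperyArray_div_mem_Icc {n i : ℕ} (h : i ≤ n) :
    aperyArray (0 : K) 1 n i / aperyArray 1 0 n i ∈
      Set.Icc (cubicHarmonic K n) (cubicHarmonic K n + 1 / (n + 1)) := by
  rw [aperyArray_comm _ _ n i, aperyArray_comm _ _ n i]
  refine ⟨cubicHarmonic_le_aperyArray_div i n, (aperyArray_div_le i n).trans ?_⟩
  have hi : (i : K) ≤ n := mod_cast h
  gcongr _ + ?_
  rw [div_le_div_iff₀ (by positivity) (by positivity)]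
  nlinarith [(n.cast_nonneg : (0 : K) ≤ n)]

theorem aperyRowSum_div_mem_Icc (n : ℕ) :
    aperyRowSum (0 : K) 1 n / aperyRowSum 1 0 n ∈
      Set.Icc (cubicHarmonic K n) (cubicHarmonic K n + 1 / (n + 1)) := by
  have denominator_pos : 0 < aperyRowSum (1 : K) 0 n := aperyRowSum_pos one_pos le_rfl n
  rw [Set.mem_Icc, le_div_iff₀ denominator_pos, div_le_iff₀ denominator_pos]
  simp only [aperyRowSum, Finset.mul_sum, mul_left_comm _ (_ ^ 2)]
  have bounds {i : ℕ} (hi : i ∈ Finset.range (n + 1)) :=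
    aperyArray_div_mem_Icc (K := K) (Finset.mem_range_succ_iff.1 hi)
  constructor <;> gcongr with i hi
  · exact (le_div_iff₀ (aperyArray_pos one_pos le_rfl n i)).1 (bounds hi).1
  · exact (div_le_iff₀ (aperyArray_pos one_pos le_rfl n i)).1 (bounds hi).2

end Order

theorem tendsto_cubicHarmonic :
    Tendsto (cubicHarmonic ℝ) atTop (𝓝 (∑' n : ℕ, 1 / ((n : ℝ) + 1) ^ 3)) := by
  have summable : Summable fun n : ℕ ↦ 1 / ((n : ℝ) + 1) ^ 3 := by
    simpa using (summable_nat_add_iff 1).2 (Real.summable_one_div_nat_pow.2 (by norm_num : 1 < 3))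
  exact summable.hasSum.tendsto_sum_nat

theorem tendsto_aperyRowSum_div :
    Tendsto (fun n ↦ aperyRowSum (0 : ℝ) 1 n / aperyRowSum 1 0 n) atTop
      (𝓝 (∑' n : ℕ, 1 / ((n : ℝ) + 1) ^ 3)) := by
  have upper : Tendsto (fun n : ℕ ↦ cubicHarmonic ℝ n + 1 / ((n : ℝ) + 1)) atTop
      (𝓝 (∑' n : ℕ, 1 / ((n : ℝ) + 1) ^ 3)) := by
    simpa using tendsto_cubicHarmonic.add tendsto_one_div_add_atTop_nhds_zero_nat
  exact tendsto_of_tendsto_of_tendsto_of_le_of_le tendsto_cubicHarmonic upper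
    (fun n ↦ (aperyRowSum_div_mem_Icc n).1) (fun n ↦ (aperyRowSum_div_mem_Icc n).2)

theorem stmt_16 
    (a b p q : ℕ → ℝ)
    (ha0 : a 0 = 0)
    (ha : ∀ n : ℕ, 1 ≤ n → a n = 65 * (n : ℝ) ^ 4 - 130 * (n : ℝ) ^ 3 + 105 * (n : ℝ) ^ 2 - 40 * (n : ℝ) + 6)
    (hb0 : b 0 = 7)
    (hb : ∀ n : ℕ, 1 ≤ n → b n = -(4 * (16 * (n : ℝ) ^ 2 - 1) * (n : ℝ) ^ 6))
    (hp0 : p 0 = a 0) (hq0 : q 0 = 1)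
    (hp1 : p 1 = a 0 * a 1 + b 0) (hq1 : q 1 = a 1)
    (hp : ∀ n : ℕ, p (n + 2) = a (n + 2) * p (n + 1) + b (n + 1) * p n)
    (hq : ∀ n : ℕ, q (n + 2) = a (n + 2) * q (n + 1) + b (n + 1) * q n) :
    Tendsto (fun n => p n / q n) atTop (𝓝 (∑' n : ℕ, 1 / ((n : ℝ) + 1) ^ 3)) := by
  have hp_eq := eq_factorial_pow_mul_aperyRowSum (s := 0) (w := 1) ha hb hp
    (by rw [hp0, ha0]) (by rw [hp1, ha0, hb0]; ring)
  have hq_eq := eq_factorial_pow_mul_aperyRowSum (s := 1) (w := 0) ha hb hq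
    hq0 (by rw [hq1, ha 1 le_rfl]; norm_num)
  have convergent_eq (n : ℕ) : p n / q n = aperyRowSum 0 1 n / aperyRowSum 1 0 n := by
    rw [hp_eq, hq_eq, mul_div_mul_left _ _ (by positivity)]
  simpa only [convergent_eq] using tendsto_aperyRowSum_div
end
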